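/- arXiv:1904.05741 — 6 statements merged into one kernel-verified Lean document; each statement's English description precedes it below -/
import Mathlib

section
/- Let N = n_1 + n_2 and suppose not all z_i are equal (so that σ̂² > 0). If S is a uniformly random subset of {1,…,N} of size n_1, then for every t > 0, the probability that f(S) ≥ t + √(σ̂²/(2Nγ)) is at most exp(−N γ² t² / (2 σ̂²)). (Equivalently, for a uniformly random permutation b of {1,…,N}, the permuted two-sample MMD statistic V̂^{(b)} = (N/(n_1 n_2))‖∑_{i=1}^{n_1} z̄_{b_i}‖ satisfies P_b(V̂^{(b)} ≥ t + √(σ̂²/(2Nγ))) ≤ exp(−N γ² t²/(2σ̂²)).) -/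
/-!
The proof follows the entropy method for the exchange (Bernoulli–Laplace) dynamics on `n₁`-subsets of
an `N`-set, where a step replaces some `i ∈ S` by some `j ∉ S`.

The core is a modified log-Sobolev inequality (`slice_mlsi`),
`N Ent(F) ≤ E ∑_{i ∈ S, j ∉ S} (F(S) - F(S')) (log F(S) - log F(S'))` with `S' = S \ {i} ∪ {j}`. It is
proved by induction on `N`. Revealing whether `i ∈ S` splits the entropy into the entropies on two
slices of an `(N - 1)`-set and a two-point entropy; the latter is controlled by the exchanges that move
`i`, because `(a - b) (log a - log b)` is jointly convex (`sliceEnt_insert_le`). Averaging over `i`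
closes the induction.

Applied to `F = exp (l f)`, the inequality together with the Herbst argument (`herbst`) gives
`P(f ≥ E f + t) ≤ exp (-N t² / (4 V))` whenever `∑_{i ∈ S, j ∉ S} (f(S) - f(S'))² ≤ V` for all `S`
(`slice_concentration`). For the statistic at hand an exchange changes `f` by at most
`N / (n₁ n₂) ‖z i - z j‖`, so `V = (N / (n₁ n₂))² N² σ̂² / 2` is admissible, and this `V` yields the
claimed exponent. Finally `E f ≤ √(E f²)`, and `E f²` is exactly `σ̂² / (2 N γ)`
(`sum_norm_sq_slice`, `sum_norm_sub_sq`).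
-/

open Finset

attribute [local instance] Classical.propDecidable

/-! ### Jeffreys divergence and the log-sum inequality -/

/-- The summand `(a - b) (log a - log b)` of the symmetrised Kullback–Leibler (Jeffreys)
divergence. -/
noncomputable def jdiv (a b : ℝ) : ℝ := (a - b) * (Real.log a - Real.log b)

lemma jdiv_nonneg {a b : ℝ} (ha : 0 < a) (hb : 0 < b) : 0 ≤ jdiv a b := by
  unfold jdiv
  rcases le_total a b with h | h
  · have := Real.log_le_log ha h
    nlinarith
  · have := Real.log_le_log hb h
    nlinarith

lemma jdiv_mul {c a b : ℝ} (hc : 0 < c) (ha : 0 < a) (hb : 0 < b) :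
    jdiv (c * a) (c * b) = c * jdiv a b := by
  unfold jdiv
  rw [Real.log_mul hc.ne' ha.ne', Real.log_mul hc.ne' hb.ne']
  ring

/-- The log-sum inequality, from `log x ≤ x - 1` at `x = b p / (a q)` for each summand, where `p` and
`q` are the two total sums. -/
lemma log_sum_le {ι : Type*} (s : Finset ι) (hs : s.Nonempty) (a b : ι → ℝ)
    (ha : ∀ x ∈ s, 0 < a x) (hb : ∀ x ∈ s, 0 < b x) :
    (∑ x ∈ s, a x) * (Real.log (∑ x ∈ s, a x) - Real.log (∑ x ∈ s, b x))
      ≤ ∑ x ∈ s, a x * (Real.log (a x) - Real.log (b x)) := by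
  have hA : 0 < ∑ x ∈ s, a x := sum_pos ha hs
  have hB : 0 < ∑ x ∈ s, b x := sum_pos hb hs
  set p := ∑ x ∈ s, a x
  set q := ∑ x ∈ s, b x
  have key : ∀ x ∈ s, a x * (Real.log p - Real.log q) - a x * (Real.log (a x) - Real.log (b x))
      ≤ b x * (p / q) - a x := by
    intro x hx
    have h1 := ha x hx
    have h2 := hb x hx
    have h3 := Real.log_le_sub_one_of_pos (x := b x * p / (a x * q)) (by positivity)
    rw [Real.log_div (by positivity) (by positivity), Real.log_mul h2.ne' hA.ne',
      Real.log_mul h1.ne' hB.ne'] at h3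
    have h4 := mul_le_mul_of_nonneg_left h3 h1.le
    have h5 : a x * (b x * p / (a x * q) - 1) = b x * (p / q) - a x := by
      field_simp
    linarith
  have := sum_le_sum key
  rw [sum_sub_distrib, sum_sub_distrib, ← sum_mul, ← sum_mul] at this
  have h6 : q * (p / q) = p := by field_simp
  change p * _ - _ ≤ q * (p / q) - p at this
  linarith

/-- Joint convexity of `jdiv`, in its subadditive form (it is homogeneous of degree one). -/
lemma jdiv_sum_le {ι : Type*} (s : Finset ι) (hs : s.Nonempty) (a b : ι → ℝ)
    (ha : ∀ x ∈ s, 0 < a x) (hb : ∀ x ∈ s, 0 < b x) :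
    jdiv (∑ x ∈ s, a x) (∑ x ∈ s, b x) ≤ ∑ x ∈ s, jdiv (a x) (b x) := by
  have h1 := log_sum_le s hs a b ha hb
  have h2 := log_sum_le s hs b a hb ha
  have h3 : ∑ x ∈ s, jdiv (a x) (b x) = ∑ x ∈ s, a x * (Real.log (a x) - Real.log (b x))
      + ∑ x ∈ s, b x * (Real.log (b x) - Real.log (a x)) := by
    rw [← sum_add_distrib]
    exact sum_congr rfl fun x _ => by unfold jdiv; ring
  rw [h3]
  unfold jdiv
  linarith

/-- The entropy of a function with the two values `Wᵢ / Cᵢ` under the weights `C₁ : C₀`, bounded by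
its covariance with its logarithm, both multiplied by `C₁ + C₀`. This is concavity of `log` at the mean. -/
lemma two_point {W₁ W₀ C₁ C₀ : ℝ} (hW₁ : 0 < W₁) (hW₀ : 0 < W₀) (hC₁ : 0 < C₁) (hC₀ : 0 < C₀) :
    W₁ * Real.log (W₁ / C₁) + W₀ * Real.log (W₀ / C₀)
        - (W₁ + W₀) * Real.log ((W₁ + W₀) / (C₁ + C₀))
      ≤ C₁ * C₀ / (C₁ + C₀) * jdiv (W₁ / C₁) (W₀ / C₀) := by
  have hc := strictConcaveOn_log_Ioi.concaveOn.2
    (show 0 < W₁ / C₁ by positivity) (show 0 < W₀ / C₀ by positivity)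
    (show 0 ≤ C₁ / (C₁ + C₀) by positivity) (show 0 ≤ C₀ / (C₁ + C₀) by positivity)
    (by field_simp)
  simp only [smul_eq_mul] at hc
  have h1 : C₁ / (C₁ + C₀) * (W₁ / C₁) + C₀ / (C₁ + C₀) * (W₀ / C₀) = (W₁ + W₀) / (C₁ + C₀) := by
    field_simp
  rw [h1] at hc
  have h2 := mul_le_mul_of_nonneg_left hc (add_pos hW₁ hW₀).le
  unfold jdiv
  have h3 : C₁ * C₀ / (C₁ + C₀) * ((W₁ / C₁ - W₀ / C₀) * (Real.log (W₁ / C₁) - Real.log (W₀ / C₀)))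
      = W₁ * Real.log (W₁ / C₁) + W₀ * Real.log (W₀ / C₀) - (W₁ + W₀) *
        (C₁ / (C₁ + C₀) * Real.log (W₁ / C₁) + C₀ / (C₁ + C₀) * Real.log (W₀ / C₀)) := by
    field_simp
    ring
  rw [h3]
  linarith

/-! ### The modified log-Sobolev inequality on a slice -/

/-- Splitting the subsets of `insert i B` according to whether they contain `i`. -/
lemma sum_powersetCard_insert {α : Type*} {i : α} {B : Finset α} (hi : i ∉ B) (k : ℕ)
    (G : Finset α → ℝ) :
    ∑ S ∈ powersetCard (k + 1) (insert i B), G S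
      = ∑ T ∈ powersetCard k B, G (insert i T) + ∑ S ∈ powersetCard (k + 1) B, G S := by
  rw [powersetCard_succ_insert hi, sum_union, sum_image, add_comm]
  · intro S hS T hT h
    have h1 : i ∉ S := fun h => hi ((mem_powersetCard.1 hS).1 h)
    have h2 : i ∉ T := fun h => hi ((mem_powersetCard.1 hT).1 h)
    rw [← erase_insert h1, ← erase_insert h2, h]
  · rw [disjoint_left]
    intro S hS hS'
    obtain ⟨T, -, rfl⟩ := mem_image.1 hS'
    exact hi ((mem_powersetCard.1 hS).1 (mem_insert_self i T))

/-- Double counting of the pairs (`(k + 1)`-subset, element of it). -/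
lemma sum_powersetCard_add_one {α : Type*} (B : Finset α) (k : ℕ) (G : Finset α → ℝ) :
    ∑ T ∈ powersetCard k B, ∑ j ∈ B \ T, G (insert j T)
      = (k + 1) * ∑ S ∈ powersetCard (k + 1) B, G S := by
  have h : (k + 1) * ∑ S ∈ powersetCard (k + 1) B, G S
      = ∑ S ∈ powersetCard (k + 1) B, ∑ j ∈ S, G S := by
    rw [mul_sum]
    refine sum_congr rfl fun S hS => ?_
    rw [sum_const, (mem_powersetCard.1 hS).2]
    simp
  rw [h, sum_sigma', sum_sigma']
  refine sum_bij' (fun x _ => ⟨insert x.2 x.1, x.2⟩) (fun x _ => ⟨x.1.erase x.2, x.2⟩) ?_ ?_ ?_ ?_ ?_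
  · rintro ⟨T, j⟩ h
    simp only [mem_sigma, mem_powersetCard, mem_sdiff] at h ⊢
    refine ⟨⟨insert_subset h.2.1 h.1.1, ?_⟩, mem_insert_self _ _⟩
    rw [card_insert_of_notMem h.2.2, h.1.2]
  · rintro ⟨S, j⟩ h
    simp only [mem_sigma, mem_powersetCard, mem_sdiff] at h ⊢
    refine ⟨⟨(erase_subset _ _).trans h.1.1, ?_⟩, h.1.1 h.2, notMem_erase _ _⟩
    rw [card_erase_of_mem h.2, h.1.2]
    rfl
  · rintro ⟨T, j⟩ h
    simp only [mem_sigma, mem_powersetCard, mem_sdiff] at h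
    simp [erase_insert h.2.2]
  · rintro ⟨S, j⟩ h
    simp only [mem_sigma, mem_powersetCard] at h
    simp [insert_erase h.2]
  · rintro ⟨T, j⟩ h
    rfl

/-- The entropy of `F` on the slice of `k`-subsets of `A`, with respect to counting measure, that is,
`|A| choose k` times the entropy under the uniform distribution. Only the values of `F` on the
slice matter. -/
noncomputable def sliceEnt {α : Type*} (A : Finset α) (k : ℕ) (F : Finset α → ℝ) : ℝ :=
  ∑ S ∈ powersetCard k A, F S * Real.log (F S)
    - (∑ S ∈ powersetCard k A, F S) * Real.log ((∑ S ∈ powersetCard k A, F S) / A.card.choose k)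

/-- The Dirichlet form of `F` against `log F` for the exchange dynamics on the `k`-subsets of `A`,
where an element `a ∈ S` is replaced by some `b ∈ A \ S`. Each unordered pair of neighbouring sets
is counted twice. -/
noncomputable def sliceEnergy {α : Type*} (A : Finset α) (k : ℕ) (F : Finset α → ℝ) : ℝ :=
  ∑ S ∈ powersetCard k A, ∑ a ∈ S, ∑ b ∈ A \ S, jdiv (F S) (F (insert b (S.erase a)))

/-- Chain rule for the entropy when it is revealed whether `i ∈ S`. The entropy of the conditional
means is bounded by the exchanges that move `i`: exchanging `i` for a uniform `j ∉ S` couples the two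
conditional laws, so joint convexity of `jdiv` applies. -/
lemma sliceEnt_insert_le {α : Type*} {i : α} {B : Finset α} (hi : i ∉ B) {m : ℕ}
    (hm : m < B.card) (F : Finset α → ℝ) (hF : ∀ S, 0 < F S) :
    sliceEnt (insert i B) (m + 1) F
      ≤ sliceEnt B m (fun T => F (insert i T)) + sliceEnt B (m + 1) F
        + (1 / (B.card + 1)) *
          ∑ T ∈ powersetCard m B, ∑ j ∈ B \ T, jdiv (F (insert i T)) (F (insert j T)) := by
  set n := B.card with hn
  unfold sliceEnt
  rw [sum_powersetCard_insert hi, sum_powersetCard_insert hi, card_insert_of_notMem hi, ← hn,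
    Nat.choose_succ_succ]
  set W₁ := ∑ T ∈ powersetCard m B, F (insert i T) with hW₁
  set W₀ := ∑ S ∈ powersetCard (m + 1) B, F S with hW₀
  have hW₁p : 0 < W₁ := sum_pos (fun _ _ => hF _) (powersetCard_nonempty.2 hm.le)
  have hW₀p : 0 < W₀ := sum_pos (fun _ _ => hF _) (powersetCard_nonempty.2 hm)
  have hC₁ : (0 : ℝ) < n.choose m := by exact_mod_cast Nat.choose_pos hm.le
  have hC₀ : (0 : ℝ) < n.choose (m + 1) := by exact_mod_cast Nat.choose_pos hm
  have hCC : (n.choose (m + 1) : ℝ) * (m + 1) = n.choose m * (n - m) := by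
    have := Nat.choose_succ_right_eq n m
    rw [← Nat.cast_sub hm.le]
    exact_mod_cast this
  have hx : (0 : ℝ) < n - m := by
    have : (m : ℝ) < n := by exact_mod_cast hm
    linarith
  have h2 := two_point hW₁p hW₀p hC₁ hC₀
  push_cast
  generalize (n.choose m : ℝ) = C₁ at *
  generalize (n.choose (m + 1) : ℝ) = C₀ at *
  -- each set on one side has `n - m` neighbours, each set on the other side has `m + 1`
  have h3 : jdiv ((n - m) * W₁) ((m + 1) * W₀)
      ≤ ∑ T ∈ powersetCard m B, ∑ j ∈ B \ T, jdiv (F (insert i T)) (F (insert j T)) := by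
    have e1 : (n - m) * W₁ = ∑ T ∈ powersetCard m B, ∑ j ∈ B \ T, F (insert i T) := by
      rw [hW₁, mul_sum]
      refine sum_congr rfl fun T hT => ?_
      rw [sum_const, card_sdiff_of_subset (mem_powersetCard.1 hT).1, (mem_powersetCard.1 hT).2,
        nsmul_eq_mul, Nat.cast_sub hm.le]
    have e2 := sum_powersetCard_add_one B m F
    rw [e1, ← e2]
    rw [sum_sigma', sum_sigma', sum_sigma']
    apply jdiv_sum_le
    · obtain ⟨T, hT⟩ := powersetCard_nonempty.2 hm.le
      have hT' := mem_powersetCard.1 hT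
      have : (B \ T).Nonempty := by
        rw [← card_pos, card_sdiff_of_subset hT'.1, hT'.2]
        omega
      obtain ⟨j, hj⟩ := this
      exact ⟨⟨T, j⟩, mem_sigma.2 ⟨hT, hj⟩⟩
    · intros; exact hF _
    · intros; exact hF _
  have h4 : jdiv ((n - m) * W₁) ((m + 1) * W₀) = C₁ * (n - m) * jdiv (W₁ / C₁) (W₀ / C₀) := by
    rw [← jdiv_mul (by positivity) (by positivity) (by positivity)]
    congr 1
    · field_simp
    · rw [← hCC]; field_simp
  have h5 : C₁ * C₀ / (C₁ + C₀) = 1 / (n + 1) * (C₁ * (n - m)) := by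
    field_simp
    linarith
  have h6 : C₁ * C₀ / (C₁ + C₀) * jdiv (W₁ / C₁) (W₀ / C₀) ≤ 1 / (n + 1) *
      ∑ T ∈ powersetCard m B, ∑ j ∈ B \ T, jdiv (F (insert i T)) (F (insert j T)) := by
    rw [h5, mul_assoc, ← h4]
    exact mul_le_mul_of_nonneg_left h3 (by positivity)
  linarith

lemma sliceEnergy_nonneg {α : Type*} (A : Finset α) (k : ℕ) (F : Finset α → ℝ)
    (hF : ∀ S, 0 < F S) : 0 ≤ sliceEnergy A k F :=
  sum_nonneg fun _ _ => sum_nonneg fun _ _ => sum_nonneg fun _ _ => jdiv_nonneg (hF _) (hF _)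

/-- The energies of the two conditional slices together count the exchanges not involving `i`. -/
lemma sliceEnergy_cond {α : Type*} {i : α} {B : Finset α} (hi : i ∉ B) (m : ℕ)
    (F : Finset α → ℝ) :
    sliceEnergy B m (fun T => F (insert i T)) + sliceEnergy B (m + 1) F
      = ∑ S ∈ powersetCard (m + 1) (insert i B), ∑ a ∈ S, ∑ b ∈ insert i B \ S,
          if i ≠ a ∧ i ≠ b then jdiv (F S) (F (insert b (S.erase a))) else 0 := by
  rw [sum_powersetCard_insert hi]
  unfold sliceEnergy
  congr 1
  · refine sum_congr rfl fun T hT => ?_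
    have hiT : i ∉ T := fun h => hi ((mem_powersetCard.1 hT).1 h)
    rw [sum_insert hiT]
    have e : insert i B \ insert i T = B \ T := by
      ext x; simp only [mem_sdiff, mem_insert]; grind
    rw [e]
    simp only [ne_eq, not_true_eq_false, false_and, if_false, sum_const_zero, zero_add]
    refine sum_congr rfl fun a ha => sum_congr rfl fun b hb => ?_
    have hia : i ≠ a := fun h => hiT (h ▸ ha)
    have hib : i ≠ b := fun h => hi (h ▸ (mem_sdiff.1 hb).1)
    rw [if_pos ⟨hia, hib⟩, erase_insert_of_ne hia, insert_comm]
  · refine sum_congr rfl fun S hS => ?_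
    have hiS : i ∉ S := fun h => hi ((mem_powersetCard.1 hS).1 h)
    refine sum_congr rfl fun a ha => ?_
    have hia : i ≠ a := fun h => hiS (h ▸ ha)
    rw [insert_sdiff_of_notMem _ hiS, sum_insert (by simp [hi])]
    simp only [ne_eq, not_true_eq_false, and_false, if_false, zero_add]
    refine sum_congr rfl fun b hb => ?_
    have hib : i ≠ b := fun h => hi (h ▸ (mem_sdiff.1 hb).1)
    rw [if_pos ⟨hia, hib⟩]

/-- The coupling term of the chain rule counts the exchanges that remove `i`. -/
lemma sum_boundary {α : Type*} {i : α} {B : Finset α} (hi : i ∉ B) (m : ℕ)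
    (F : Finset α → ℝ) :
    ∑ T ∈ powersetCard m B, ∑ j ∈ B \ T, jdiv (F (insert i T)) (F (insert j T))
      = ∑ S ∈ powersetCard (m + 1) (insert i B), ∑ a ∈ S, ∑ b ∈ insert i B \ S,
          if i = a then jdiv (F S) (F (insert b (S.erase a))) else 0 := by
  rw [sum_powersetCard_insert hi]
  rw [sum_eq_zero (s := powersetCard (m + 1) B), add_zero]
  · refine sum_congr rfl fun T hT => ?_
    have hiT : i ∉ T := fun h => hi ((mem_powersetCard.1 hT).1 h)
    have e : insert i B \ insert i T = B \ T := by
      ext x; simp only [mem_sdiff, mem_insert]; grind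
    rw [sum_insert hiT, e]
    simp only [if_true, erase_insert hiT]
    rw [sum_eq_zero (s := T), add_zero]
    intro a ha
    have hia : i ≠ a := fun h => hiT (h ▸ ha)
    simp [hia]
  · intro S hS
    have hiS : i ∉ S := fun h => hi ((mem_powersetCard.1 hS).1 h)
    refine sum_eq_zero fun a ha => ?_
    have hia : i ≠ a := fun h => hiS (h ▸ ha)
    simp [hia]

/-- Modified log-Sobolev inequality on the slice: entropy is at most `1 / |A|` times the energy,
uniformly in `k`. The induction averages the chain rule over all `i ∈ A`; with `|A| = n + 1` an
exchange avoids `n - 1` of the choices of `i`, and `(n - 1) / n + 1 / (n + 1) ≤ 1`. -/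
theorem slice_mlsi {α : Type*} (n : ℕ) : ∀ (A : Finset α), A.card = n → ∀ (k : ℕ)
    (F : Finset α → ℝ), (∀ S, 0 < F S) → n * sliceEnt A k F ≤ sliceEnergy A k F := by
  induction n with
  | zero =>
    intro A _ k F hF
    simpa using sliceEnergy_nonneg A k F hF
  | succ n ih =>
    intro A hA k F hF
    rcases Nat.eq_zero_or_pos k with rfl | hk
    · have : sliceEnt A 0 F = 0 := by simp [sliceEnt]
      rw [this, mul_zero]
      exact sliceEnergy_nonneg _ _ _ hF
    obtain ⟨m, rfl⟩ : ∃ m, k = m + 1 := ⟨k - 1, by omega⟩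
    rcases lt_or_ge m n with hm | hm
    swap
    -- the slice has at most one point
    · have : sliceEnt A (m + 1) F = 0 := by
        rcases hm.eq_or_lt with rfl | hm
        · rw [sliceEnt, ← hA, powersetCard_self]
          simp
        · rw [sliceEnt, powersetCard_eq_empty.2 (by omega)]
          simp
      rw [this, mul_zero]
      exact sliceEnergy_nonneg _ _ _ hF
    have hn : (0 : ℝ) < n := by exact_mod_cast (by omega : 0 < n)
    set X := sliceEnergy A (m + 1) F with hX
    have hX0 : 0 ≤ X := sliceEnergy_nonneg _ _ _ hF
    have step : ∀ i ∈ A, sliceEnt A (m + 1) F ≤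
        ∑ S ∈ powersetCard (m + 1) A, ∑ a ∈ S, ∑ b ∈ A \ S,
          (1 / n * (if i ≠ a ∧ i ≠ b then jdiv (F S) (F (insert b (S.erase a))) else 0)
          + 1 / (n + 1) * (if i = a then jdiv (F S) (F (insert b (S.erase a))) else 0)) := by
      intro i hiA
      have hi := notMem_erase i A
      have hAi := insert_erase hiA
      have hB : (A.erase i).card = n := by rw [card_erase_of_mem hiA, hA]; rfl
      generalize A.erase i = B at *
      subst hAi
      have h1 := sliceEnt_insert_le hi (hB ▸ hm) F hF
      have h2 := ih B hB m (fun T => F (insert i T)) (fun _ => hF _)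
      have h3 := ih B hB (m + 1) F hF
      have h4 := sliceEnergy_cond hi m F
      rw [sum_boundary hi, hB] at h1
      simp only [sum_add_distrib, ← mul_sum]
      rw [← h4]
      have h5 : sliceEnt B m (fun T => F (insert i T)) + sliceEnt B (m + 1) F ≤ 1 / n *
          (sliceEnergy B m (fun T => F (insert i T)) + sliceEnergy B (m + 1) F) := by
        rw [one_div, ← div_eq_inv_mul, le_div_iff₀ hn]
        linarith
      linarith
    have tot := sum_le_sum step
    rw [sum_const, hA, nsmul_eq_mul] at tot
    have e : ∑ i ∈ A, ∑ S ∈ powersetCard (m + 1) A, ∑ a ∈ S, ∑ b ∈ A \ S,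
          (1 / n * (if i ≠ a ∧ i ≠ b then jdiv (F S) (F (insert b (S.erase a))) else 0)
          + 1 / (n + 1) * (if i = a then jdiv (F S) (F (insert b (S.erase a))) else 0))
        = (1 / n * (n - 1) + 1 / (n + 1)) * X := by
      rw [sum_comm, hX, sliceEnergy, mul_sum]
      refine sum_congr rfl fun S hS => ?_
      rw [sum_comm, mul_sum]
      refine sum_congr rfl fun a ha => ?_
      rw [sum_comm, mul_sum]
      refine sum_congr rfl fun b hb => ?_
      have haA : a ∈ A := (mem_powersetCard.1 hS).1 ha
      have hbA := mem_sdiff.1 hb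
      have hba : b ≠ a := fun h => hbA.2 (h ▸ ha)
      rw [sum_add_distrib, ← mul_sum, ← mul_sum, sum_ite_eq_of_mem' _ _ _ haA, ← sum_filter,
        sum_const]
      have hf : A.filter (fun i => i ≠ a ∧ i ≠ b) = (A.erase a).erase b := by
        ext x; simp only [mem_filter, mem_erase]; tauto
      rw [hf, card_erase_of_mem (mem_erase.2 ⟨hba, hbA.1⟩), card_erase_of_mem haA, hA, nsmul_eq_mul]
      rw [Nat.add_sub_cancel, Nat.cast_sub (by omega)]
      push_cast
      ring
    rw [e] at tot
    refine tot.trans ?_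
    have : (1 / n * (n - 1) + 1 / (n + 1) : ℝ) ≤ 1 := by
      have : (1 : ℝ) / (n + 1) ≤ 1 / n := one_div_le_one_div_of_le hn (by linarith)
      have h : (1 / n * (n - 1) : ℝ) = 1 - 1 / n := by field_simp
      linarith
    nlinarith

/-! ### From entropy to concentration -/

/-- The logarithmic mean of `exp x` and `exp y` is at most their arithmetic mean. -/
lemma jdiv_exp_le (x y : ℝ) :
    jdiv (Real.exp x) (Real.exp y) ≤ (x - y) ^ 2 * ((Real.exp x + Real.exp y) / 2) := by
  wlog h : y ≤ x generalizing x y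
  · have := this y x (by linarith)
    unfold jdiv at *
    linarith
  have hy := Real.exp_pos y
  have hx := Real.exp_pos x
  have hxy := Real.exp_le_exp.2 h
  have h1 := Real.le_log_one_add_of_nonneg (x := Real.exp x / Real.exp y - 1)
    (by rw [sub_nonneg, le_div_iff₀ hy]; linarith)
  rw [add_sub_cancel, Real.log_div hx.ne' hy.ne', Real.log_exp, Real.log_exp] at h1
  have h2 : 2 * (Real.exp x / Real.exp y - 1) / (Real.exp x / Real.exp y - 1 + 2)
      = 2 * (Real.exp x - Real.exp y) / (Real.exp x + Real.exp y) := by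
    have : Real.exp x / Real.exp y - 1 + 2 = (Real.exp x + Real.exp y) / Real.exp y := by
      field_simp; ring
    rw [this]; field_simp
  rw [h2, div_le_iff₀ (by positivity)] at h1
  unfold jdiv
  rw [Real.log_exp, Real.log_exp]
  nlinarith

/-- The Herbst argument for the uniform distribution on `s`: the entropy bound says that
`log (E exp (l f)) / l - v l` is nonincreasing in `l > 0`, and its limit at `0` is the mean of `f`. -/
lemma herbst {ι : Type*} (s : Finset ι) (hs : s.Nonempty) (f : ι → ℝ) (v : ℝ)
    (h : ∀ l : ℝ, 0 < l → ∑ x ∈ s, Real.exp (l * f x) * (l * f x)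
      - (∑ x ∈ s, Real.exp (l * f x)) * Real.log ((∑ x ∈ s, Real.exp (l * f x)) / s.card)
        ≤ v * l ^ 2 * ∑ x ∈ s, Real.exp (l * f x)) (l : ℝ) (hl : 0 < l) :
    ∑ x ∈ s, Real.exp (l * f x)
      ≤ s.card * Real.exp (l * ((∑ x ∈ s, f x) / s.card) + v * l ^ 2) := by
  have hc : (0 : ℝ) < s.card := by exact_mod_cast hs.card_pos
  set M : ℝ → ℝ := fun l => ∑ x ∈ s, Real.exp (l * f x) with hM
  have hMp : ∀ l, 0 < M l := fun l => sum_pos (fun _ _ => Real.exp_pos _) hs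
  have hM' : ∀ l, HasDerivAt M (∑ x ∈ s, Real.exp (l * f x) * f x) l := by
    intro l
    apply HasDerivAt.fun_sum
    intro x _
    simpa using ((hasDerivAt_id l).mul_const (f x)).exp
  set K : ℝ → ℝ := fun l => Real.log (M l / s.card) with hK
  have hK' : ∀ l, HasDerivAt K ((∑ x ∈ s, Real.exp (l * f x) * f x) / M l) l := by
    intro l
    have := ((hM' l).div_const (s.card : ℝ)).log (div_pos (hMp l) hc).ne'
    convert this using 1
    have := (hMp l).ne'
    field_simp
  have hK0 : K 0 = 0 := by
    simp [hK, hM, hc.ne']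
  have hG' : ∀ l, 0 < l → HasDerivAt (fun l => K l / l - v * l)
      (((∑ x ∈ s, Real.exp (l * f x) * f x) / M l * l - K l * 1) / l ^ 2 - v * 1) l := by
    intro l hl
    exact ((hK' l).div (hasDerivAt_id l) hl.ne').sub ((hasDerivAt_id l).const_mul v)
  have hanti : AntitoneOn (fun l => K l / l - v * l) (Set.Ioi 0) := by
    apply antitoneOn_of_deriv_nonpos (convex_Ioi 0)
    · exact fun l hl => (hG' l hl).continuousAt.continuousWithinAt
    · rw [interior_Ioi]
      exact fun l hl => (hG' l hl).differentiableAt.differentiableWithinAt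
    · rw [interior_Ioi]
      intro l hl
      have hl : 0 < l := hl
      rw [(hG' l hl).deriv]
      have h1 := h l hl
      have h2 : ∑ x ∈ s, Real.exp (l * f x) * (l * f x)
          = l * ∑ x ∈ s, Real.exp (l * f x) * f x := by
        rw [mul_sum]; exact sum_congr rfl fun _ _ => by ring
      rw [h2] at h1
      change l * (∑ x ∈ s, Real.exp (l * f x) * f x) - M l * K l ≤ v * l ^ 2 * M l at h1
      have hp := hMp l
      rw [sub_nonpos, div_le_iff₀ (by positivity), mul_one, mul_one, sub_le_iff_le_add,
        div_mul_eq_mul_div, div_le_iff₀ hp]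
      linarith
  have hlim : Filter.Tendsto (fun l => K l / l - v * l) (nhdsWithin 0 (Set.Ioi 0))
      (nhds ((∑ x ∈ s, f x) / s.card - v * 0)) := by
    have h1 := (hK' 0).tendsto_slope_zero_right
    simp only [zero_add, hK0, sub_zero, smul_eq_mul] at h1
    have h2 : (∑ x ∈ s, Real.exp (0 * f x) * f x) / M 0 = (∑ x ∈ s, f x) / s.card := by
      simp [hM]
    rw [h2] at h1
    refine Filter.Tendsto.sub ?_ ?_
    · simpa only [div_eq_inv_mul] using h1
    · exact ((continuous_const.mul continuous_id).tendsto (0 : ℝ)).mono_left nhdsWithin_le_nhds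
  have hle : K l / l - v * l ≤ (∑ x ∈ s, f x) / s.card - v * 0 := by
    refine ge_of_tendsto hlim ?_
    filter_upwards [Ioo_mem_nhdsGT hl] with u hu
    exact hanti hu.1 hl hu.2.le
  have h3 : K l ≤ l * ((∑ x ∈ s, f x) / s.card) + v * l ^ 2 := by
    have : K l / l ≤ (∑ x ∈ s, f x) / s.card + v * l := by linarith
    rw [div_le_iff₀ hl] at this
    linarith
  have h4 := (Real.log_le_iff_le_exp (div_pos (hMp l) hc)).1 h3
  rw [div_le_iff₀ hc] at h4
  change M l ≤ _
  linarith

/-- Reversibility of the exchange dynamics. -/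
lemma sum_swap_symm {α : Type*} (A : Finset α) (k : ℕ) (φ : Finset α → Finset α → ℝ) :
    ∑ S ∈ powersetCard k A, ∑ a ∈ S, ∑ b ∈ A \ S, φ S (insert b (S.erase a))
      = ∑ S ∈ powersetCard k A, ∑ a ∈ S, ∑ b ∈ A \ S, φ (insert b (S.erase a)) S := by
  simp only [← sum_product', sum_sigma']
  have mem : ∀ x ∈ (powersetCard k A).sigma fun S => S ×ˢ (A \ S),
      (⟨insert x.2.2 (x.1.erase x.2.1), x.2.2, x.2.1⟩ : (_ : Finset α) × α × α) ∈
        (powersetCard k A).sigma fun S => S ×ˢ (A \ S) := by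
    rintro ⟨S, a, b⟩ h
    simp only [mem_sigma, mem_powersetCard, mem_product, mem_sdiff, mem_insert, mem_erase] at h ⊢
    obtain ⟨⟨h1, h2⟩, h3, h4, h5⟩ := h
    have hab : a ≠ b := fun h => h5 (h ▸ h3)
    refine ⟨⟨insert_subset h4 ((erase_subset _ _).trans h1), ?_⟩, by tauto, h1 h3, by tauto⟩
    rw [card_insert_of_notMem (by simp [h5]), card_erase_add_one h3, h2]
  have inv : ∀ x ∈ (powersetCard k A).sigma fun S => S ×ˢ (A \ S),
      insert x.2.1 ((insert x.2.2 (x.1.erase x.2.1)).erase x.2.2) = x.1 := by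
    rintro ⟨S, a, b⟩ h
    simp only [mem_sigma, mem_product, mem_sdiff] at h
    rw [erase_insert (by simp [h.2.2.2]), insert_erase h.2.1]
  refine sum_bij' (fun x _ => ⟨insert x.2.2 (x.1.erase x.2.1), x.2.2, x.2.1⟩)
    (fun x _ => ⟨insert x.2.2 (x.1.erase x.2.1), x.2.2, x.2.1⟩) mem mem ?_ ?_ ?_
  · rintro ⟨S, a, b⟩ h
    simp only [inv _ h]
  · rintro ⟨S, a, b⟩ h
    simp only [inv _ h]
  · rintro ⟨S, a, b⟩ h
    simp only [inv _ h]

/-- Gaussian concentration on the slice for a function whose squared increments over all exchanges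
sum to at most `V` at every set. -/
theorem slice_concentration {α : Type*} (A : Finset α) (k : ℕ) (hk : k ≤ A.card)
    (hA : 0 < A.card) (f : Finset α → ℝ) (V : ℝ) (hV : 0 < V)
    (hf : ∀ S ∈ powersetCard k A,
      ∑ a ∈ S, ∑ b ∈ A \ S, (f S - f (insert b (S.erase a))) ^ 2 ≤ V) (t : ℝ) (ht : 0 < t) :
    (((powersetCard k A).filter (fun S =>
        t + (∑ S ∈ powersetCard k A, f S) / A.card.choose k ≤ f S)).card : ℝ) / A.card.choose k
      ≤ Real.exp (-(A.card * t ^ 2) / (4 * V)) := by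
  have hN : (0 : ℝ) < A.card := by exact_mod_cast hA
  have hne := powersetCard_nonempty.2 hk
  have hC : (0 : ℝ) < A.card.choose k := by exact_mod_cast Nat.choose_pos hk
  have hmgf := herbst (powersetCard k A) hne f (V / A.card) (by
    intro l hl
    have h1 := slice_mlsi A.card A rfl k (fun S => Real.exp (l * f S)) (fun _ => Real.exp_pos _)
    have h2 : sliceEnergy A k (fun S => Real.exp (l * f S))
        ≤ l ^ 2 * V * ∑ S ∈ powersetCard k A, Real.exp (l * f S) := by
      have e1 : sliceEnergy A k (fun S => Real.exp (l * f S)) ≤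
          ∑ S ∈ powersetCard k A, ∑ a ∈ S, ∑ b ∈ A \ S,
            (l ^ 2 / 2 * ((f S - f (insert b (S.erase a))) ^ 2 * Real.exp (l * f S))
            + l ^ 2 / 2 * ((f S - f (insert b (S.erase a))) ^ 2
              * Real.exp (l * f (insert b (S.erase a))))) := by
        refine sum_le_sum fun S _ => sum_le_sum fun a _ => sum_le_sum fun b _ => ?_
        refine (jdiv_exp_le _ _).trans (le_of_eq ?_)
        ring
      refine e1.trans ?_
      simp only [sum_add_distrib, ← mul_sum]
      rw [← sum_swap_symm A k (fun S S' => (f S' - f S) ^ 2 * Real.exp (l * f S))]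
      have e2 : ∀ S ∈ powersetCard k A, ∑ a ∈ S, ∑ b ∈ A \ S,
          (f S - f (insert b (S.erase a))) ^ 2 * Real.exp (l * f S) ≤ V * Real.exp (l * f S) := by
        intro S hS
        simp only [← sum_mul]
        exact mul_le_mul_of_nonneg_right (hf S hS) (Real.exp_pos _).le
      have e3 := sum_le_sum e2
      have e4 : ∀ S a b, (f (insert b (S.erase a)) - f S) ^ 2 = (f S - f (insert b (S.erase a))) ^ 2 :=
        fun _ _ _ => by ring
      simp only [e4]
      rw [← mul_sum] at e3
      nlinarith [sq_nonneg l]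
    have h3 : sliceEnt A k (fun S => Real.exp (l * f S))
        ≤ V / A.card * l ^ 2 * ∑ S ∈ powersetCard k A, Real.exp (l * f S) := by
      have : V / A.card * l ^ 2 * ∑ S ∈ powersetCard k A, Real.exp (l * f S)
          = (l ^ 2 * V * ∑ S ∈ powersetCard k A, Real.exp (l * f S)) / A.card := by ring
      rw [this, le_div_iff₀ hN]
      linarith
    simpa only [sliceEnt, Real.log_exp, card_powersetCard] using h3)
  -- the minimiser of `V l ^ 2 / N - l t`
  set l := A.card * t / (2 * V) with hl
  have hlp : 0 < l := by positivity
  have h1 := hmgf l hlp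
  rw [card_powersetCard] at h1
  set m := (∑ S ∈ powersetCard k A, f S) / A.card.choose k with hm
  have h2 : (((powersetCard k A).filter (fun S => t + m ≤ f S)).card : ℝ) * Real.exp (l * (t + m))
      ≤ ∑ S ∈ powersetCard k A, Real.exp (l * f S) := by
    rw [← nsmul_eq_mul]
    refine (card_nsmul_le_sum _ (fun S => Real.exp (l * f S)) _ ?_).trans
      (sum_le_sum_of_subset_of_nonneg (filter_subset _ _) fun _ _ _ => (Real.exp_pos _).le)
    intro S hS
    exact Real.exp_le_exp.2 (mul_le_mul_of_nonneg_left (mem_filter.1 hS).2 hlp.le)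
  rw [div_le_iff₀ hC, ← mul_le_mul_iff_left₀ (Real.exp_pos (l * (t + m)))]
  refine (h2.trans h1).trans (le_of_eq ?_)
  rw [mul_right_comm, ← Real.exp_add, mul_comm]
  congr 2
  rw [hl]
  field_simp
  ring

/-! ### Second moment of the sum over a random subset -/

lemma choose_identity (m p : ℕ) :
    (m + p + 2) * (m + p + 1) * (m + p).choose m
      = (m + p + 2).choose (m + 1) * ((m + 1) * (p + 1)) := by
  have h1 := Nat.add_one_mul_choose_eq (m + p + 1) m
  have h2 := Nat.choose_mul_succ_eq (m + p) m
  have h3 : m + p + 1 - m = p + 1 := by omega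
  rw [h3] at h2
  simp only [show m + p + 1 + 1 = m + p + 2 from rfl] at h1
  calc _ = (m + p + 2) * ((m + p).choose m * (m + p + 1)) := by ring
    _ = ((m + p + 2) * (m + p + 1).choose m) * (p + 1) := by rw [h2]; ring
    _ = _ := by rw [h1]; ring

/-- The number of `(m + 1)`-subsets of `A` that contain `i` but not `j`. -/
lemma count_split {α : Type*} (A : Finset α) (m p : ℕ) (hA : A.card = m + p + 2) {i j : α}
    (hi : i ∈ A) (hj : j ∈ A) (hij : i ≠ j) :
    ∑ S ∈ powersetCard (m + 1) A, (if i ∈ S ∧ j ∉ S then (1 : ℝ) else 0) = (m + p).choose m := by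
  obtain ⟨B, hB, rfl⟩ : ∃ B, i ∉ B ∧ insert i B = A := ⟨A.erase i, notMem_erase _ _, insert_erase hi⟩
  have hjB : j ∈ B := (mem_insert.1 hj).resolve_left hij.symm
  obtain ⟨E, hE, rfl⟩ : ∃ E, j ∉ E ∧ insert j E = B := ⟨B.erase j, notMem_erase _ _, insert_erase hjB⟩
  rw [card_insert_of_notMem hB, card_insert_of_notMem hE] at hA
  rw [sum_powersetCard_insert hB, sum_eq_zero (s := powersetCard (m + 1) (insert j E)), add_zero]
  · simp only [mem_insert, true_or, true_and, hij.symm, false_or]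
    rw [← sum_filter, sum_const, nsmul_eq_mul, mul_one]
    have : (powersetCard m (insert j E)).filter (fun S => j ∉ S) = powersetCard m E := by
      ext S
      simp only [mem_filter, mem_powersetCard]
      constructor
      · rintro ⟨⟨h1, h2⟩, h3⟩
        exact ⟨(subset_insert_iff_of_notMem h3).1 h1, h2⟩
      · rintro ⟨h1, h2⟩
        exact ⟨⟨h1.trans (subset_insert _ _), h2⟩, fun h => hE (h1 h)⟩
    rw [this, card_powersetCard]
    congr 2
    omega
  · intro S hS
    have : i ∉ S := fun h => hB ((mem_powersetCard.1 hS).1 h)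
    simp [this]

/-- Second moment of the sum over a random subset. Since `∑ w = 0`, one has
`‖∑_S w‖² = -∑ ⟪w i, w j⟫` over `i ∈ S`, `j ∉ S`, and each pair `i ≠ j` is split by the same number of
sets. -/
lemma sum_norm_sq_slice {α H : Type*} [NormedAddCommGroup H] [InnerProductSpace ℝ H]
    (A : Finset α) (m p : ℕ) (hA : A.card = m + p + 2) (w : α → H) (hw : ∑ i ∈ A, w i = 0) :
    ∑ S ∈ powersetCard (m + 1) A, ‖∑ i ∈ S, w i‖ ^ 2
      = (m + p).choose m * ∑ i ∈ A, ‖w i‖ ^ 2 := by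
  have h1 : ∀ S ∈ powersetCard (m + 1) A, ‖∑ i ∈ S, w i‖ ^ 2
      = ∑ i ∈ A, ∑ j ∈ A, (if i ∈ S ∧ j ∉ S then (1 : ℝ) else 0) * -inner ℝ (w i) (w j) := by
    intro S hS
    have hSA := (mem_powersetCard.1 hS).1
    have e : ∑ i ∈ S, w i = -∑ j ∈ A \ S, w j := by
      rw [eq_neg_iff_add_eq_zero, add_comm, sum_sdiff hSA, hw]
    rw [← real_inner_self_eq_norm_sq]
    nth_rewrite 2 [e]
    rw [inner_neg_right, sum_inner, ← sum_neg_distrib]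
    have : ∑ i ∈ A, ∑ j ∈ A, (if i ∈ S ∧ j ∉ S then (1 : ℝ) else 0) * -inner ℝ (w i) (w j)
        = ∑ i ∈ A, if i ∈ S then ∑ j ∈ A, (if j ∉ S then -inner ℝ (w i) (w j) else 0) else 0 := by
      refine sum_congr rfl fun i _ => ?_
      by_cases hi : i ∈ S <;> simp [hi, ite_not, neg_ite]
    rw [this, ← sum_filter, filter_mem_eq_inter, inter_eq_right.2 hSA]
    refine sum_congr rfl fun i _ => ?_
    rw [← sum_filter, inner_sum, ← sum_neg_distrib, sdiff_eq_filter]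
  rw [sum_congr rfl h1, sum_comm]
  have h2 : ∀ i ∈ A, ∑ S ∈ powersetCard (m + 1) A, ∑ j ∈ A,
      (if i ∈ S ∧ j ∉ S then (1 : ℝ) else 0) * -inner ℝ (w i) (w j)
      = (m + p).choose m * ‖w i‖ ^ 2 := by
    intro i hi
    rw [sum_comm]
    simp only [← sum_mul]
    have h3 : ∀ j ∈ A, (∑ S ∈ powersetCard (m + 1) A, if i ∈ S ∧ j ∉ S then (1 : ℝ) else 0)
        * -inner ℝ (w i) (w j) = (m + p).choose m *
          ((if i = j then ‖w i‖ ^ 2 else 0) - inner ℝ (w i) (w j)) := by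
      intro j hj
      by_cases hij : i = j
      · subst hij
        simp
      · rw [count_split A m p hA hi hj hij, if_neg hij]
        ring
    rw [sum_congr rfl h3, ← mul_sum, sum_sub_distrib, ← inner_sum, hw, inner_zero_right,
      sum_ite_eq, if_pos hi, sub_zero]
  rw [sum_congr rfl h2, mul_sum]

lemma sum_norm_sub_sq {α H : Type*} [NormedAddCommGroup H] [InnerProductSpace ℝ H]
    (A : Finset α) (w : α → H) (hw : ∑ i ∈ A, w i = 0) :
    ∑ i ∈ A, ∑ j ∈ A, ‖w i - w j‖ ^ 2 = 2 * A.card * ∑ i ∈ A, ‖w i‖ ^ 2 := by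
  simp only [norm_sub_sq_real, sum_add_distrib, sum_sub_distrib, ← mul_sum, ← inner_sum, hw,
    inner_zero_right, sum_const, nsmul_eq_mul]
  ring

/-- The pairs `(a, b)` with `a ∈ S`, `b ∉ S` and their transposes are disjoint. -/
lemma sum_boundary_le {α : Type*} (A : Finset α) (S : Finset α) (hS : S ⊆ A) (d : α → α → ℝ)
    (hd : ∀ i j, 0 ≤ d i j) (hs : ∀ i j, d i j = d j i) :
    ∑ a ∈ S, ∑ b ∈ A \ S, d a b ≤ (∑ a ∈ A, ∑ b ∈ A, d a b) / 2 := by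
  have e1 : ∑ a ∈ A, ∑ b ∈ A, d a b = ∑ a ∈ A \ S, ∑ b ∈ A, d a b + ∑ a ∈ S, ∑ b ∈ A, d a b :=
    (sum_sdiff hS).symm
  have e2 : ∑ a ∈ S, ∑ b ∈ A \ S, d a b ≤ ∑ a ∈ S, ∑ b ∈ A, d a b :=
    sum_le_sum fun a _ => sum_le_sum_of_subset_of_nonneg sdiff_subset fun _ _ _ => hd _ _
  have e3 : ∑ a ∈ A \ S, ∑ b ∈ S, d a b ≤ ∑ a ∈ A \ S, ∑ b ∈ A, d a b :=
    sum_le_sum fun a _ => sum_le_sum_of_subset_of_nonneg hS fun _ _ _ => hd _ _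
  have e4 : ∑ a ∈ A \ S, ∑ b ∈ S, d a b = ∑ a ∈ S, ∑ b ∈ A \ S, d a b := by
    rw [sum_comm]
    exact sum_congr rfl fun _ _ => sum_congr rfl fun _ _ => hs _ _
  linarith

/-! ### The two-sample statistic -/

/-- Bobkov-type concentration inequality for the permuted two-sample MMD statistic:
for a uniformly random subset `S` of `{1,…,N}` of size `n₁`,
`P(f(S) ≥ t + √(σ̂²/(2Nγ))) ≤ exp(−Nγ²t²/(2σ̂²))`. -/
theorem stmt0 {H : Type*} [NormedAddCommGroup H] [InnerProductSpace ℝ H]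
    (n₁ n₂ : ℕ) (hn₁ : 1 ≤ n₁) (hn₂ : 1 ≤ n₂)
    (N : ℕ) (hN : N = n₁ + n₂)
    (z : Fin N → H)
    (hz : ¬ ∀ i j, z i = z j)
    (zbar : Fin N → H)
    (hzbar : ∀ i, zbar i = z i - (N : ℝ)⁻¹ • ∑ j, z j)
    (σ2 : ℝ)
    (hσ2 : σ2 = (1 / (N * (N - 1) : ℝ)) * ∑ i, ∑ j ∈ univ \ {i}, ‖z i - z j‖ ^ 2)
    (γ : ℝ) (hγ : γ = (n₁ * n₂ : ℝ) / ((n₁ : ℝ) + n₂) ^ 2)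
    (f : Finset (Fin N) → ℝ)
    (hf : ∀ S, f S = ((N : ℝ) / (n₁ * n₂)) * ‖∑ i ∈ S, zbar i‖)
    (t : ℝ) (ht : 0 < t) :
    (((univ.powersetCard n₁).filter
        (fun S => t + Real.sqrt (σ2 / (2 * N * γ)) ≤ f S)).card : ℝ)
      / (N.choose n₁ : ℝ)
    ≤ Real.exp (-(N * γ ^ 2 * t ^ 2) / (2 * σ2)) := by
  obtain ⟨m, rfl⟩ : ∃ m, n₁ = m + 1 := ⟨n₁ - 1, by omega⟩
  obtain ⟨p, rfl⟩ : ∃ p, n₂ = p + 1 := ⟨n₂ - 1, by omega⟩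
  have hcard : (univ : Finset (Fin N)).card = m + p + 2 := by
    rw [card_univ, Fintype.card_fin]; omega
  have hcard' : (univ : Finset (Fin N)).card = N := by rw [card_univ, Fintype.card_fin]
  have hNr : (N : ℝ) = m + p + 2 := by rw [hN]; push_cast; ring
  have hm0 : (0 : ℝ) ≤ m := m.cast_nonneg
  have hp0 : (0 : ℝ) ≤ p := p.cast_nonneg
  have hNp : (0 : ℝ) < N := by rw [hNr]; positivity
  have hN1 : (0 : ℝ) < N - 1 := by rw [hNr]; linarith
  have hC : (0 : ℝ) < N.choose (m + 1) := by exact_mod_cast Nat.choose_pos (by omega)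
  -- the centred vectors have the same differences and sum to zero
  have hdiff : ∀ i j, zbar i - zbar j = z i - z j := fun i j => by rw [hzbar, hzbar]; abel
  have hsum : ∑ i, zbar i = 0 := by
    simp only [hzbar, sum_sub_distrib, sum_const, card_univ, Fintype.card_fin]
    rw [← Nat.cast_smul_eq_nsmul ℝ, smul_smul, mul_inv_cancel₀ hNp.ne', one_smul, sub_self]
  set T := ∑ i, ∑ j, ‖z i - z j‖ ^ 2 with hT
  have hTσ : σ2 = T / (N * (N - 1)) := by
    rw [hσ2, one_div, div_eq_inv_mul, hT]
    congr 1
    refine sum_congr rfl fun i _ => ?_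
    refine sum_subset (subset_univ _) fun j _ hj => ?_
    have : j = i := by simpa using hj
    simp [this]
  have hTp : 0 < T := by
    push Not at hz
    obtain ⟨i, j, hij⟩ := hz
    refine sum_pos' (fun _ _ => sum_nonneg fun _ _ => by positivity)
      ⟨i, mem_univ _, sum_pos' (fun _ _ => by positivity) ⟨j, mem_univ _, ?_⟩⟩
    have := norm_pos_iff.2 (sub_ne_zero.2 hij)
    positivity
  have hσp : 0 < σ2 := by rw [hTσ]; positivity
  have hTw : T = 2 * N * ∑ i, ‖zbar i‖ ^ 2 := by
    have := sum_norm_sub_sq univ zbar hsum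
    rw [hcard'] at this
    rw [← this]
    simp only [hdiff, hT]
  push_cast at hf hγ
  set c : ℝ := (N : ℝ) / ((m + 1) * (p + 1)) with hc
  have hcp : 0 < c := by positivity
  have hlip : ∀ S ∈ powersetCard (m + 1) (univ : Finset (Fin N)),
      ∑ a ∈ S, ∑ b ∈ univ \ S, (f S - f (insert b (S.erase a))) ^ 2 ≤ c ^ 2 * N ^ 2 * σ2 / 2 := by
    intro S hS
    have e1 : ∑ a ∈ S, ∑ b ∈ univ \ S, (f S - f (insert b (S.erase a))) ^ 2
        ≤ ∑ a ∈ S, ∑ b ∈ univ \ S, c ^ 2 * ‖z a - z b‖ ^ 2 := by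
      refine sum_le_sum fun a ha => sum_le_sum fun b hb => ?_
      have hb' : b ∉ S.erase a := fun h => (mem_sdiff.1 hb).2 (mem_of_mem_erase h)
      rw [hf, hf, ← mul_sub, mul_pow, sum_insert hb', ← add_sum_erase S zbar ha]
      refine mul_le_mul_of_nonneg_left ?_ (by positivity)
      rw [← sq_abs]
      refine pow_le_pow_left₀ (abs_nonneg _) ((abs_norm_sub_norm_le _ _).trans (le_of_eq ?_)) 2
      rw [add_sub_add_right_eq_sub, hdiff]
    have e2 : ∑ a ∈ S, ∑ b ∈ univ \ S, ‖z a - z b‖ ^ 2 ≤ T / 2 := by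
      convert sum_boundary_le univ S (subset_univ S) (fun a b => ‖z a - z b‖ ^ 2)
        (fun _ _ => by positivity) (fun i j => by rw [norm_sub_rev])
    simp only [← mul_sum] at e1
    have e3 : T ≤ N ^ 2 * σ2 := by
      have : T = N * (N - 1) * σ2 := by rw [hTσ]; field_simp
      rw [this]
      nlinarith
    have e4 : c ^ 2 * ∑ a ∈ S, ∑ b ∈ univ \ S, ‖z a - z b‖ ^ 2 ≤ c ^ 2 * (N ^ 2 * σ2 / 2) :=
      mul_le_mul_of_nonneg_left (e2.trans (by linarith)) (by positivity)
    linarith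
  have hmean : (∑ S ∈ powersetCard (m + 1) (univ : Finset (Fin N)), f S) / N.choose (m + 1)
      ≤ Real.sqrt (σ2 / (2 * N * γ)) := by
    apply Real.le_sqrt_of_sq_le
    have e1 := sq_sum_le_card_mul_sum_sq (s := powersetCard (m + 1) (univ : Finset (Fin N))) (f := f)
    have e2 := sum_norm_sq_slice univ m p hcard zbar hsum
    have e3 : ∑ S ∈ powersetCard (m + 1) (univ : Finset (Fin N)), f S ^ 2
        = c ^ 2 * ((m + p).choose m * ∑ i, ‖zbar i‖ ^ 2) := by
      rw [← e2, mul_sum]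
      exact sum_congr rfl fun S _ => by rw [hf, mul_pow]
    rw [card_powersetCard, hcard', e3] at e1
    have e4 : (N : ℝ) * (N - 1) * (m + p).choose m
        = N.choose (m + 1) * ((m + 1) * (p + 1)) := by
      have := choose_identity m p
      rw [show m + p + 2 = N by omega] at this
      have h' : (N : ℝ) - 1 = ((m + p + 1 : ℕ) : ℝ) := by rw [hNr]; push_cast; ring
      rw [h']
      exact_mod_cast this
    have e5 : ((m + p).choose m : ℝ)
        = N.choose (m + 1) * ((m + 1) * (p + 1)) / (N * (N - 1)) := by
      rw [← e4]; field_simp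
    have e6 : ∑ i, ‖zbar i‖ ^ 2 = T / (2 * N) := by rw [hTw]; field_simp
    rw [e5, e6] at e1
    rw [div_pow, div_le_iff₀ (by positivity)]
    refine e1.trans (le_of_eq ?_)
    have hγ' : γ = ((m + 1) * (p + 1)) / (N : ℝ) ^ 2 := by
      rw [hγ, hN]; push_cast; ring
    rw [hTσ, hγ', hc]
    field_simp
  have hmain := slice_concentration univ (m + 1) (by omega) (by omega) f
    (c ^ 2 * N ^ 2 * σ2 / 2) (by positivity) (by convert hlip) t ht
  rw [hcard'] at hmain
  have hexp : -((N : ℝ) * t ^ 2) / (4 * (c ^ 2 * N ^ 2 * σ2 / 2))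
      = -(N * γ ^ 2 * t ^ 2) / (2 * σ2) := by
    have hγ' : γ = ((m + 1) * (p + 1)) / (N : ℝ) ^ 2 := by
      rw [hγ, hN]; push_cast; ring
    rw [hγ', hc]
    field_simp
    ring
  rw [hexp] at hmain
  refine le_trans ?_ hmain
  refine div_le_div_of_nonneg_right ?_ hC.le
  refine Nat.cast_le.2 (card_le_card fun S hS => ?_)
  rw [mem_filter] at hS ⊢
  exact ⟨hS.1, by linarith [hS.2]⟩
end

section
/- The average of ‖∑_{i∈S} z̄_i‖ over all subsets S ⊆ {1,…,N} of size n_1 (each chosen with equal probability 1/C(N,n_1)) is at most √( (n_1 n_2 / (2 N² (N−1))) ∑_{i≠j} ‖z_i − z_j‖² ). Consequently the expected value of f(S) under the uniform distribution on size-n_1 subsets is at most √(σ̂²/(2Nγ)). -/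
open Finset

/-!
The bound is a second-moment computation. For a centred family `v` on `N` points,
`‖∑_{i∈S} vᵢ‖² = -∑_{i∈S, j∉S} ⟪vᵢ, vⱼ⟫`, and every ordered pair `i ≠ j` is separated by
exactly `C(N-2, n₁-1)` sets `S` of size `n₁` (`card_separating`). Summing over `S` and using the
centring once more gives `∑_S ‖∑_{i∈S} vᵢ‖² = C(N-2, n₁-1) ∑ᵢ ‖vᵢ‖²`
(`sum_powersetCard_norm_sq`), so the second moment is `n₁ n₂ / (N (N-1)) ∑ᵢ ‖vᵢ‖²`. Since
`∑_{i≠j} ‖vᵢ - vⱼ‖² = 2N ∑ᵢ ‖vᵢ‖²` (`sum_norm_sub_sq`), this is the quantity under the first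
square root, and Cauchy–Schwarz bounds the mean by the root of the second moment. The bound on `f`
follows by rescaling.
-/

/-- The sets of size `m + 1` containing `i` and avoiding `j` are the sets `insert i T`, with `T` of
size `m` avoiding both `i` and `j`. -/
lemma card_separating {ι : Type*} [Fintype ι] [DecidableEq ι] (m : ℕ) {i j : ι} (hij : i ≠ j) :
    #{S ∈ (univ : Finset ι).powersetCard (m + 1) | i ∈ S ∧ j ∉ S}
      = (Fintype.card ι - 2).choose m := by
  have h : #((univ : Finset ι) \ {i, j}) = Fintype.card ι - 2 := by
    rw [card_sdiff_of_subset (subset_univ _), card_pair hij, card_univ]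
  rw [← h, ← card_powersetCard]
  refine card_bij' (fun S _ => S.erase i) (fun T _ => insert i T) ?_ ?_ ?_ ?_
  · intro S hS
    simp only [mem_filter, mem_powersetCard] at hS
    obtain ⟨⟨-, hc⟩, hi, hj⟩ := hS
    rw [mem_powersetCard, card_erase_of_mem hi, hc]
    refine ⟨fun x hx => ?_, rfl⟩
    grind
  · intro T hT
    rw [mem_powersetCard] at hT
    have hi : i ∉ T := fun hi => by simpa using hT.1 hi
    have hj : j ∉ T := fun hj => by simpa using hT.1 hj
    simp [mem_powersetCard, card_insert_of_notMem hi, hT.2, hj, hij.symm]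
  · intro S hS
    exact insert_erase (mem_filter.1 hS).2.1
  · intro T hT
    rw [mem_powersetCard] at hT
    have hi : i ∉ T := fun hi => by simpa using hT.1 hi
    exact erase_insert hi

/-- For a centred family, the second moment of `∑ i ∈ S, v i` over sets of fixed size, before
normalization. -/
lemma sum_powersetCard_norm_sq {H ι : Type*} [NormedAddCommGroup H] [InnerProductSpace ℝ H]
    [Fintype ι] [DecidableEq ι] (m : ℕ) (v : ι → H) (hv : ∑ i, v i = 0) :
    ∑ S ∈ (univ : Finset ι).powersetCard (m + 1), ‖∑ i ∈ S, v i‖ ^ 2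
      = ((Fintype.card ι - 2).choose m : ℝ) * ∑ i, ‖v i‖ ^ 2 := by
  -- Centring replaces one factor of the square by minus the sum over the complement.
  have key (S : Finset ι) : ‖∑ i ∈ S, v i‖ ^ 2
      = - ∑ i, ∑ j, if i ∈ S ∧ j ∉ S then inner ℝ (v i) (v j) else 0 := by
    have h1 : ∑ i ∈ S, v i = - ∑ j ∈ Sᶜ, v j := by
      rw [eq_neg_iff_add_eq_zero, sum_add_sum_compl, hv]
    rw [← real_inner_self_eq_norm_sq]
    nth_rewrite 2 [h1]
    rw [inner_neg_right]
    simp_rw [sum_inner, inner_sum]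
    congr 1
    have hrow (i : ι) : (∑ j, if i ∈ S ∧ j ∉ S then inner ℝ (v i) (v j) else 0)
        = if i ∈ S then ∑ j ∈ Sᶜ, inner ℝ (v i) (v j) else 0 := by
      split_ifs with hi
      · simp only [hi, true_and]
        rw [← sum_filter]
        refine sum_congr ?_ fun _ _ => rfl
        ext j
        simp
      · simp [hi]
    simp_rw [hrow]
    rw [sum_ite_mem, univ_inter]
  simp_rw [key]
  rw [sum_neg_distrib, sum_comm, mul_sum, ← sum_neg_distrib]
  refine sum_congr rfl fun i _ => ?_
  rw [sum_comm]
  have hcol (j : ι) : ∑ S ∈ (univ : Finset ι).powersetCard (m + 1),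
      (if i ∈ S ∧ j ∉ S then inner ℝ (v i) (v j) else 0)
      = ((Fintype.card ι - 2).choose m : ℝ) *
        (inner ℝ (v i) (v j) - if j = i then ‖v i‖ ^ 2 else 0) := by
    rw [← sum_filter, sum_const, nsmul_eq_mul]
    rcases eq_or_ne i j with rfl | hij
    · simp
    · rw [card_separating m hij, if_neg hij.symm, sub_zero]
  simp_rw [hcol]
  rw [← mul_sum, sum_sub_distrib, ← inner_sum, hv]
  simp

lemma sum_norm_sub_sq_s2 {H ι : Type*} [NormedAddCommGroup H] [InnerProductSpace ℝ H]
    [Fintype ι] [DecidableEq ι] (v : ι → H) (hv : ∑ i, v i = 0) :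
    ∑ i, ∑ j ∈ univ \ {i}, ‖v i - v j‖ ^ 2 = 2 * Fintype.card ι * ∑ i, ‖v i‖ ^ 2 := by
  have h (i : ι) : ∑ j ∈ univ \ {i}, ‖v i - v j‖ ^ 2
      = Fintype.card ι * ‖v i‖ ^ 2 + ∑ j, ‖v j‖ ^ 2 := by
    rw [sum_subset (sdiff_subset (s := univ) (t := {i}))
      (fun j _ hj => by
        have : j = i := by simpa using hj
        simp [this])]
    simp_rw [norm_sub_sq_real]
    rw [sum_add_distrib, sum_sub_distrib, ← mul_sum, ← inner_sum, hv]
    simp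
  simp_rw [h]
  rw [sum_add_distrib, ← mul_sum, sum_const, card_univ, nsmul_eq_mul]
  ring

/-- `C(N-2, n₁-1) N (N-1) = C(N, n₁) n₁ n₂`, with `n₁ = a + 1`, `n₂ = b + 1`, `N = n₁ + n₂`. -/
lemma choose_separating (a b : ℕ) :
    (a + b).choose a * ((a + b + 2) * (a + b + 1))
      = (a + b + 2).choose (a + 1) * ((a + 1) * (b + 1)) := by
  rw [Nat.choose_symm_add, show a + b + 2 = a + 1 + (b + 1) by ring, Nat.choose_symm_add]
  have h1 := Nat.add_choose_mul_factorial_mul_factorial a b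
  have h2 := Nat.add_choose_mul_factorial_mul_factorial (a + 1) (b + 1)
  rw [show a + 1 + (b + 1) = a + b + 2 by ring] at h2 ⊢
  rw [Nat.factorial_succ a, Nat.factorial_succ b,
    Nat.factorial_succ (a + b + 1), Nat.factorial_succ (a + b), ← h1] at h2
  have : 0 < a.factorial * b.factorial := by positivity
  refine Nat.eq_of_mul_eq_mul_right this ?_
  linarith

/-- Bound on the expectation of `‖∑_{i∈S} z̄ᵢ‖` (and of `f(S)`) over uniformly random
subsets `S` of size `n₁`. -/
theorem stmt2 {H : Type*} [NormedAddCommGroup H] [InnerProductSpace ℝ H]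
    (n₁ n₂ : ℕ) (hn₁ : 1 ≤ n₁) (hn₂ : 1 ≤ n₂)
    (N : ℕ) (hN : N = n₁ + n₂)
    (z : Fin N → H)
    (zbar : Fin N → H)
    (hzbar : ∀ i, zbar i = z i - (N : ℝ)⁻¹ • ∑ j, z j)
    (σ2 : ℝ)
    (hσ2 : σ2 = (1 / (N * (N - 1) : ℝ)) * ∑ i, ∑ j ∈ univ \ {i}, ‖z i - z j‖ ^ 2)
    (γ : ℝ) (hγ : γ = (n₁ * n₂ : ℝ) / ((n₁ : ℝ) + n₂) ^ 2)
    (f : Finset (Fin N) → ℝ)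
    (hf : ∀ S, f S = ((N : ℝ) / (n₁ * n₂)) * ‖∑ i ∈ S, zbar i‖) :
    ((N.choose n₁ : ℝ))⁻¹ * ∑ S ∈ univ.powersetCard n₁, ‖∑ i ∈ S, zbar i‖
      ≤ Real.sqrt ((n₁ * n₂ / (2 * (N : ℝ) ^ 2 * (N - 1))) *
          ∑ i, ∑ j ∈ univ \ {i}, ‖z i - z j‖ ^ 2) ∧
    ((N.choose n₁ : ℝ))⁻¹ * ∑ S ∈ univ.powersetCard n₁, f S
      ≤ Real.sqrt (σ2 / (2 * N * γ)) := by
  have hcent : ∑ i, zbar i = 0 := by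
    have hN0 : (N : ℝ) ≠ 0 := by
      have : N ≠ 0 := by omega
      exact_mod_cast this
    simp_rw [hzbar]
    rw [sum_sub_distrib, sum_const, card_univ, Fintype.card_fin, ← Nat.cast_smul_eq_nsmul ℝ,
      smul_smul, mul_inv_cancel₀ hN0, one_smul, sub_self]
  have hD : ∑ i, ∑ j ∈ univ \ {i}, ‖z i - z j‖ ^ 2 = 2 * N * ∑ i, ‖zbar i‖ ^ 2 := by
    have h := sum_norm_sub_sq_s2 zbar hcent
    rw [Fintype.card_fin] at h
    rw [← h]
    simp_rw [hzbar, sub_sub_sub_cancel_right]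
  set D := ∑ i, ∑ j ∈ univ \ {i}, ‖z i - z j‖ ^ 2
  obtain ⟨a, rfl⟩ := Nat.exists_eq_add_of_le' hn₁
  obtain ⟨b, rfl⟩ := Nat.exists_eq_add_of_le' hn₂
  have hN' : N = a + b + 2 := by omega
  have hM := sum_powersetCard_norm_sq a zbar hcent
  rw [Fintype.card_fin, show N - 2 = a + b by omega] at hM
  have hch : ((a + b).choose a : ℝ) * ((a + b + 2) * (a + b + 1))
      = (N.choose (a + 1) : ℝ) * ((a + 1) * (b + 1)) := by
    rw [hN']
    exact_mod_cast choose_separating a b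
  have hC : (0 : ℝ) < N.choose (a + 1) := by
    exact_mod_cast Nat.choose_pos (by omega)
  have hNr : (N : ℝ) = a + b + 2 := by rw [hN']; push_cast; ring
  have hcs := sq_sum_le_card_mul_sum_sq (s := (univ : Finset (Fin N)).powersetCard (a + 1))
    (f := fun S => ‖∑ i ∈ S, zbar i‖)
  rw [card_powersetCard, card_univ, Fintype.card_fin, hM] at hcs
  have hfirst : ((N.choose (a + 1) : ℝ))⁻¹ *
      ∑ S ∈ univ.powersetCard (a + 1), ‖∑ i ∈ S, zbar i‖
      ≤ Real.sqrt (((a + 1 : ℕ) * (b + 1 : ℕ) / (2 * (N : ℝ) ^ 2 * (N - 1))) * D) := by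
    apply Real.le_sqrt_of_sq_le
    have hq : ((a + b).choose a : ℝ)
        = (N.choose (a + 1) : ℝ) * ((a + 1) * (b + 1)) / ((a + b + 2) * (a + b + 1)) := by
      rw [← hch]; field_simp
    calc _ = ((N.choose (a + 1) : ℝ) ^ 2)⁻¹ *
          (∑ S ∈ univ.powersetCard (a + 1), ‖∑ i ∈ S, zbar i‖) ^ 2 := by
          rw [mul_pow, inv_pow]
      _ ≤ ((N.choose (a + 1) : ℝ) ^ 2)⁻¹ *
          (N.choose (a + 1) * (((a + b).choose a : ℝ) * ∑ i, ‖zbar i‖ ^ 2)) := by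
          gcongr
      _ = _ := by
          rw [hD, hq, hNr, show (a + b + 2 - 1 : ℝ) = a + b + 1 by ring]
          push_cast
          field_simp
  refine ⟨hfirst, ?_⟩
  simp_rw [hf]
  rw [← mul_sum, mul_left_comm]
  have hc : (0 : ℝ) ≤ (N : ℝ) / ((a + 1 : ℕ) * (b + 1 : ℕ)) := by positivity
  refine (mul_le_mul_of_nonneg_left hfirst hc).trans_eq ?_
  -- The prefactor `N / (n₁ n₂)` moves under the square root as its square.
  nth_rewrite 1 [← Real.sqrt_sq hc]
  rw [← Real.sqrt_mul (sq_nonneg _), hσ2, hγ, hNr, show (a + b + 2 - 1 : ℝ) = a + b + 1 by ring]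
  congr 1
  push_cast
  rw [show (a + 1 + (b + 1) : ℝ) = a + b + 2 by ring]
  field_simp
end

section
/- For every subset S ⊆ {1,…,N} of size n_1, writing S_{ij} = (S \ {i}) ∪ {j} for i ∈ S and j ∉ S, the discrete gradient of f at S satisfies ∑_{i∈S} ∑_{j∉S} |f(S) − f(S_{ij})|² ≤ (N²/(2 n_1² n_2²)) ∑_{i≠j} ‖z_i − z_j‖², a bound that does not depend on S. -/
/-!
Swapping `i ∈ S` for `j ∉ S` changes `∑_{k ∈ S} z̄ k` by `z̄ i - z̄ j = z i - z j`, the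
centering term cancelling; so by the reverse triangle inequality `f` changes by at most
`N / (n₁ n₂) * ‖z i - z j‖`. The factor `1 / 2` comes from symmetry of `‖z i - z j‖`: the pairs
in `S × Sᶜ` and those in `Sᶜ × S` are disjoint families of off-diagonal pairs with equal sums
(`two_mul_sum_cut_le`).
-/


open Finset

/-- The weight of a cut counted in both directions is at most the total off-diagonal weight. -/
theorem two_mul_sum_cut_le {ι : Type*} [Fintype ι] [DecidableEq ι] (g : ι → ι → ℝ)
    (hg : ∀ i j, 0 ≤ g i j) (hsymm : ∀ i j, g i j = g j i) (S : Finset ι) :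
    2 * ∑ i ∈ S, ∑ j ∈ univ \ S, g i j ≤ ∑ i, ∑ j ∈ univ \ {i}, g i j := by
  have hswap : ∑ i ∈ S, ∑ j ∈ univ \ S, g i j = ∑ i ∈ univ \ S, ∑ j ∈ S, g i j := by
    rw [sum_comm]
    exact sum_congr rfl fun i _ => sum_congr rfl fun j _ => hsymm j i
  have hout : ∑ i ∈ S, ∑ j ∈ univ \ S, g i j ≤ ∑ i ∈ S, ∑ j ∈ univ \ {i}, g i j := by
    refine sum_le_sum fun i hi => sum_le_sum_of_subset_of_nonneg ?_ fun j _ _ => hg i j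
    exact sdiff_subset_sdiff Subset.rfl (singleton_subset_iff.2 hi)
  have hin : ∑ i ∈ univ \ S, ∑ j ∈ S, g i j ≤ ∑ i ∈ univ \ S, ∑ j ∈ univ \ {i}, g i j := by
    refine sum_le_sum fun i hi => sum_le_sum_of_subset_of_nonneg ?_ fun j _ _ => hg i j
    intro j hj
    have hiS : i ∉ S := (mem_sdiff.1 hi).2
    simp only [mem_sdiff, mem_univ, mem_singleton, true_and]
    rintro rfl
    exact hiS hj
  have hsplit := sum_sdiff (subset_univ S) (f := fun i => ∑ j ∈ univ \ {i}, g i j)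
  linarith

/-- Bound on the Euclidean length of the discrete gradient of `f` on the slice of
subsets of size `n₁`, uniform in `S`. -/
theorem stmt3 {H : Type*} [NormedAddCommGroup H] [InnerProductSpace ℝ H]
    (n₁ n₂ : ℕ) (hn₁ : 1 ≤ n₁) (hn₂ : 1 ≤ n₂)
    (N : ℕ) (hN : N = n₁ + n₂)
    (z : Fin N → H)
    (zbar : Fin N → H)
    (hzbar : ∀ i, zbar i = z i - (N : ℝ)⁻¹ • ∑ j, z j)
    (f : Finset (Fin N) → ℝ)
    (hf : ∀ S, f S = ((N : ℝ) / (n₁ * n₂)) * ‖∑ i ∈ S, zbar i‖) :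
    ∀ S ∈ univ.powersetCard n₁,
      ∑ i ∈ S, ∑ j ∈ univ \ S, |f S - f (insert j (S.erase i))| ^ 2
        ≤ ((N : ℝ) ^ 2 / (2 * (n₁ : ℝ) ^ 2 * (n₂ : ℝ) ^ 2)) *
            ∑ i, ∑ j ∈ univ \ {i}, ‖z i - z j‖ ^ 2 := by
  intro S _
  have hpair : ∀ i ∈ S, ∀ j ∈ univ \ S, |f S - f (insert j (S.erase i))| ^ 2
      ≤ ((N : ℝ) / (n₁ * n₂)) ^ 2 * ‖z i - z j‖ ^ 2 := by
    intro i hi j hj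
    have hjS : j ∉ S := (mem_sdiff.1 hj).2
    have hj' : j ∉ S.erase i := fun h => hjS (mem_of_mem_erase h)
    have hdiff : ∑ k ∈ S, zbar k - ∑ k ∈ insert j (S.erase i), zbar k = z i - z j := by
      rw [sum_insert hj', ← add_sum_erase S zbar hi, hzbar i, hzbar j]
      abel
    rw [← mul_pow]
    refine pow_le_pow_left₀ (abs_nonneg _) ?_ 2
    rw [hf, hf, ← mul_sub, abs_mul, abs_of_nonneg (by positivity), ← hdiff]
    exact mul_le_mul_of_nonneg_left (abs_norm_sub_norm_le _ _) (by positivity)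
  have hcut := two_mul_sum_cut_le (fun i j => ‖z i - z j‖ ^ 2) (fun _ _ => by positivity)
    (fun i j => by rw [norm_sub_rev]) S
  calc ∑ i ∈ S, ∑ j ∈ univ \ S, |f S - f (insert j (S.erase i))| ^ 2
      ≤ ∑ i ∈ S, ∑ j ∈ univ \ S, ((N : ℝ) / (n₁ * n₂)) ^ 2 * ‖z i - z j‖ ^ 2 :=
        sum_le_sum fun i hi => sum_le_sum fun j hj => hpair i hi j hj
    _ = ((N : ℝ) ^ 2 / (2 * (n₁ : ℝ) ^ 2 * (n₂ : ℝ) ^ 2)) *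
          (2 * ∑ i ∈ S, ∑ j ∈ univ \ S, ‖z i - z j‖ ^ 2) := by
        simp only [← mul_sum]
        have h₁ : (n₁ : ℝ) ≠ 0 := by positivity
        have h₂ : (n₂ : ℝ) ≠ 0 := by positivity
        field_simp
    _ ≤ _ := mul_le_mul_of_nonneg_left hcut (by positivity)
end

section
/- Let z_1,…,z_N ∈ H be grouped into K consecutive blocks of sizes n_1,…,n_K with N = ∑_k n_k. For a permutation b of {1,…,N} and 1 ≤ k < l ≤ K, let V̂_{kl}^{(b)} = ‖(1/n_k)∑_{i=1}^{n_k} z_{b(m_{k−1}+i)} − (1/n_l)∑_{j=1}^{n_l} z_{b(m_{l−1}+j)}‖, where m_{k−1} = n_1 + ⋯ + n_{k−1}, and let V̂_max^{(b)} = max_{1≤k<l≤K} V̂_{kl}^{(b)}. Let σ̂_K² be defined as follows: sort the N(N−1) values h̃(i,j) = ‖z_i − z_j‖² (over ordered pairs i ≠ j) in decreasing order, let σ̄_{kl}² be the average of the largest (n_k+n_l)(n_k+n_l−1) of these values, and set σ̂_K² = max_{1≤k<l≤K} σ̄_{kl}². Then, with γ_{k,l} = n_k n_l/(n_k+n_l)²,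 for a uniformly random permutation b and every t ≥ 0: P_b( V̂_max^{(b)} ≥ t + max_{k<l} √( σ̂_K² / (2(n_k+n_l)γ_{k,l}) ) ) ≤ C(K,2) · exp( − min_{k<l} (n_k+n_l) γ_{k,l}² t² / (2 σ̂_K²) ), where C(K,2) = K(K−1)/2 (assume σ̂_K² > 0). -/
/-!
The union bound over the pairs `k < l` and the monotonicity of `sSup`, `sInf` reduce the theorem to
one two-sample statistic (`pair_tail`). For one pair with block sizes `m`, `n` and `s = m + n`, let
`J` be the union of the two blocks of positions. Permuting the positions inside `J` does not change
the law of `b`, so for fixed `b` the first block may be replaced by a uniformly random `m`-subset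
`A` of `J` (`card_perm_le`). After centring the `s` pooled vectors to `u i`, with `∑ u i = 0`, the
statistic is `(s / (m n)) ‖∑ i ∈ A, u i‖`.

* Its mean is at most the root of the exact second moment of sampling without replacement
  (`sum_norm_sq_powersetCard`).
* Its moment generating function is bounded in `sum_exp_le` by drawing the elements of `A` one at a
  time. For an `L`-Lipschitz `φ` and a pool `R` of `r = n + m` vectors, with scatter
  `W(R) = (1 / (2r)) ∑_{a,b} ‖z a - z b‖²`, the claim is
  `log E exp φ(∑_A z) ≤ E φ(∑_A z) + (L² / 2) (2 - n² / r²) W(R)`.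
  If `a` is drawn first, the conditional mean `g a` satisfies
  `|g a - g b| ≤ L n / (r - 1) ‖z a - z b‖`, because swapping `a` and `b` matters only when `b` is
  not drawn later, while `W` drops by an amount linear in `∑_b ‖z a - z b‖²`. The factor
  `2 - n² / r²` is chosen so that this drop pays for `(g a - E g)² + Var g`, and the
  self-normalized inequality `E exp (X - (X² + E X²) / 2) ≤ 1` for centred `X`
  (`sum_exp_sub_le`, from `exp (x - x² / 2) ≤ 1 + x + x² / 2`) closes the induction. As `2 - n² / r²`
  is at most `2` at every stage, no logarithmic factor accumulates.

Markov's inequality at the optimal exponent gives the sub-Gaussian tail (`card_tail_le`).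
-/

open Finset

attribute [local instance] Classical.propDecidable

/-! ### The self-normalized exponential inequality -/

lemma exp_sub_half_sq_le (x : ℝ) : Real.exp (x - x ^ 2 / 2) ≤ 1 + x + x ^ 2 / 2 := by
  -- `(1 + y + y² / 2) exp (y² / 2 - y)` decreases on `y ≤ 0`, increases on `y ≥ 0`, and is `1` at `0`
  have hd : ∀ y : ℝ, HasDerivAt (fun y : ℝ => (1 + y + y ^ 2 / 2) * Real.exp (y ^ 2 / 2 - y))
      (y * ((1 + y / 2 + y ^ 2 / 2) * Real.exp (y ^ 2 / 2 - y))) y := by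
    intro y
    have h1 : HasDerivAt (fun y : ℝ => y ^ 2 / 2) y y := by
      simpa using (hasDerivAt_pow 2 y).div_const 2
    have h2 : HasDerivAt (fun y : ℝ => 1 + y + y ^ 2 / 2) (1 + y) y :=
      ((hasDerivAt_id' y).const_add 1).add h1
    have h3 : HasDerivAt (fun y : ℝ => Real.exp (y ^ 2 / 2 - y))
        (Real.exp (y ^ 2 / 2 - y) * (y - 1)) y := (h1.sub (hasDerivAt_id' y)).exp
    refine (h2.mul h3).congr_deriv ?_
    ring
  have hpos : ∀ y : ℝ, 0 ≤ (1 + y / 2 + y ^ 2 / 2) * Real.exp (y ^ 2 / 2 - y) := fun y =>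
    mul_nonneg (by nlinarith [sq_nonneg (y + 1)]) (Real.exp_pos _).le
  have hc : Continuous (fun y : ℝ => (1 + y + y ^ 2 / 2) * Real.exp (y ^ 2 / 2 - y)) := by
    fun_prop
  have key : 1 ≤ (1 + x + x ^ 2 / 2) * Real.exp (x ^ 2 / 2 - x) := by
    rcases le_total 0 x with hx | hx
    · have hm := monotoneOn_of_hasDerivWithinAt_nonneg (convex_Ici (0 : ℝ)) hc.continuousOn
        (fun y _ => (hd y).hasDerivWithinAt)
        (fun y hy => by
          rw [interior_Ici] at hy
          exact mul_nonneg (le_of_lt hy) (hpos y))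
      have := hm (Set.mem_Ici.2 le_rfl) (Set.mem_Ici.2 hx) hx
      simpa using this
    · have hm := antitoneOn_of_hasDerivWithinAt_nonpos (convex_Iic (0 : ℝ)) hc.continuousOn
        (fun y _ => (hd y).hasDerivWithinAt)
        (fun y hy => by
          rw [interior_Iic] at hy
          exact mul_nonpos_of_nonpos_of_nonneg (le_of_lt hy) (hpos y))
      have := hm (Set.mem_Iic.2 hx) (Set.mem_Iic.2 le_rfl) hx
      simpa using this
  have e1 : Real.exp (x ^ 2 / 2 - x) * Real.exp (x - x ^ 2 / 2) = 1 := by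
    rw [← Real.exp_add]; simp
  calc Real.exp (x - x ^ 2 / 2) = 1 * Real.exp (x - x ^ 2 / 2) := (one_mul _).symm
    _ ≤ ((1 + x + x ^ 2 / 2) * Real.exp (x ^ 2 / 2 - x)) * Real.exp (x - x ^ 2 / 2) := by gcongr
    _ = 1 + x + x ^ 2 / 2 := by rw [mul_assoc, e1, mul_one]

lemma sum_sq_sub_eq {ι : Type*} (R : Finset ι) (g : ι → ℝ) :
    ∑ a ∈ R, ∑ b ∈ R, (g a - g b) ^ 2
      = 2 * ((#R : ℝ) * ∑ a ∈ R, g a ^ 2 - (∑ a ∈ R, g a) ^ 2) := by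
  have : ∀ a ∈ R, ∑ b ∈ R, (g a - g b) ^ 2
      = (#R : ℝ) * g a ^ 2 - 2 * g a * (∑ b ∈ R, g b) + ∑ b ∈ R, g b ^ 2 := by
    intro a _
    simp only [sub_sq, sum_add_distrib, sum_sub_distrib, sum_const, nsmul_eq_mul, mul_sum]
  rw [sum_congr rfl this]
  simp only [sum_add_distrib, sum_sub_distrib, sum_const, nsmul_eq_mul, ← mul_sum, ← sum_mul]
  ring

/-- For `g` under the uniform law on `R`, with mean `μ`: if the hypotheses make `q a` dominate
`(g a - μ)² + Var g`, then `E exp (g - q / 2) ≤ exp μ`. Here `y a` controls the squared differences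
`∑ b, (g a - g b)²`, which bound both `(g a - μ)²` (Cauchy–Schwarz) and `Var g`. -/
lemma sum_exp_sub_le {ι : Type*} (R : Finset ι) (r : ℝ) (hr : (#R : ℝ) = r) (hr2 : 1 ≤ r)
    (g y q : ι → ℝ) (c : ℝ)
    (h : ∀ a ∈ R, ∑ b ∈ R, (g a - g b) ^ 2 ≤ c * y a)
    (hq : ∀ a ∈ R, c * ((r - 1) / r ^ 2 * y a + (∑ b ∈ R, y b) / (2 * r ^ 2)) ≤ q a) :
    ∑ a ∈ R, Real.exp (g a - q a / 2) ≤ r * Real.exp ((∑ a ∈ R, g a) / r) := by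
  set μ := (∑ a ∈ R, g a) / r with hμ
  have hr0 : 0 < r := by linarith
  have hsum : ∑ a ∈ R, g a = r * μ := by rw [hμ]; field_simp
  set v := (∑ a ∈ R, (g a - μ) ^ 2) / r with hv
  have hX0 : ∑ a ∈ R, (g a - μ) = 0 := by
    rw [sum_sub_distrib, hsum, sum_const, nsmul_eq_mul, hr]; ring
  have hX2 : ∑ a ∈ R, (g a - μ) ^ 2 = r * v := by rw [hv]; field_simp
  have hvle : v ≤ c * (∑ b ∈ R, y b) / (2 * r ^ 2) := by
    have h1 := sum_sq_sub_eq R (fun a => g a - μ)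
    simp only [sub_sub_sub_cancel_right, hX0, hX2, hr] at h1
    have h2 : ∑ a ∈ R, ∑ b ∈ R, (g a - g b) ^ 2 ≤ c * ∑ b ∈ R, y b := by
      rw [mul_sum]; exact sum_le_sum h
    rw [le_div_iff₀ (by positivity)]
    nlinarith
  have hXa : ∀ a ∈ R, (g a - μ) ^ 2 ≤ c * ((r - 1) / r ^ 2 * y a) := by
    intro a ha
    have h1 : r * (g a - μ) = ∑ b ∈ R.erase a, (g a - g b) := by
      rw [sum_erase _ (by simp), sum_sub_distrib, hsum, sum_const, nsmul_eq_mul, hr]; ring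
    have h2 := sq_sum_le_card_mul_sum_sq (s := R.erase a) (f := fun b => g a - g b)
    rw [← h1, card_erase_of_mem ha, Nat.cast_sub (card_pos.2 ⟨a, ha⟩), hr, Nat.cast_one,
      sum_erase _ (by simp)] at h2
    have h3 := h a ha
    have h4 : r ^ 2 * (g a - μ) ^ 2 ≤ (r - 1) * (c * y a) := by
      calc r ^ 2 * (g a - μ) ^ 2 = (r * (g a - μ)) ^ 2 := by ring
        _ ≤ _ := h2
        _ ≤ _ := by
          apply mul_le_mul_of_nonneg_left h3; linarith
    have h5 : c * ((r - 1) / r ^ 2 * y a) = (r - 1) * (c * y a) / r ^ 2 := by ring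
    rw [h5, le_div_iff₀ (by positivity)]
    linarith
  have hterm : ∀ a ∈ R, Real.exp (g a - q a / 2)
      ≤ Real.exp μ * Real.exp (-(v / 2)) * (1 + (g a - μ) + (g a - μ) ^ 2 / 2) := by
    intro a ha
    have h1 : (g a - μ) ^ 2 + v ≤ q a := by
      refine le_trans ?_ (hq a ha)
      rw [mul_add]
      have := hXa a ha
      have h6 : c * ((∑ b ∈ R, y b) / (2 * r ^ 2)) = c * (∑ b ∈ R, y b) / (2 * r ^ 2) := by ring
      linarith
    calc Real.exp (g a - q a / 2)
        ≤ Real.exp (μ + -(v / 2) + ((g a - μ) - (g a - μ) ^ 2 / 2)) := by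
          apply Real.exp_le_exp.2; linarith
      _ = Real.exp μ * Real.exp (-(v / 2)) * Real.exp ((g a - μ) - (g a - μ) ^ 2 / 2) := by
          rw [Real.exp_add, Real.exp_add]
      _ ≤ _ := by
          gcongr
          exact exp_sub_half_sq_le _
  calc ∑ a ∈ R, Real.exp (g a - q a / 2)
      ≤ ∑ a ∈ R, Real.exp μ * Real.exp (-(v / 2)) * (1 + (g a - μ) + (g a - μ) ^ 2 / 2) :=
        sum_le_sum hterm
    _ = Real.exp μ * Real.exp (-(v / 2)) * (r * (v / 2 + 1)) := by
        rw [← mul_sum, sum_add_distrib, sum_add_distrib, hX0, ← sum_div, hX2, sum_const,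
          nsmul_eq_mul, hr]
        ring
    _ ≤ Real.exp μ * Real.exp (-(v / 2)) * (r * Real.exp (v / 2)) := by
        gcongr
        exact Real.add_one_le_exp _
    _ = r * Real.exp μ := by
        have : Real.exp (-(v / 2)) * Real.exp (v / 2) = 1 := by rw [← Real.exp_add]; simp
        linear_combination r * Real.exp μ * this

/-! ### Sums over subsets of fixed size -/

/-- Double counting of pairs `(A, a)` with `a ∈ A ⊆ R` and `#A = m + 1`: draw the distinguished
element `a` first, then the remaining `m`. -/
lemma sum_powersetCard_succ {ι M : Type*} [AddCommMonoid M] (R : Finset ι) (m : ℕ)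
    (G : ι → Finset ι → M) :
    ∑ A ∈ powersetCard (m + 1) R, ∑ a ∈ A, G a (A.erase a)
      = ∑ a ∈ R, ∑ A ∈ powersetCard m (R.erase a), G a A := by
  rw [sum_sigma', sum_sigma']
  refine sum_bij' (fun x _ => ⟨x.2, x.1.erase x.2⟩) (fun y _ => ⟨insert y.1 y.2, y.1⟩)
    ?_ ?_ ?_ ?_ ?_
  · rintro ⟨A, a⟩ h
    simp only [mem_sigma, mem_powersetCard] at h ⊢
    obtain ⟨⟨h1, h2⟩, h3⟩ := h
    exact ⟨h1 h3, erase_subset_erase _ h1, by rw [card_erase_of_mem h3, h2]; rfl⟩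
  · rintro ⟨a, A⟩ h
    simp only [mem_sigma, mem_powersetCard] at h ⊢
    obtain ⟨h1, h2, h3⟩ := h
    have h4 : a ∉ A := fun h => by simpa using h2 h
    exact ⟨⟨insert_subset h1 (h2.trans (erase_subset _ _)), by rw [card_insert_of_notMem h4, h3]⟩,
      mem_insert_self _ _⟩
  · rintro ⟨A, a⟩ h
    simp only [mem_sigma] at h
    simp [insert_erase h.2]
  · rintro ⟨a, A⟩ h
    simp only [mem_sigma, mem_powersetCard] at h
    have h4 : a ∉ A := fun h' => by simpa using h.2.1 h'
    simp [erase_insert h4]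
  · rintro ⟨A, a⟩ h
    rfl

/-- Coupling of the draws that start with `a` and with `b`: the sets which also contain the other
element give the same sums and cancel. -/
lemma sum_powersetCard_swap {ι H : Type*} [AddCommGroup H] (z : ι → H) (φ : H → ℝ)
    (R : Finset ι) (a b : ι) (ha : a ∉ R) (hb : b ∉ R) (m : ℕ) :
    ∑ A ∈ powersetCard m (insert b R), φ (z a + ∑ i ∈ A, z i)
      - ∑ A ∈ powersetCard m (insert a R), φ (z b + ∑ i ∈ A, z i)
      = ∑ A ∈ powersetCard m R, (φ (z a + ∑ i ∈ A, z i) - φ (z b + ∑ i ∈ A, z i)) := by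
  cases m with
  | zero => simp
  | succ m =>
    have key : ∀ c, c ∉ R → ∀ d, ∑ A ∈ powersetCard (m + 1) (insert c R), φ (z d + ∑ i ∈ A, z i)
        = ∑ A ∈ powersetCard (m + 1) R, φ (z d + ∑ i ∈ A, z i)
          + ∑ A ∈ powersetCard m R, φ (z d + (z c + ∑ i ∈ A, z i)) := by
      intro c hc d
      have hm : ∀ A ∈ powersetCard m R, c ∉ A := fun A hA h => hc ((mem_powersetCard.1 hA).1 h)
      rw [powersetCard_succ_insert hc, sum_union, sum_image]
      · congr 1
        refine sum_congr rfl fun A hA => ?_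
        rw [sum_insert (hm A hA)]
      · intro A hA B hB hAB
        have := congrArg (fun s => s.erase c) hAB
        simpa [erase_insert (hm A hA), erase_insert (hm B hB)] using this
      · rw [disjoint_left]
        intro A hA hA'
        obtain ⟨B, _, rfl⟩ := mem_image.1 hA'
        exact hc ((mem_powersetCard.1 hA).1 (mem_insert_self _ _))
    rw [key b hb a, key a ha b, sum_sub_distrib]
    simp only [add_left_comm (z a) (z b)]
    ring

/-! ### The moment generating function under sampling without replacement -/

lemma sum_sum_erase {ι : Type*} (R : Finset ι) (d : ι → ι → ℝ) (hd0 : ∀ a, d a a = 0)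
    (hd : ∀ a b, d a b = d b a) (a : ι) (ha : a ∈ R) :
    ∑ b ∈ R.erase a, ∑ c ∈ R.erase a, d b c
      = ∑ b ∈ R, ∑ c ∈ R, d b c - 2 * ∑ b ∈ R, d a b := by
  have h1 : ∀ b, ∑ c ∈ R.erase a, d b c = ∑ c ∈ R, d b c - d a b := by
    intro b
    rw [← add_sum_erase R _ ha, hd b a]; ring
  simp only [h1]
  rw [← add_sum_erase R (fun b => ∑ c ∈ R, d b c) ha, ← add_sum_erase R (fun b => d a b) ha,
    sum_sub_distrib, hd0]
  ring

lemma sum_sum_norm_sub_sq {ι H : Type*} [NormedAddCommGroup H] [InnerProductSpace ℝ H]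
    (R : Finset ι) (u : ι → H) :
    ∑ b ∈ R, ∑ c ∈ R, ‖u b - u c‖ ^ 2
      = 2 * ((#R : ℝ) * ∑ b ∈ R, ‖u b‖ ^ 2 - ‖∑ b ∈ R, u b‖ ^ 2) := by
  have h2 : ‖∑ b ∈ R, u b‖ ^ 2 = ∑ b ∈ R, ∑ c ∈ R, inner ℝ (u b) (u c) := by
    rw [← real_inner_self_eq_norm_sq, sum_inner]
    simp only [inner_sum]
  rw [h2]
  simp only [norm_sub_sq_real, sum_add_distrib, sum_sub_distrib, sum_const, nsmul_eq_mul,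
    ← mul_sum]
  ring

/-- The scatter of the family is at most its second moment about any of the points; this is where
the Hilbert structure enters. -/
lemma sum_sum_norm_sub_sq_le {ι H : Type*} [NormedAddCommGroup H] [InnerProductSpace ℝ H]
    (R : Finset ι) (z : ι → H) (a : ι) :
    ∑ b ∈ R, ∑ c ∈ R, ‖z b - z c‖ ^ 2 ≤ 2 * ((#R : ℝ) * ∑ b ∈ R, ‖z a - z b‖ ^ 2) := by
  have h := sum_sum_norm_sub_sq R (fun b => z a - z b)
  simp only [sub_sub_sub_cancel_left] at h
  rw [sum_comm, h]
  nlinarith [sq_nonneg ‖∑ b ∈ R, (z a - z b)‖]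

/-- Sub-Gaussian bound for `φ (∑ i ∈ A, z i)`, where `A` is a uniform `m`-subset of the `n + m`
points of `R` and `φ` is `L`-Lipschitz. The induction is on `m`, with `n` fixed. -/
lemma sum_exp_le {ι H : Type*} [NormedAddCommGroup H] [InnerProductSpace ℝ H]
    (z : ι → H) (n : ℕ) (hn : 1 ≤ n) (L : ℝ) (m : ℕ) :
    ∀ (R : Finset ι), #R = n + m → ∀ φ : H → ℝ, (∀ x y, |φ x - φ y| ≤ L * ‖x - y‖) →
      ∑ A ∈ powersetCard m R, Real.exp (φ (∑ i ∈ A, z i))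
        ≤ ((n + m).choose m : ℝ) * Real.exp
          ((∑ A ∈ powersetCard m R, φ (∑ i ∈ A, z i)) / ((n + m).choose m : ℝ)
            + L ^ 2 / 2 * ((2 - (n : ℝ) ^ 2 / ((n + m : ℕ) : ℝ) ^ 2)
              * ((∑ a ∈ R, ∑ b ∈ R, ‖z a - z b‖ ^ 2) / (2 * ((n + m : ℕ) : ℝ))))) := by
  induction m with
  | zero =>
    intro R hR φ hφ
    have : (n : ℝ) ≠ 0 := by positivity
    simp only [powersetCard_zero, sum_singleton, sum_empty, Nat.choose_zero_right, Nat.cast_one,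
      add_zero, div_one, one_mul]
    apply Real.exp_le_exp.2
    rw [div_self (by positivity)]
    have : 0 ≤ L ^ 2 / 2 * ((2 - 1) * ((∑ a ∈ R, ∑ b ∈ R, ‖z a - z b‖ ^ 2) / (2 * (n : ℝ)))) := by
      norm_num
      positivity
    linarith
  | succ m ih =>
    intro R hR φ hφ
    set D := ∑ a ∈ R, ∑ b ∈ R, ‖z a - z b‖ ^ 2 with hD
    set C : ℝ := ((n + m).choose m : ℝ) with hC
    have hC0 : 0 < C := by
      rw [hC]; exact_mod_cast Nat.choose_pos (Nat.le_add_left m n)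
    set s : ℝ := ((n + m : ℕ) : ℝ) with hs
    have hs1 : 1 ≤ s := by rw [hs]; exact_mod_cast (by omega)
    have hs0 : 0 < s := by linarith
    have hns : (n : ℝ) ≤ s := by rw [hs]; exact_mod_cast (by omega)
    have hn0 : (0 : ℝ) ≤ n := by positivity
    have hr : (#R : ℝ) = s + 1 := by rw [hR, hs]; push_cast; ring
    have hr' : ((n + (m + 1) : ℕ) : ℝ) = s + 1 := by rw [hs]; push_cast; ring
    have hm0 : (0 : ℝ) < (m : ℝ) + 1 := by positivity
    -- `C(r, m+1) (m+1) = r C(r-1, m)`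
    have hchoose : ((n + (m + 1)).choose (m + 1) : ℝ) * ((m : ℝ) + 1) = (s + 1) * C := by
      have := Nat.add_one_mul_choose_eq (n + m) m
      have h2 : ((n + m + 1 : ℕ) : ℝ) * ((n + m).choose m : ℝ)
        = ((n + m + 1).choose (m + 1) : ℝ) * ((m + 1 : ℕ) : ℝ) := by exact_mod_cast this
      rw [hs, hC]; push_cast at h2 ⊢; rw [← add_assoc]; linarith
    have hdouble : ∀ F : H → ℝ, ((m : ℝ) + 1) * ∑ A ∈ powersetCard (m + 1) R, F (∑ i ∈ A, z i)
        = ∑ a ∈ R, ∑ A ∈ powersetCard m (R.erase a), F (z a + ∑ i ∈ A, z i) := by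
      intro F
      rw [← sum_powersetCard_succ R m (fun a A => F (z a + ∑ i ∈ A, z i)), mul_sum]
      refine sum_congr rfl fun A hA => ?_
      have h : ∀ a ∈ A, F (z a + ∑ i ∈ A.erase a, z i) = F (∑ i ∈ A, z i) := fun a ha => by
        rw [add_sum_erase A z ha]
      rw [sum_congr rfl h, sum_const, (mem_powersetCard.1 hA).2, nsmul_eq_mul]
      push_cast; ring
    set g : ι → ℝ := fun a => (∑ A ∈ powersetCard m (R.erase a), φ (z a + ∑ i ∈ A, z i)) / C
      with hg
    set y : ι → ℝ := fun a => ∑ b ∈ R, ‖z a - z b‖ ^ 2 with hy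
    have hgdiff : ∀ a ∈ R, ∀ b ∈ R, (g a - g b) ^ 2 ≤ (L * n / s) ^ 2 * ‖z a - z b‖ ^ 2 := by
      intro a ha b hb
      by_cases hab : a = b
      · subst hab; simp
      have hswap := sum_powersetCard_swap z φ ((R.erase a).erase b) a b (by simp) (by simp) m
      rw [insert_erase (mem_erase.2 ⟨Ne.symm hab, hb⟩), erase_right_comm,
        insert_erase (mem_erase.2 ⟨hab, ha⟩)] at hswap
      have hcard : #(((R.erase b).erase a)) = n + m - 1 := by
        rw [card_erase_of_mem (mem_erase.2 ⟨hab, ha⟩), card_erase_of_mem hb, hR]; omega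
      have h1 : |C * (g a - g b)| ≤ ((n + m - 1).choose m : ℝ) * (L * ‖z a - z b‖) := by
        have : C * (g a - g b) = (∑ A ∈ powersetCard m (R.erase a), φ (z a + ∑ i ∈ A, z i))
            - ∑ A ∈ powersetCard m (R.erase b), φ (z b + ∑ i ∈ A, z i) := by
          simp only [hg]; field_simp
        rw [this, hswap]
        refine (abs_sum_le_sum_abs _ _).trans ?_
        rw [← hcard, ← card_powersetCard, ← nsmul_eq_mul]
        refine sum_le_card_nsmul _ _ _ fun A _ => ?_
        refine (hφ _ _).trans ?_
        rw [add_sub_add_right_eq_sub]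
      -- `C(r-2, m) / C(r-1, m) = n / (r-1)`
      have h2 : ((n + m - 1).choose m : ℝ) * s = C * n := by
        obtain ⟨n', rfl⟩ : ∃ n', n = n' + 1 := ⟨n - 1, by omega⟩
        have h := Nat.choose_mul_succ_eq (n' + m) m
        have e1 : n' + 1 + m - 1 = n' + m := by omega
        have e2 : n' + m + 1 - m = n' + 1 := by omega
        have e3 : n' + 1 + m = n' + m + 1 := by omega
        rw [e2] at h
        rw [hs, hC, e1, e3]
        exact_mod_cast h
      have h3 : ((n + m - 1).choose m : ℝ) = C * (n / s) := by
        field_simp; linarith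
      rw [h3, abs_mul, abs_of_pos hC0, mul_assoc] at h1
      have h4 := le_of_mul_le_mul_left h1 hC0
      calc (g a - g b) ^ 2 = |g a - g b| ^ 2 := (sq_abs _).symm
        _ ≤ (n / s * (L * ‖z a - z b‖)) ^ 2 := by gcongr
        _ = _ := by ring
    set q : ι → ℝ := fun a => L ^ 2 * ((2 - (n : ℝ) ^ 2 / (s + 1) ^ 2) * (D / (2 * (s + 1)))
      - (2 - (n : ℝ) ^ 2 / s ^ 2) * ((D - 2 * y a) / (2 * s))) with hq
    have hstep := sum_exp_sub_le R (s + 1) hr (by linarith) g y q ((L * n / s) ^ 2)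
      (fun a ha => by
        rw [hy, mul_sum]
        exact sum_le_sum fun b hb => hgdiff a ha b hb)
      (fun a ha => by
        have h1 : D ≤ 2 * ((s + 1) * y a) := by
          have := sum_sum_norm_sub_sq_le R z a
          rwa [hr] at this
        have h2 : 0 ≤ y a - D / (2 * (s + 1)) := by
          rw [sub_nonneg, div_le_iff₀ (by positivity)]; linarith
        have h3 : (n : ℝ) ^ 2 / s ^ 2 ≤ 1 := by
          rw [div_le_one (by positivity)]; gcongr
        have h4 : (n : ℝ) ^ 2 / (s + 1) ^ 2 ≤ 1 := by
          rw [div_le_one (by positivity)]; gcongr; linarith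
        have h5 : 0 ≤ L ^ 2 * ((2 - (n : ℝ) ^ 2 / s ^ 2 - (n : ℝ) ^ 2 / (s + 1) ^ 2) / s
            * (y a - D / (2 * (s + 1)))) := by
          apply mul_nonneg (sq_nonneg _)
          apply mul_nonneg _ h2
          apply div_nonneg _ hs0.le
          linarith
        -- the factor `2 - n² / r²` makes the slack a multiple of the nonnegative quantity in `h2`
        have h6 : q a - (L * n / s) ^ 2
              * ((s + 1 - 1) / (s + 1) ^ 2 * y a + (∑ b ∈ R, y b) / (2 * (s + 1) ^ 2))
            = L ^ 2 * ((2 - (n : ℝ) ^ 2 / s ^ 2 - (n : ℝ) ^ 2 / (s + 1) ^ 2) / s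
            * (y a - D / (2 * (s + 1)))) := by
          have : ∑ b ∈ R, y b = D := rfl
          rw [this]
          simp only [hq]
          field_simp
          ring
        linarith)
    have hmain : ((m : ℝ) + 1) * ∑ A ∈ powersetCard (m + 1) R, Real.exp (φ (∑ i ∈ A, z i))
        ≤ C * ((s + 1) * Real.exp ((∑ a ∈ R, g a) / (s + 1))) * Real.exp
          (L ^ 2 / 2 * ((2 - (n : ℝ) ^ 2 / (s + 1) ^ 2) * (D / (2 * (s + 1))))) := by
      rw [hdouble (fun x => Real.exp (φ x))]
      calc ∑ a ∈ R, ∑ A ∈ powersetCard m (R.erase a), Real.exp (φ (z a + ∑ i ∈ A, z i))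
          ≤ ∑ a ∈ R, C * Real.exp (g a - q a / 2) * Real.exp
            (L ^ 2 / 2 * ((2 - (n : ℝ) ^ 2 / (s + 1) ^ 2) * (D / (2 * (s + 1))))) := by
            refine sum_le_sum fun a ha => ?_
            have h := ih (R.erase a) (by rw [card_erase_of_mem ha, hR]; omega)
              (fun x => φ (z a + x)) (fun x y => by simpa using hφ (z a + x) (z a + y))
            refine h.trans (le_of_eq ?_)
            rw [mul_assoc, ← Real.exp_add,
              sum_sum_erase R (fun a b => ‖z a - z b‖ ^ 2) (by simp)
                (fun a b => by rw [norm_sub_rev]) a ha]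
            congr 2
            simp only [hg, hq]
            ring
        _ = C * (∑ a ∈ R, Real.exp (g a - q a / 2)) * Real.exp
            (L ^ 2 / 2 * ((2 - (n : ℝ) ^ 2 / (s + 1) ^ 2) * (D / (2 * (s + 1))))) := by
            rw [← sum_mul, ← mul_sum]
        _ ≤ _ := by gcongr
    have hgbar : (∑ A ∈ powersetCard (m + 1) R, φ (∑ i ∈ A, z i))
        / ((n + (m + 1)).choose (m + 1) : ℝ) = (∑ a ∈ R, g a) / (s + 1) := by
      have h1 := hdouble φ
      have h2 : ∑ a ∈ R, g a
          = (((m : ℝ) + 1) * ∑ A ∈ powersetCard (m + 1) R, φ (∑ i ∈ A, z i)) / C := by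
        rw [h1, sum_div]
      have h3 : ((n + (m + 1)).choose (m + 1) : ℝ) = (s + 1) * C / ((m : ℝ) + 1) := by
        field_simp; linarith
      rw [h2, h3]
      field_simp
    rw [hgbar, hr', Real.exp_add]
    refine le_of_mul_le_mul_left (hmain.trans (le_of_eq ?_)) hm0
    linear_combination (-(Real.exp ((∑ a ∈ R, g a) / (s + 1)) * Real.exp
          (L ^ 2 / 2 * ((2 - (n : ℝ) ^ 2 / (s + 1) ^ 2) * (D / (2 * (s + 1)))))) : ℝ) * hchoose

/-! ### Second moment and tail of a centred subset sum -/

lemma card_mul_sum_powersetCard {ι : Type*} (R : Finset ι) (m : ℕ) (h : ι → ℝ) :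
    (#R : ℝ) * ∑ A ∈ powersetCard m R, ∑ c ∈ A, h c
      = ((#R).choose m : ℝ) * m * ∑ c ∈ R, h c := by
  cases m with
  | zero => simp
  | succ m =>
    rcases R.eq_empty_or_nonempty with rfl | hR
    · simp
    obtain ⟨k, hk⟩ : ∃ k, #R = k + 1 := ⟨#R - 1, by have := hR.card_pos; omega⟩
    have h1 : ∑ A ∈ powersetCard (m + 1) R, ∑ c ∈ A, h c = (k.choose m : ℝ) * ∑ c ∈ R, h c := by
      rw [sum_powersetCard_succ R m (fun a _ => h a), mul_sum]
      refine sum_congr rfl fun a ha => ?_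
      rw [sum_const, card_powersetCard, card_erase_of_mem ha, hk, nsmul_eq_mul]
      rfl
    have h2 : ((k + 1 : ℕ) : ℝ) * (k.choose m : ℝ)
        = ((k + 1).choose (m + 1) : ℝ) * ((m + 1 : ℕ) : ℝ) := by
      exact_mod_cast Nat.add_one_mul_choose_eq k m
    rw [h1, hk, ← mul_assoc, h2]

/-- Second moment of a subset sum of a centred family: `E ‖∑_A u‖² = m n / (s (s - 1)) ∑ ‖u i‖²` with
`s = n + m`. -/
lemma sum_norm_sq_powersetCard {ι H : Type*} [NormedAddCommGroup H] [InnerProductSpace ℝ H]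
    (u : ι → H) (R : Finset ι) (n m : ℕ) (hR : #R = n + m) (hm : 1 ≤ m) (hu : ∑ i ∈ R, u i = 0) :
    ((n + m : ℕ) : ℝ) * (((n + m : ℕ) : ℝ) - 1) * ∑ A ∈ powersetCard m R, ‖∑ i ∈ A, u i‖ ^ 2
      = ((n + m).choose m : ℝ) * (m * n) * ∑ i ∈ R, ‖u i‖ ^ 2 := by
  obtain ⟨m, rfl⟩ : ∃ k, m = k + 1 := ⟨m - 1, by omega⟩
  have h1 : ∀ A ∈ powersetCard (m + 1) R, ‖∑ i ∈ A, u i‖ ^ 2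
      = ∑ a ∈ A, (‖u a‖ ^ 2 + ∑ c ∈ A.erase a, inner ℝ (u a) (u c)) := by
    intro A _
    rw [← real_inner_self_eq_norm_sq, sum_inner]
    refine sum_congr rfl fun a ha => ?_
    rw [inner_sum, ← add_sum_erase A _ ha, real_inner_self_eq_norm_sq]
  rw [sum_congr rfl h1, sum_powersetCard_succ R m
    (fun a A => ‖u a‖ ^ 2 + ∑ c ∈ A, inner ℝ (u a) (u c))]
  have hs : (((n + (m + 1) : ℕ) : ℝ) - 1) = ((n + m : ℕ) : ℝ) := by push_cast; ring
  have h2 : ∀ a ∈ R, ((n + m : ℕ) : ℝ) * ∑ A ∈ powersetCard m (R.erase a),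
      (‖u a‖ ^ 2 + ∑ c ∈ A, inner ℝ (u a) (u c)) = ((n + m).choose m : ℝ) * n * ‖u a‖ ^ 2 := by
    intro a ha
    have hc : #(R.erase a) = n + m := by rw [card_erase_of_mem ha, hR]; rfl
    have h3 := card_mul_sum_powersetCard (R.erase a) m (fun c => inner ℝ (u a) (u c))
    have h4 : ∑ c ∈ R.erase a, inner ℝ (u a) (u c) = - ‖u a‖ ^ 2 := by
      rw [← inner_sum, ← add_right_inj (inner ℝ (u a) (u a)), ← inner_add_right,
        add_sum_erase R u ha, hu, real_inner_self_eq_norm_sq]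
      simp
    rw [hc, h4] at h3
    rw [sum_add_distrib, mul_add, h3, sum_const, card_powersetCard, hc, nsmul_eq_mul]
    push_cast
    ring
  rw [hs, mul_assoc, mul_sum, sum_congr rfl h2, ← mul_sum]
  have h5 : ((n + m + 1 : ℕ) : ℝ) * ((n + m).choose m : ℝ)
      = ((n + m + 1).choose (m + 1) : ℝ) * ((m + 1 : ℕ) : ℝ) := by
    exact_mod_cast Nat.add_one_mul_choose_eq (n + m) m
  rw [← add_assoc]
  linear_combination (n * ∑ i ∈ R, ‖u i‖ ^ 2) * h5

lemma card_tail_le {ι H : Type*} [NormedAddCommGroup H] [InnerProductSpace ℝ H]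
    (u : ι → H) (R : Finset ι) (n m : ℕ) (hR : #R = n + m) (hn : 1 ≤ n) (hm : 1 ≤ m)
    (hu : ∑ i ∈ R, u i = 0) (σ : ℝ) (hσ : 0 < σ)
    (hD : ∑ a ∈ R, ∑ b ∈ R, ‖u a - u b‖ ^ 2
      ≤ ((n + m : ℕ) : ℝ) * (((n + m : ℕ) : ℝ) - 1) * σ)
    (τ : ℝ) (hτ : 0 ≤ τ) :
    (#{A ∈ powersetCard m R | τ + Real.sqrt (σ * (m * n) / (2 * ((n + m : ℕ) : ℝ)))
        ≤ ‖∑ i ∈ A, u i‖} : ℝ)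
      ≤ ((n + m).choose m : ℝ) * Real.exp (-(τ ^ 2 / (2 * ((n + m : ℕ) : ℝ) * σ))) := by
  set s : ℝ := ((n + m : ℕ) : ℝ) with hs
  set C : ℝ := ((n + m).choose m : ℝ) with hC
  set D := ∑ a ∈ R, ∑ b ∈ R, ‖u a - u b‖ ^ 2 with hDdef
  have hC0 : 0 < C := by
    rw [hC]; exact_mod_cast Nat.choose_pos (Nat.le_add_left m n)
  have hs2 : 2 ≤ s := by rw [hs]; exact_mod_cast (by omega)
  have hcard : (#(powersetCard m R) : ℝ) = C := by rw [card_powersetCard, hR]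
  have hDQ : D = 2 * (s * ∑ i ∈ R, ‖u i‖ ^ 2) := by
    rw [hDdef, sum_sum_norm_sub_sq, hu, hR]; simp [hs]
  -- the mean of the statistic is bounded by the root of its second moment
  have hmean : (∑ A ∈ powersetCard m R, ‖∑ i ∈ A, u i‖) / C
      ≤ Real.sqrt (σ * (m * n) / (2 * s)) := by
    apply Real.le_sqrt_of_sq_le
    have h1 := sq_sum_le_card_mul_sum_sq (s := powersetCard m R) (f := fun A => ‖∑ i ∈ A, u i‖)
    rw [hcard] at h1
    have h2 := sum_norm_sq_powersetCard u R n m hR hm hu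
    rw [← hs, ← hC] at h2
    have hQ : ∑ i ∈ R, ‖u i‖ ^ 2 ≤ (s - 1) * σ / 2 := by nlinarith
    have h3 : s * (s - 1) * ∑ A ∈ powersetCard m R, ‖∑ i ∈ A, u i‖ ^ 2
        ≤ C * (m * n) * ((s - 1) * σ / 2) := by
      rw [h2]; gcongr
    have h4 : ∑ A ∈ powersetCard m R, ‖∑ i ∈ A, u i‖ ^ 2 ≤ C * (σ * (m * n) / (2 * s)) := by
      have hp : 0 < s * (s - 1) := by nlinarith
      refine le_of_mul_le_mul_left (h3.trans (le_of_eq ?_)) hp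
      field_simp
    rw [div_pow, div_le_iff₀ (by positivity)]
    calc _ ≤ C * ∑ A ∈ powersetCard m R, ‖∑ i ∈ A, u i‖ ^ 2 := h1
      _ ≤ C * (C * (σ * (m * n) / (2 * s))) := by gcongr
      _ = _ := by ring
  -- `l` minimizes `-l τ + l² s σ / 2`
  set l := τ / (s * σ) with hl
  have hl0 : 0 ≤ l := by positivity
  have hmgf := sum_exp_le u n hn l m R hR (fun x => l * ‖x‖) (fun x y => by
    rw [← mul_sub, abs_mul, abs_of_nonneg hl0]
    gcongr
    exact abs_norm_sub_norm_le x y)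
  rw [← hs, ← hC, ← hDdef, ← mul_sum, mul_div_assoc] at hmgf
  set μ := Real.sqrt (σ * (m * n) / (2 * s)) with hμ
  have hexp : l * ((∑ A ∈ powersetCard m R, ‖∑ i ∈ A, u i‖) / C)
      + l ^ 2 / 2 * ((2 - (n : ℝ) ^ 2 / s ^ 2) * (D / (2 * s)))
      ≤ l * (τ + μ) + -(τ ^ 2 / (2 * s * σ)) := by
    have h1 : D / (2 * s) ≤ s * σ / 2 := by
      rw [div_le_iff₀ (by positivity)]
      nlinarith
    have h2 : 0 ≤ D / (2 * s) := by positivity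
    have h3 : (2 - (n : ℝ) ^ 2 / s ^ 2) * (D / (2 * s)) ≤ 2 * (s * σ / 2) := by
      have : (0 : ℝ) ≤ (n : ℝ) ^ 2 / s ^ 2 := by positivity
      nlinarith
    have h4 : l ^ 2 / 2 * ((2 - (n : ℝ) ^ 2 / s ^ 2) * (D / (2 * s)))
        ≤ l ^ 2 / 2 * (2 * (s * σ / 2)) := by gcongr
    have h5 : l ^ 2 / 2 * (2 * (s * σ / 2)) = l * τ + -(τ ^ 2 / (2 * s * σ)) := by
      rw [hl]; field_simp; ring
    have h6 := mul_le_mul_of_nonneg_left hmean hl0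
    linarith
  have hmarkov : (#{A ∈ powersetCard m R | τ + μ ≤ ‖∑ i ∈ A, u i‖} : ℝ)
      * Real.exp (l * (τ + μ)) ≤ ∑ A ∈ powersetCard m R, Real.exp (l * ‖∑ i ∈ A, u i‖) := by
    rw [← nsmul_eq_mul]
    refine (card_nsmul_le_sum _ (fun A => Real.exp (l * ‖∑ i ∈ A, u i‖)) _ ?_).trans
      (sum_le_sum_of_subset_of_nonneg (filter_subset _ _) fun _ _ _ => (Real.exp_pos _).le)
    intro A hA
    have := (mem_filter.1 hA).2
    exact Real.exp_le_exp.2 (by gcongr)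
  have hfin := hmarkov.trans (hmgf.trans (mul_le_mul_of_nonneg_left (Real.exp_le_exp.2 hexp) hC0.le))
  rw [add_comm (l * (τ + μ)), Real.exp_add, ← mul_assoc] at hfin
  exact le_of_mul_le_mul_right hfin (Real.exp_pos _)

/-! ### From subsets to permutations -/

lemma exists_perm_map {ι : Type*} [Fintype ι] (I A J : Finset ι) (hI : I ⊆ J) (hA : A ⊆ J)
    (h : #I = #A) : ∃ τ : Equiv.Perm ι, I.map τ.toEmbedding = A ∧ J.map τ.toEmbedding = J := by
  have hc : Fintype.card {x : J // (x : ι) ∈ I} = Fintype.card {x : J // (x : ι) ∈ A} := by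
    have key : ∀ B : Finset ι, B ⊆ J → Fintype.card {x : J // (x : ι) ∈ B} = #B := by
      intro B hB
      rw [← Fintype.card_coe]
      exact Fintype.card_congr
        ⟨fun x => ⟨x.1.1, x.2⟩, fun x => ⟨⟨x.1, hB x.2⟩, x.2⟩, fun _ => rfl, fun _ => rfl⟩
    rw [key I hI, key A hA, h]
  let e := Fintype.equivOfCardEq hc
  let τ' : Equiv.Perm {x // x ∈ J} := e.extendSubtype
  let τ : Equiv.Perm ι := Equiv.Perm.ofSubtype τ'
  have hτ : ∀ x (hx : x ∈ J), τ x = τ' ⟨x, hx⟩ := fun x hx =>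
    Equiv.Perm.ofSubtype_apply_of_mem τ' hx
  refine ⟨τ, ?_, ?_⟩
  · refine eq_of_subset_of_card_le ?_ (by rw [card_map, h])
    intro y hy
    obtain ⟨x, hx, rfl⟩ := mem_map.1 hy
    change τ x ∈ A
    rw [hτ x (hI hx)]
    exact e.extendSubtype_mem ⟨x, hI hx⟩ hx
  · refine eq_of_subset_of_card_le ?_ (by rw [card_map])
    intro y hy
    obtain ⟨x, hx, rfl⟩ := mem_map.1 hy
    change τ x ∈ J
    rw [hτ x hx]
    exact (τ' ⟨x, hx⟩).2

/-- Conditioning step: if a uniform `#I`-subset `A` of `J` satisfies `P b A` with probability at most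
`M` for every `b`, then `P b I` has probability at most `M` for uniform `b`. Each `A` is the image
of `I` under some `τ` preserving `J`, and `b ↦ b * τ` is a bijection. -/
lemma card_perm_le {ι : Type*} [Fintype ι] (I J : Finset ι) (hI : I ⊆ J)
    (P : Equiv.Perm ι → Finset ι → Prop)
    (hP : ∀ b τ, J.map τ.toEmbedding = J → (P (b * τ) I ↔ P b (I.map τ.toEmbedding)))
    (M : ℝ)
    (h : ∀ b, (#{A ∈ powersetCard #I J | P b A} : ℝ) ≤ ((#J).choose #I : ℝ) * M) :
    (#{b : Equiv.Perm ι | P b I} : ℝ) ≤ ((Fintype.card ι).factorial : ℝ) * M := by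
  have hC0 : (0 : ℝ) < ((#J).choose #I : ℝ) := by
    exact_mod_cast Nat.choose_pos (card_le_card hI)
  have h1 : ∀ A ∈ powersetCard #I J, #{b : Equiv.Perm ι | P b A} = #{b : Equiv.Perm ι | P b I} := by
    intro A hA
    obtain ⟨hAJ, hAc⟩ := mem_powersetCard.1 hA
    obtain ⟨τ, h1, h2⟩ := exists_perm_map I A J hI hAJ hAc.symm
    refine card_bij (fun b _ => b * τ) ?_ ?_ ?_
    · intro b hb
      simp only [mem_filter, mem_univ, true_and] at hb ⊢
      rwa [hP b τ h2, h1]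
    · intro b _ b' _ hbb
      exact mul_right_cancel hbb
    · intro b hb
      simp only [mem_filter, mem_univ, true_and] at hb
      refine ⟨b * τ⁻¹, ?_, by simp⟩
      simp only [mem_filter, mem_univ, true_and]
      rw [← h1, ← hP _ τ h2]
      simpa using hb
  have h2 : ∑ A ∈ powersetCard #I J, #{b : Equiv.Perm ι | P b A}
      = ∑ b : Equiv.Perm ι, #{A ∈ powersetCard #I J | P b A} := by
    simp only [card_filter]
    exact sum_comm
  rw [sum_congr rfl h1, sum_const, card_powersetCard, smul_eq_mul] at h2
  have h3 : ((#J).choose #I : ℝ) * (#{b : Equiv.Perm ι | P b I} : ℝ)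
      = ∑ b : Equiv.Perm ι, (#{A ∈ powersetCard #I J | P b A} : ℝ) := by exact_mod_cast h2
  have h4 : ∑ b : Equiv.Perm ι, (#{A ∈ powersetCard #I J | P b A} : ℝ)
      ≤ ((Fintype.card ι).factorial : ℝ) * (((#J).choose #I : ℝ) * M) := by
    refine (sum_le_card_nsmul _ _ _ fun b _ => h b).trans (le_of_eq ?_)
    rw [card_univ, Fintype.card_perm, nsmul_eq_mul]
  refine le_of_mul_le_mul_left ?_ hC0
  rw [h3]
  linarith

/-- Tail bound for the two-sample statistic of the disjoint blocks of positions `I` and `I'`. -/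
lemma pair_tail {ι H : Type*} [Fintype ι] [NormedAddCommGroup H] [InnerProductSpace ℝ H]
    (z : ι → H) (I I' : Finset ι) (hd : Disjoint I I') (m n : ℕ) (hI : #I = m) (hI' : #I' = n)
    (hm : 1 ≤ m) (hn : 1 ≤ n) (σ : ℝ) (hσ : 0 < σ)
    (hD : ∀ S : Finset ι, #S = m + n → ∑ a ∈ S, ∑ b ∈ S, ‖z a - z b‖ ^ 2
      ≤ ((m : ℝ) + n) * (((m : ℝ) + n) - 1) * σ)
    (t : ℝ) (ht : 0 ≤ t) :
    (#{b : Equiv.Perm ι | t + Real.sqrt (σ * ((m : ℝ) + n) / (2 * (m * n)))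
        ≤ ‖(m : ℝ)⁻¹ • ∑ i ∈ I, z (b i) - (n : ℝ)⁻¹ • ∑ i ∈ I', z (b i)‖} : ℝ)
      ≤ ((Fintype.card ι).factorial : ℝ)
        * Real.exp (-(((m : ℝ) * n) ^ 2 * t ^ 2 / (2 * ((m : ℝ) + n) ^ 3 * σ))) := by
  have hm0 : (0 : ℝ) < m := by exact_mod_cast hm
  have hn0 : (0 : ℝ) < n := by exact_mod_cast hn
  set J := I ∪ I' with hJ
  have hJc : #J = n + m := by rw [hJ, card_union_of_disjoint hd, hI, hI', add_comm]
  have hJI : J \ I = I' := by rw [hJ, union_sdiff_cancel_left hd]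
  have hs : ((n + m : ℕ) : ℝ) = m + n := by push_cast; ring
  have key := card_perm_le I J subset_union_left
    (fun b A => t + Real.sqrt (σ * ((m : ℝ) + n) / (2 * (m * n)))
        ≤ ‖(m : ℝ)⁻¹ • ∑ i ∈ A, z (b i) - (n : ℝ)⁻¹ • ∑ i ∈ J \ A, z (b i)‖)
    (fun b τ hτ => by
      have h1 : J \ I.map τ.toEmbedding = (J \ I).map τ.toEmbedding := by
        conv_lhs => rw [← hτ]
        ext x
        simp only [mem_sdiff, mem_map_equiv]
      rw [h1, sum_map, sum_map]
      simp)
    (Real.exp (-(((m : ℝ) * n) ^ 2 * t ^ 2 / (2 * ((m : ℝ) + n) ^ 3 * σ))))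
    (fun b => by
      -- centring turns the two-sample statistic into a multiple of the norm of a subset sum
      set c : H := ((m : ℝ) + n)⁻¹ • ∑ i ∈ J, z (b i) with hc
      set u : ι → H := fun i => z (b i) - c with hu
      have hu0 : ∑ i ∈ J, u i = 0 := by
        simp only [hu]
        rw [sum_sub_distrib, sum_const, hJc, ← Nat.cast_smul_eq_nsmul ℝ, hs, hc, smul_smul,
          mul_inv_cancel₀ (by positivity), one_smul, sub_self]
      have hDu : ∑ a ∈ J, ∑ b ∈ J, ‖u a - u b‖ ^ 2
          ≤ ((n + m : ℕ) : ℝ) * (((n + m : ℕ) : ℝ) - 1) * σ := by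
        have h := hD (J.map b.toEmbedding) (by rw [card_map, hJc, add_comm])
        simp only [sum_map] at h
        rw [hs]
        simpa [hu] using h
      have htail := card_tail_le u J n m hJc hn hm hu0 σ hσ hDu
        (m * n / (m + n) * t) (by positivity)
      rw [hI, hJc]
      have hexp : ((m : ℝ) * n / (m + n) * t) ^ 2 / (2 * ((n + m : ℕ) : ℝ) * σ)
          = ((m : ℝ) * n) ^ 2 * t ^ 2 / (2 * ((m : ℝ) + n) ^ 3 * σ) := by
        rw [hs]; field_simp
      rw [hexp] at htail
      refine le_trans (Nat.cast_le.2 (card_le_card ?_)) htail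
      intro A hA
      simp only [mem_filter] at hA ⊢
      refine ⟨hA.1, ?_⟩
      obtain ⟨hAJ, hAc⟩ := mem_powersetCard.1 hA.1
      have hw : (m : ℝ)⁻¹ • ∑ i ∈ A, z (b i) - (n : ℝ)⁻¹ • ∑ i ∈ J \ A, z (b i)
          = (((m : ℝ) + n) / (m * n)) • ∑ i ∈ A, u i := by
        have h1 : ∑ i ∈ J \ A, u i = - ∑ i ∈ A, u i := by
          rw [eq_neg_iff_add_eq_zero, sum_sdiff hAJ, hu0]
        have h2 : ∑ i ∈ A, z (b i) = ∑ i ∈ A, u i + (m : ℝ) • c := by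
          simp only [hu]
          rw [sum_sub_distrib, sum_const, hAc, ← Nat.cast_smul_eq_nsmul ℝ, sub_add_cancel]
        have h3 : ∑ i ∈ J \ A, z (b i) = ∑ i ∈ J \ A, u i + (n : ℝ) • c := by
          simp only [hu]
          rw [sum_sub_distrib, sum_const, card_sdiff_of_subset hAJ, hJc, hAc, Nat.add_sub_cancel,
            ← Nat.cast_smul_eq_nsmul ℝ, sub_add_cancel]
        rw [h2, h3, h1, smul_add, smul_add, inv_smul_smul₀ hm0.ne', inv_smul_smul₀ hn0.ne', smul_neg, add_sub_add_right_eq_sub, sub_neg_eq_add, ← add_smul]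
        congr 1
        field_simp
        ring
      have h2 := hA.2
      rw [hw, norm_smul, Real.norm_of_nonneg (by positivity)] at h2
      have hsq : Real.sqrt (σ * (m * n) / (2 * ((n + m : ℕ) : ℝ)))
          = (m * n / (m + n)) * Real.sqrt (σ * ((m : ℝ) + n) / (2 * (m * n))) := by
        rw [hs, ← Real.sqrt_sq (show (0 : ℝ) ≤ m * n / (m + n) by positivity),
          ← Real.sqrt_mul (by positivity)]
        congr 1
        field_simp
      rw [hsq, ← mul_add]
      calc _ ≤ (m * n / (m + n) : ℝ) * (((m : ℝ) + n) / (m * n) * ‖∑ i ∈ A, u i‖) := by gcongr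
        _ = _ := by field_simp)
  rwa [hJI] at key

/-! ### The union bound -/

lemma card_lt_pairs (K : ℕ) (hK : 2 ≤ K) :
    (#((univ : Finset (Fin K × Fin K)).filter (fun p => p.1 < p.2)) : ℝ)
      = (K : ℝ) * ((K : ℝ) - 1) / 2 := by
  set E : Finset (Fin K × Fin K) := univ.filter (fun p => p.1 < p.2) with hE
  have h1 : #E = ∑ l : Fin K, (l : ℕ) := by
    simp only [hE, card_filter]
    rw [← univ_product_univ, sum_product_right]
    refine sum_congr rfl fun l _ => ?_
    rw [← card_filter, ← Fin.card_Iio l]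
    congr 1
    ext x
    simp
  have h2 : #E * 2 = K * (K - 1) := by
    rw [h1, Fin.sum_univ_eq_sum_range (fun i => i), sum_range_id_mul_two]
  have h3 : (#E : ℝ) * 2 = (K : ℝ) * ((K - 1 : ℕ) : ℝ) := by exact_mod_cast h2
  rw [Nat.cast_sub (by omega), Nat.cast_one] at h3
  linarith

/-- Concentration inequality for the permuted K-sample max-MMD statistic. -/
theorem stmt4 {H : Type*} [NormedAddCommGroup H] [InnerProductSpace ℝ H]
    (K : ℕ) (hK : 2 ≤ K) (n : Fin K → ℕ) (hn : ∀ k, 1 ≤ n k)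
    (N : ℕ) (hN : N = ∑ k, n k)
    (z : Fin N → H)
    (e : (k : Fin K) → Fin (n k) → Fin N)
    (he : ∀ k i, (e k i : ℕ) = (∑ k' ∈ univ.filter (fun k' => k' < k), n k') + i)
    (γ : Fin K → Fin K → ℝ)
    (hγ : ∀ k l, γ k l = ((n k : ℝ) * n l) / ((n k : ℝ) + n l) ^ 2)
    (V : Fin K → Fin K → Equiv.Perm (Fin N) → ℝ)
    (hV : ∀ k l b, V k l b =
      ‖(n k : ℝ)⁻¹ • ∑ i, z (b (e k i)) - (n l : ℝ)⁻¹ • ∑ j, z (b (e l j))‖)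
    (Vmax : Equiv.Perm (Fin N) → ℝ)
    (hVmax : ∀ b, Vmax b = sSup {x | ∃ k l, k < l ∧ x = V k l b})
    (σbar : Fin K → Fin K → ℝ)
    -- the average of the largest `(n k + n l)(n k + n l − 1)` of the `N(N−1)` values
    -- `‖z i − z j‖²` (i ≠ j), expressed via the maximum of sums over subsets of that size
    (hσbar : ∀ k l, σbar k l = (1 / ((n k + n l : ℕ) * ((n k + n l : ℕ) - 1) : ℝ)) *
      sSup {s | ∃ T : Finset (Fin N × Fin N), T ⊆ univ.offDiag ∧
        T.card = (n k + n l) * (n k + n l - 1) ∧ s = ∑ p ∈ T, ‖z p.1 - z p.2‖ ^ 2})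
    (σ2K : ℝ) (hσ2K : σ2K = sSup {x | ∃ k l, k < l ∧ x = σbar k l})
    (hσpos : 0 < σ2K)
    (t : ℝ) (ht : 0 ≤ t) :
    (((univ : Finset (Equiv.Perm (Fin N))).filter (fun b =>
        t + sSup {x | ∃ k l, k < l ∧
          x = Real.sqrt (σ2K / (2 * ((n k : ℝ) + n l) * γ k l))} ≤ Vmax b)).card : ℝ)
      / (N.factorial : ℝ)
    ≤ ((K : ℝ) * ((K : ℝ) - 1) / 2) *
      Real.exp (- sInf {x | ∃ k l, k < l ∧
        x = (((n k : ℝ) + n l) * (γ k l) ^ 2 * t ^ 2) / (2 * σ2K)}) := by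
  have hnpos : ∀ k, (0 : ℝ) < n k := fun k => by exact_mod_cast hn k
  have hfin : ∀ F : Fin K → Fin K → ℝ, {x | ∃ k l, k < l ∧ x = F k l}.Finite := fun F =>
    (Set.finite_range (fun p : Fin K × Fin K => F p.1 p.2)).subset
      (by rintro x ⟨k, l, _, rfl⟩; exact ⟨(k, l), rfl⟩)
  have hne : ∀ F : Fin K → Fin K → ℝ, {x | ∃ k l, k < l ∧ x = F k l}.Nonempty := fun F =>
    ⟨_, ⟨0, by omega⟩, ⟨1, by omega⟩, Fin.mk_lt_mk.2 Nat.zero_lt_one, rfl⟩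
  -- the blocks of positions are pairwise disjoint
  have hinj : ∀ k, Function.Injective (e k) := fun k i j hij => by
    have h := congrArg Fin.val hij
    rw [he, he] at h
    exact Fin.ext (by omega)
  let I : Fin K → Finset (Fin N) := fun k => univ.map ⟨e k, hinj k⟩
  have hIcard : ∀ k, #(I k) = n k := fun k => by simp [I]
  have hIsum : ∀ k (f : Fin N → H), ∑ x ∈ I k, f x = ∑ i, f (e k i) := fun k f => by simp [I]
  have hdisj : ∀ k l, k < l → Disjoint (I k) (I l) := by
    intro k l hkl
    rw [disjoint_left]
    intro x hx hx'
    simp only [I, mem_map, mem_univ, true_and, Function.Embedding.coeFn_mk] at hx hx'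
    obtain ⟨i, rfl⟩ := hx
    obtain ⟨j, hj⟩ := hx'
    have h := congrArg Fin.val hj
    rw [he, he] at h
    have hle : n k + ∑ k' ∈ univ.filter (fun k' => k' < k), n k'
        ≤ ∑ k' ∈ univ.filter (fun k' => k' < l), n k' := by
      rw [← sum_insert (by simp)]
      apply sum_le_sum_of_subset
      intro x hx
      simp only [mem_insert, mem_filter, mem_univ, true_and] at hx ⊢
      rcases hx with rfl | hx
      · exact hkl
      · exact hx.trans hkl
    have := i.2
    omega
  have hDS : ∀ k l, k < l → ∀ S : Finset (Fin N), #S = n k + n l →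
      ∑ a ∈ S, ∑ b ∈ S, ‖z a - z b‖ ^ 2 ≤ ((n k : ℝ) + n l) * (((n k : ℝ) + n l) - 1) * σ2K := by
    intro k l hkl S hS
    have h1 : σbar k l ≤ σ2K := by
      rw [hσ2K]
      exact le_csSup (hfin σbar).bddAbove ⟨k, l, hkl, rfl⟩
    have h2 : ∑ p ∈ S.offDiag, ‖z p.1 - z p.2‖ ^ 2 = ∑ a ∈ S, ∑ b ∈ S, ‖z a - z b‖ ^ 2 := by
      rw [← sum_product', ← diag_union_offDiag, sum_union (disjoint_diag_offDiag S)]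
      simp
    have h3 : ∑ p ∈ S.offDiag, ‖z p.1 - z p.2‖ ^ 2 ≤
        sSup {s | ∃ T : Finset (Fin N × Fin N), T ⊆ univ.offDiag ∧
        T.card = (n k + n l) * (n k + n l - 1) ∧ s = ∑ p ∈ T, ‖z p.1 - z p.2‖ ^ 2} := by
      apply le_csSup
      · refine ((Set.finite_range (fun T : Finset (Fin N × Fin N) =>
          ∑ p ∈ T, ‖z p.1 - z p.2‖ ^ 2)).subset ?_).bddAbove
        rintro x ⟨T, _, _, rfl⟩
        exact ⟨T, rfl⟩
      · refine ⟨S.offDiag, offDiag_mono (subset_univ S), ?_, rfl⟩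
        rw [offDiag_card, hS, Nat.mul_sub_one]
    rw [hσbar] at h1
    have h1k : (1 : ℝ) ≤ n k := by exact_mod_cast hn k
    have h1l : (1 : ℝ) ≤ n l := by exact_mod_cast hn l
    have hp : (0 : ℝ) < ((n k : ℝ) + n l) * (((n k : ℝ) + n l) - 1) := by
      apply mul_pos <;> linarith
    rw [h2] at h3
    rw [Nat.cast_add, one_div, inv_mul_le_iff₀ hp] at h1
    exact h3.trans h1
  set X := sInf {x | ∃ k l, k < l ∧
        x = (((n k : ℝ) + n l) * (γ k l) ^ 2 * t ^ 2) / (2 * σ2K)} with hX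
  set Y := sSup {x | ∃ k l, k < l ∧
          x = Real.sqrt (σ2K / (2 * ((n k : ℝ) + n l) * γ k l))} with hY
  have hpair : ∀ k l, k < l → (#{b : Equiv.Perm (Fin N) | t + Y ≤ V k l b} : ℝ)
      ≤ (N.factorial : ℝ) * Real.exp (-X) := by
    intro k l hkl
    have hk := hnpos k
    have hl := hnpos l
    have htail : (#{b : Equiv.Perm (Fin N) |
          t + Real.sqrt (σ2K * ((n k : ℝ) + n l) / (2 * (n k * n l)))
          ≤ ‖(n k : ℝ)⁻¹ • ∑ i ∈ I k, z (b i) - (n l : ℝ)⁻¹ • ∑ i ∈ I l, z (b i)‖} : ℝ)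
        ≤ (N.factorial : ℝ)
          * Real.exp (-(((n k : ℝ) * n l) ^ 2 * t ^ 2 / (2 * ((n k : ℝ) + n l) ^ 3 * σ2K))) := by
      have h := pair_tail z (I k) (I l) (hdisj k l hkl) (n k) (n l) (hIcard k) (hIcard l)
        (hn k) (hn l) σ2K hσpos (hDS k l hkl) t ht
      rw [Fintype.card_fin] at h
      -- the two sides only differ in the decidability instances behind `Fintype (Perm _)`
      convert h
    have hsub : (#{b : Equiv.Perm (Fin N) | t + Y ≤ V k l b} : ℝ)
        ≤ (#{b : Equiv.Perm (Fin N) |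
          t + Real.sqrt (σ2K * ((n k : ℝ) + n l) / (2 * (n k * n l)))
          ≤ ‖(n k : ℝ)⁻¹ • ∑ i ∈ I k, z (b i) - (n l : ℝ)⁻¹ • ∑ i ∈ I l, z (b i)‖} : ℝ) := by
      refine Nat.cast_le.2 (card_le_card ?_)
      intro b hb
      simp only [mem_filter, mem_univ, true_and] at hb ⊢
      rw [hIsum k (fun x => z (b x)), hIsum l (fun x => z (b x)), ← hV]
      refine le_trans ?_ hb
      have h1 : Real.sqrt (σ2K / (2 * ((n k : ℝ) + n l) * γ k l)) ≤ Y :=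
        le_csSup (hfin (fun k l => Real.sqrt (σ2K / (2 * ((n k : ℝ) + n l) * γ k l)))).bddAbove
          ⟨k, l, hkl, rfl⟩
      have h2 : σ2K / (2 * ((n k : ℝ) + n l) * γ k l)
          = σ2K * ((n k : ℝ) + n l) / (2 * (n k * n l)) := by
        rw [hγ]; field_simp
      rw [h2] at h1
      linarith
    refine hsub.trans (htail.trans (mul_le_mul_of_nonneg_left
      (Real.exp_le_exp.2 (neg_le_neg ?_)) (Nat.cast_nonneg _)))
    have h1 : X ≤ (((n k : ℝ) + n l) * (γ k l) ^ 2 * t ^ 2) / (2 * σ2K) :=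
      csInf_le (hfin (fun k l => (((n k : ℝ) + n l) * (γ k l) ^ 2 * t ^ 2) / (2 * σ2K))).bddBelow
        ⟨k, l, hkl, rfl⟩
    have h2 : (((n k : ℝ) + n l) * (γ k l) ^ 2 * t ^ 2) / (2 * σ2K)
        = ((n k : ℝ) * n l) ^ 2 * t ^ 2 / (2 * ((n k : ℝ) + n l) ^ 3 * σ2K) := by
      rw [hγ]; field_simp
    rwa [h2] at h1
  let E : Finset (Fin K × Fin K) := univ.filter (fun p => p.1 < p.2)
  have hE : (#E : ℝ) = (K : ℝ) * ((K : ℝ) - 1) / 2 := card_lt_pairs K hK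
  have hunion : (univ : Finset (Equiv.Perm (Fin N))).filter (fun b => t + Y ≤ Vmax b)
      ⊆ E.biUnion (fun p => univ.filter (fun b => t + Y ≤ V p.1 p.2 b)) := by
    intro b hb
    simp only [mem_filter, mem_univ, true_and] at hb
    rw [hVmax] at hb
    obtain ⟨k, l, hkl, hV'⟩ := (hne (fun k l => V k l b)).csSup_mem (hfin (fun k l => V k l b))
    rw [hV'] at hb
    simp only [mem_biUnion, mem_filter, mem_univ, true_and, E]
    exact ⟨(k, l), hkl, hb⟩
  have hcount : (#((univ : Finset (Equiv.Perm (Fin N))).filter (fun b => t + Y ≤ Vmax b)) : ℝ)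
      ≤ (#E : ℝ) * ((N.factorial : ℝ) * Real.exp (-X)) := by
    have h1 : (#((univ : Finset (Equiv.Perm (Fin N))).filter (fun b => t + Y ≤ Vmax b)) : ℝ)
        ≤ ∑ p ∈ E, (#{b : Equiv.Perm (Fin N) | t + Y ≤ V p.1 p.2 b} : ℝ) := by
      exact_mod_cast (card_le_card hunion).trans card_biUnion_le
    refine h1.trans ?_
    rw [← nsmul_eq_mul]
    exact sum_le_card_nsmul _ _ _ fun p hp => hpair p.1 p.2 (mem_filter.1 hp).2
  rw [div_le_iff₀ (by positivity), ← hE]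
  linarith
end

section
/- Let z_1,…,z_N ∈ H be grouped into K consecutive blocks of sizes n_1,…,n_K with N = ∑_k n_k, let V̂_max^{(b)} denote the maximum over pairs 1 ≤ k < l ≤ K of the pairwise statistics V̂_{kl}^{(b)} = ‖(1/n_k)∑_{i=1}^{n_k} z_{b(m_{k−1}+i)} − (1/n_l)∑_{j=1}^{n_l} z_{b(m_{l−1}+j)}‖ under permutation b, and for 0 < α < 1 define the permutation critical value c_α = inf{ t ∈ ℝ : (1/N!) ∑_{b} 1(V̂_max^{(b)} ≥ t) ≤ α }, the sum ranging over all N! permutations. Let M = max_{i≠j} ‖z_i − z_j‖² and γ_{k,l} = n_k n_l/(n_k+n_l)². Then c_α ≤ max_{1≤k<l≤K} √( 2M log(C(K,2)/α) / ((n_k+n_l) γ_{k,l}²) ) + max_{1≤k<l≤K} √( M / (2(n_k+n_l) γ_{k,l}) ), where C(K,2) = K(K−1)/2. -/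
open Finset

attribute [local instance] Classical.propDecidable

/-!
The bound follows from a union bound over the pairs of blocks and a sub-Gaussian tail bound for each
pairwise statistic under a uniformly random permutation.

Each `V k l b` is the norm of a contrast `∑ p, a p • z (b p)`, where `∑ p, a p = 0` and `a` is
`1 / n k` on block `k`, `-1 / n l` on block `l` and `0` elsewhere.

* Mean. Averaged over `b`, `‖z (b p) - z (b q)‖ ^ 2` is the same number for all `p ≠ q`, and it is
  at most `M`. Hence the second moment of the contrast is at most `M / 2 * ∑ p, a p ^ 2`
  (`perm_second_moment`), which is `M / (2 (n k + n l) γ k l)`; by Jensen the mean of `V k l` is at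
  most the square root of this.
* Fluctuation. Composing `b` with a transposition changes `V k l` by at most
  `√M (1 / n k + 1 / n l)`, and `V k l` depends only on the values of `b` at the `n k + n l`
  positions in the two blocks. An Azuma-type inequality (`perm_mgf`, `perm_tail`) then gives the
  tail `exp (-(n k + n l) (γ k l) ^ 2 r ^ 2 / (2 M))` for exceeding the mean by `r`
  (`contrast_tail`, `two_sample_tail`).

With `r` making this tail equal to `α / (K (K - 1) / 2)`, the union bound shows that the right-hand
side of the claim belongs to the set whose infimum is `cα`; that set is bounded below by `0`.
-/

open Finset
attribute [local instance] Classical.propDecidable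


/-- A Hoeffding lemma for the uniform distribution on a finite set: numbers within `c` of each other
have a sub-Gaussian moment generating function about their mean, with variance proxy `c ^ 2`. -/
theorem sum_exp_le_s5 {ι : Type*} (s : Finset ι) (hs : s.Nonempty) (x : ι → ℝ) (c : ℝ) (hc : 0 < c)
    (h : ∀ i ∈ s, ∀ j ∈ s, |x i - x j| ≤ c) (t : ℝ) :
    (∑ j ∈ s, Real.exp (t * x j)) / #s ≤
      Real.exp (t * ((∑ j ∈ s, x j) / #s) + t ^ 2 * c ^ 2 / 2) := by
  have hs0 : (0 : ℝ) < #s := by exact_mod_cast hs.card_pos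
  set μ := (∑ j ∈ s, x j) / #s with hμ
  have hμs : ∑ j ∈ s, x j = #s * μ := by rw [hμ]; field_simp
  have hdev : ∀ i ∈ s, |x i - μ| ≤ c := by
    intro i hi
    have h1 : (#s : ℝ) * (x i - μ) = ∑ j ∈ s, (x i - x j) := by
      rw [sum_sub_distrib, hμs]; simp; ring
    have h2 : (#s : ℝ) * |x i - μ| ≤ #s * c := by
      rw [← abs_of_pos hs0, ← abs_mul, abs_of_pos hs0, h1]
      refine (abs_sum_le_sum_abs _ _).trans ?_
      refine (sum_le_sum fun j hj => h i hi j hj).trans ?_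
      simp
    exact le_of_mul_le_mul_left h2 hs0
  have hpt : ∀ i ∈ s, Real.exp (t * x i) ≤
      Real.exp (t * μ) * (Real.cosh (t * c) + (x i - μ) / c * Real.sinh (t * c)) := by
    intro i hi
    have h1 : |(x i - μ) / c| ≤ 1 := by
      rw [abs_div, abs_of_pos hc, div_le_one hc]; exact hdev i hi
    have h2 := Real.exp_mul_le_cosh_add_mul_sinh h1 (t * c)
    have h3 : t * x i = t * μ + (x i - μ) / c * (t * c) := by field_simp; ring
    rw [h3, Real.exp_add]
    gcongr
  have hsum : ∑ i ∈ s, Real.exp (t * μ) *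
      (Real.cosh (t * c) + (x i - μ) / c * Real.sinh (t * c))
      = Real.exp (t * μ) * Real.cosh (t * c) * #s := by
    rw [← mul_sum, sum_add_distrib, ← sum_mul, ← sum_div, sum_sub_distrib, hμs]
    simp only [sum_const, nsmul_eq_mul]; ring
  rw [div_le_iff₀ hs0]
  refine (sum_le_sum hpt).trans ?_
  rw [hsum, Real.exp_add]
  refine mul_le_mul_of_nonneg_right (mul_le_mul_of_nonneg_left ?_ (Real.exp_pos _).le) hs0.le
  have := Real.cosh_le_exp_half_sq (t * c)
  rwa [mul_pow] at this

/-- Azuma-type bound on the moment generating function of a function `g` of a uniform permutation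
that depends only on the values at positions in `S` and changes by at most `c` under a
transposition. The induction removes one position `i` from `S = insert i T` at a time: `g` is
replaced by its conditional expectation given the values at `T`, which is the average of
`g (b * swap i j)` over `j ∉ T`. This average still changes by at most `c` under a transposition,
and each such step costs a factor `exp (t ^ 2 * c ^ 2 / 2)`. -/
theorem perm_mgf {α : Type*} [Fintype α] [DecidableEq α] (c : ℝ) (hc : 0 < c) (t : ℝ)
    (S : Finset α) : ∀ (g : Equiv.Perm α → ℝ),
    (∀ b τ, (∀ x ∈ S, τ x = x) → g (b * τ) = g b) →
    (∀ b p q, |g (b * Equiv.swap p q) - g b| ≤ c) →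
    ∀ μ : ℝ, ∑ b, g b = Fintype.card (Equiv.Perm α) * μ →
    ∑ b, Real.exp (t * g b) ≤
      Fintype.card (Equiv.Perm α) * Real.exp (t * μ + #S * (t ^ 2 * c ^ 2 / 2)) := by
  induction S using Finset.induction_on with
  | empty =>
    intro g hinv _ μ hμ
    have hconst : ∀ b, g b = g 1 := fun b => by simpa using hinv 1 b (by simp)
    have hP : (Fintype.card (Equiv.Perm α) : ℝ) ≠ 0 := by
      exact_mod_cast Fintype.card_ne_zero
    have hg : g 1 = μ := by
      have : ∑ b, g b = Fintype.card (Equiv.Perm α) * g 1 := by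
        simp [sum_congr rfl fun b _ => hconst b, Fintype.card_perm]
      exact mul_left_cancel₀ hP (this.symm.trans hμ)
    simp [hconst, hg, Fintype.card_perm]
  | insert i T hi ih =>
    intro g hinv hlip μ hμ
    have hiT : i ∈ Tᶜ := by simpa using hi
    have hne : (Tᶜ).Nonempty := ⟨i, hiT⟩
    have hc0 : (0 : ℝ) < #Tᶜ := by exact_mod_cast hne.card_pos
    -- two permutations fixing `T` which agree at `i` are identified by `g`
    have key : ∀ b w w' : Equiv.Perm α, (∀ x ∈ T, w x = x) → (∀ x ∈ T, w' x = x) →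
        w i = w' i → g (b * w) = g (b * w') := by
      intro b w w' hw hw' hww
      have := hinv (b * w') (w'⁻¹ * w) (by
        intro x hx
        rw [Equiv.Perm.mul_apply, Equiv.Perm.inv_eq_iff_eq]
        rcases mem_insert.1 hx with rfl | hx
        · exact hww
        · rw [hw x hx, hw' x hx])
      rw [← this]; congr 1; group
    have hsw : ∀ p ∈ Tᶜ, ∀ q ∈ Tᶜ, ∀ x ∈ T, Equiv.swap p q x = x := by
      intro p hp q hq x hx
      refine Equiv.swap_apply_of_ne_of_ne ?_ ?_ <;> rintro rfl
      · exact (mem_compl.1 hp) hx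
      · exact (mem_compl.1 hq) hx
    -- the conditional expectation of `g` given the values at `T`
    set g' : Equiv.Perm α → ℝ := fun b => (∑ j ∈ Tᶜ, g (b * Equiv.swap i j)) / #Tᶜ with hg'
    have hinv' : ∀ b τ, (∀ x ∈ T, τ x = x) → g' (b * τ) = g' b := by
      intro b τ hτ
      simp only [hg']
      congr 1
      have hτc : ∀ j, j ∈ Tᶜ ↔ τ j ∈ Tᶜ := by
        intro j
        simp only [mem_compl, not_iff_not]
        constructor
        · intro h; rwa [hτ j h]
        · intro h
          have := hτ _ h
          rwa [τ.injective this] at h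
      refine sum_equiv τ hτc fun j hj => ?_
      rw [mul_assoc]
      refine key b _ _ ?_ (hsw _ hiT _ ((hτc j).1 hj)) (by simp)
      intro x hx
      rw [Equiv.Perm.mul_apply, hsw _ hiT _ hj x hx, hτ x hx]
    have hlip' : ∀ b p q, |g' (b * Equiv.swap p q) - g' b| ≤ c := by
      intro b p q
      simp only [hg']
      rw [← sub_div, abs_div, abs_of_pos hc0, div_le_iff₀ hc0, ← sum_sub_distrib]
      refine (abs_sum_le_sum_abs _ _).trans ?_
      refine (sum_le_card_nsmul _ _ c fun j _ => ?_).trans (by simp [mul_comm])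
      rw [mul_assoc, Equiv.swap_mul_eq_mul_swap, ← mul_assoc]
      exact hlip _ _ _
    -- averaging over `j ∉ T` preserves sums over all permutations
    have hmean : ∀ F : Equiv.Perm α → ℝ,
        ∑ b, (∑ j ∈ Tᶜ, F (b * Equiv.swap i j)) / #Tᶜ = ∑ b, F b := by
      intro F
      rw [← sum_div, sum_comm]
      have : ∀ j ∈ Tᶜ, ∑ b, F (b * Equiv.swap i j) = ∑ b, F b := fun j _ =>
        Equiv.sum_comp (Equiv.mulRight (Equiv.swap i j)) F
      rw [sum_congr rfl this, sum_const, nsmul_eq_mul]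
      field_simp
    have hstep : ∀ b, (∑ j ∈ Tᶜ, Real.exp (t * g (b * Equiv.swap i j))) / #Tᶜ ≤
        Real.exp (t * g' b + t ^ 2 * c ^ 2 / 2) := by
      intro b
      refine sum_exp_le_s5 _ hne (fun j => g (b * Equiv.swap i j)) c hc ?_ t
      intro j hj j' hj'
      -- modulo permutations fixing `insert i T`, `b * swap i j` and `b * swap i j'` differ by a
      -- single transposition
      have : g (b * Equiv.swap i j) =
          g (b * (Equiv.swap i j' * Equiv.swap i (Equiv.swap i j' j))) := by
        refine key b _ _ (hsw _ hiT _ hj) ?_ (by simp)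
        intro x hx
        have hj'' : Equiv.swap i j' j ∈ Tᶜ := by
          rw [Equiv.swap_apply_def]; split_ifs <;> assumption
        rw [Equiv.Perm.mul_apply, hsw _ hiT _ hj'' x hx, hsw _ hiT _ hj' x hx]
      rw [this, ← mul_assoc]
      exact hlip _ _ _
    have hfin := ih g' hinv' hlip' μ ((hmean g).trans hμ)
    calc ∑ b, Real.exp (t * g b)
        = ∑ b, (∑ j ∈ Tᶜ, Real.exp (t * g (b * Equiv.swap i j))) / #Tᶜ :=
          (hmean fun b => Real.exp (t * g b)).symm
      _ ≤ ∑ b, Real.exp (t * g' b) * Real.exp (t ^ 2 * c ^ 2 / 2) :=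
          sum_le_sum fun b _ => by rw [← Real.exp_add]; exact hstep b
      _ ≤ Fintype.card (Equiv.Perm α) * Real.exp (t * μ + #T * (t ^ 2 * c ^ 2 / 2))
            * Real.exp (t ^ 2 * c ^ 2 / 2) := by
          rw [← sum_mul]; gcongr
      _ = _ := by
          rw [mul_assoc, ← Real.exp_add, card_insert_of_notMem hi]
          push_cast; ring_nf

/-- Chernoff bound from `perm_mgf`; here `μ` is the mean of `g`. -/
theorem perm_tail {α : Type*} [Fintype α] [DecidableEq α] (c : ℝ) (hc : 0 < c)
    (S : Finset α) (hS : S.Nonempty) (g : Equiv.Perm α → ℝ)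
    (hinv : ∀ b τ, (∀ x ∈ S, τ x = x) → g (b * τ) = g b)
    (hlip : ∀ b p q, |g (b * Equiv.swap p q) - g b| ≤ c)
    (μ : ℝ) (hμ : ∑ b, g b = Fintype.card (Equiv.Perm α) * μ) (r : ℝ) (hr : 0 ≤ r) :
    (#(univ.filter fun b => μ + r ≤ g b) : ℝ) ≤
      Fintype.card (Equiv.Perm α) * Real.exp (- (r ^ 2 / (2 * (#S * c ^ 2)))) := by
  have hs0 : (0 : ℝ) < #S := by exact_mod_cast hS.card_pos
  -- the optimal Chernoff parameter
  set t := r / (#S * c ^ 2) with ht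
  have ht0 : 0 ≤ t := by positivity
  have hm := perm_mgf c hc t S g hinv hlip μ hμ
  have h1 : (#(univ.filter fun b => μ + r ≤ g b) : ℝ) * Real.exp (t * (μ + r)) ≤
      ∑ b, Real.exp (t * g b) := by
    rw [← nsmul_eq_mul]
    refine (card_nsmul_le_sum (univ.filter fun b => μ + r ≤ g b)
      (fun b => Real.exp (t * g b)) _ fun b hb => ?_).trans
      (sum_le_sum_of_subset_of_nonneg (subset_univ _) fun _ _ _ => (Real.exp_pos _).le)
    have := (mem_filter.1 hb).2
    gcongr
  have h2 := h1.trans hm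
  rw [← le_div_iff₀ (Real.exp_pos _), mul_div_assoc, ← Real.exp_sub] at h2
  refine h2.trans (le_of_eq ?_)
  congr 2
  rw [ht]; field_simp; ring

/-- The law of `(b p, b q)` under a uniform permutation is the same for all pairs `p ≠ q`:
reindex by a permutation `τ` carrying one pair to the other. -/
theorem sum_perm_pair {α : Type*} [Fintype α] [DecidableEq α] (F : α → α → ℝ) {p q p' q' : α}
    (h : p ≠ q) (h' : p' ≠ q') :
    ∑ b : Equiv.Perm α, F (b p) (b q) = ∑ b : Equiv.Perm α, F (b p') (b q') := by
  set τ := Equiv.swap (Equiv.swap p p' q) q' * Equiv.swap p p' with hτ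
  have hp : τ p = p' := by
    have h1 : p' ≠ Equiv.swap p p' q := by
      intro h2
      have : Equiv.swap p p' p = Equiv.swap p p' q := by simpa using h2
      exact h ((Equiv.swap p p').injective this)
    rw [hτ, Equiv.Perm.mul_apply, Equiv.swap_apply_left, Equiv.swap_apply_of_ne_of_ne h1 h']
  have hq : τ q = q' := by
    rw [hτ, Equiv.Perm.mul_apply, Equiv.swap_apply_left]
  rw [← Equiv.sum_comp (Equiv.mulRight τ) fun b : Equiv.Perm α => F (b p) (b q)]
  simp [hp, hq]

/-- Second moment of a permuted contrast. Since `∑ p, a p = 0`, the squared norm is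
`-1/2 * ∑ p, ∑ q, a p * a q * ‖z (b p) - z (b q)‖ ^ 2`, whose summands with `p ≠ q` all average to
the same value up to the factor `a p * a q`. -/
theorem perm_second_moment {H : Type*} [NormedAddCommGroup H] [InnerProductSpace ℝ H]
    {α : Type*} [Fintype α] [DecidableEq α] (z : α → H) (a : α → ℝ) (ha : ∑ p, a p = 0)
    (M : ℝ) (hM : ∀ p q, ‖z p - z q‖ ^ 2 ≤ M) {p₀ q₀ : α} (h₀ : p₀ ≠ q₀) :
    ∑ b : Equiv.Perm α, ‖∑ p, a p • z (b p)‖ ^ 2 ≤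
      Fintype.card (Equiv.Perm α) * (M / 2 * ∑ p, a p ^ 2) := by
  set D := ∑ b : Equiv.Perm α, ‖z (b p₀) - z (b q₀)‖ ^ 2 with hD
  have hDM : D ≤ Fintype.card (Equiv.Perm α) * M := by
    refine (sum_le_card_nsmul _ _ M fun b _ => hM _ _).trans ?_
    rw [nsmul_eq_mul, card_univ]
  have hpq : ∀ p q, ∑ b : Equiv.Perm α, ‖z (b p) - z (b q)‖ ^ 2 = D - if p = q then D else 0 := by
    intro p q
    split_ifs with h
    · simp [h]
    · rw [sub_zero, hD, sum_perm_pair (fun x y => ‖z x - z y‖ ^ 2) h h₀]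
  have hexp : ∀ b : Equiv.Perm α, ‖∑ p, a p • z (b p)‖ ^ 2 =
      -(∑ p, ∑ q, a p * a q * ‖z (b p) - z (b q)‖ ^ 2) / 2 := by
    intro b
    have := inner_sum_smul_sum_smul_of_sum_eq_zero (fun p => z (b p)) ha (fun p => z (b p)) ha
    rw [real_inner_self_eq_norm_sq] at this
    rw [this]
    simp only [sq]
  have : ∑ b : Equiv.Perm α, ‖∑ p, a p • z (b p)‖ ^ 2 = D / 2 * ∑ p, a p ^ 2 := by
    rw [sum_congr rfl fun b _ => hexp b, ← sum_div, sum_neg_distrib, sum_comm]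
    have h1 : ∀ p, ∑ b : Equiv.Perm α, ∑ q, a p * a q * ‖z (b p) - z (b q)‖ ^ 2 =
        - (a p ^ 2 * D) := by
      intro p
      rw [sum_comm]
      simp only [← mul_sum, hpq, mul_sub, sum_sub_distrib, mul_ite, mul_zero, sum_ite_eq,
        mem_univ, if_true]
      rw [← sum_mul, ← mul_sum, ha]
      ring
    rw [sum_congr rfl fun p _ => h1 p, sum_neg_distrib, ← sum_mul]
    ring
  rw [this]
  have hA : 0 ≤ ∑ p, a p ^ 2 := sum_nonneg fun _ _ => sq_nonneg _
  nlinarith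

/-- Tail bound for the norm of a permuted contrast with weights `a` supported on `S` and
oscillation at most `d`: a transposition then moves the norm by at most `d * √M`. -/
theorem contrast_tail {H : Type*} [NormedAddCommGroup H] [InnerProductSpace ℝ H]
    {α : Type*} [Fintype α] [DecidableEq α] (z : α → H) (a : α → ℝ) (ha : ∑ p, a p = 0)
    (M : ℝ) (hM0 : 0 < M) (hM : ∀ p q, ‖z p - z q‖ ^ 2 ≤ M) {p₀ q₀ : α} (h₀ : p₀ ≠ q₀)
    (S : Finset α) (hS : S.Nonempty) (haS : ∀ p, p ∉ S → a p = 0)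
    (d : ℝ) (hd : 0 < d) (had : ∀ p q, |a p - a q| ≤ d) (r : ℝ) (hr : 0 ≤ r) :
    (#(univ.filter fun b : Equiv.Perm α =>
        √(M / 2 * ∑ p, a p ^ 2) + r ≤ ‖∑ p, a p • z (b p)‖) : ℝ) ≤
      Fintype.card (Equiv.Perm α) * Real.exp (- (r ^ 2 / (2 * (#S * (d ^ 2 * M))))) := by
  set g : Equiv.Perm α → ℝ := fun b => ‖∑ p, a p • z (b p)‖ with hg
  have hP : (0 : ℝ) < Fintype.card (Equiv.Perm α) := by exact_mod_cast Fintype.card_pos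
  set μ := (∑ b, g b) / Fintype.card (Equiv.Perm α) with hμ
  have hμP : ∑ b, g b = Fintype.card (Equiv.Perm α) * μ := by rw [hμ]; field_simp
  -- Jensen: the mean is at most the root of the second moment
  have hμle : μ ≤ √(M / 2 * ∑ p, a p ^ 2) := by
    apply Real.le_sqrt_of_sq_le
    have h1 := sq_sum_le_card_mul_sum_sq (s := (univ : Finset (Equiv.Perm α))) (f := g)
    have h2 := perm_second_moment z a ha M hM h₀
    rw [hμP, card_univ, mul_pow, sq (Fintype.card (Equiv.Perm α) : ℝ), mul_assoc] at h1
    exact le_of_mul_le_mul_left ((le_of_mul_le_mul_left h1 hP).trans h2) hP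
  have hinv : ∀ b τ, (∀ x ∈ S, τ x = x) → g (b * τ) = g b := by
    intro b τ hτ
    simp only [hg]
    congr 1
    refine sum_congr rfl fun p _ => ?_
    by_cases hp : p ∈ S
    · rw [Equiv.Perm.mul_apply, hτ p hp]
    · simp [haS p hp]
  have hlip : ∀ b p q, |g (b * Equiv.swap p q) - g b| ≤ d * √M := by
    intro b p q
    simp only [hg]
    refine (abs_norm_sub_norm_le _ _).trans ?_
    have h1 : ∑ x, a x • z ((b * Equiv.swap p q) x) - ∑ x, a x • z (b x) =
        (a p - a q) • (z (b q) - z (b p)) := by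
      rcases eq_or_ne p q with rfl | hpq
      · simp
      rw [← sum_sub_distrib, ← sum_subset (subset_univ {p, q}), sum_pair hpq]
      · simp [smul_sub, sub_smul]; abel
      · intro x _ hx
        simp only [mem_insert, mem_singleton, not_or] at hx
        rw [Equiv.Perm.mul_apply, Equiv.swap_apply_of_ne_of_ne hx.1 hx.2, sub_self]
    rw [h1, norm_smul, Real.norm_eq_abs]
    exact mul_le_mul (had p q) (Real.le_sqrt_of_sq_le (hM _ _)) (norm_nonneg _) hd.le
  have h := perm_tail (d * √M) (by positivity) S hS g hinv hlip μ hμP r hr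
  rw [mul_pow, Real.sq_sqrt hM0.le] at h
  refine le_trans ?_ h
  gcongr with b

/-- `contrast_tail` for the difference of the means over two disjoint blocks `A` and `B`, with the
deviation chosen so that the tail is `exp (-L)`. -/
theorem two_sample_tail {H : Type*} [NormedAddCommGroup H] [InnerProductSpace ℝ H]
    {α : Type*} [Fintype α] [DecidableEq α] (z : α → H)
    (M : ℝ) (hM0 : 0 < M) (hM : ∀ p q, ‖z p - z q‖ ^ 2 ≤ M)
    (A B : Finset α) (hAB : Disjoint A B) (hA : A.Nonempty) (hB : B.Nonempty)
    (x y w : ℝ) (hx : x = #A) (hy : y = #B) (hw : w = (x * y) / (x + y) ^ 2)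
    (L : ℝ) (hL : 0 ≤ L) :
    (#(univ.filter fun b : Equiv.Perm α =>
        √(2 * M * L / ((x + y) * w ^ 2)) + √(M / (2 * (x + y) * w)) ≤
          ‖x⁻¹ • ∑ p ∈ A, z (b p) - y⁻¹ • ∑ p ∈ B, z (b p)‖) : ℝ) ≤
      Fintype.card (Equiv.Perm α) * Real.exp (- L) := by
  have hx0 : 0 < x := by rw [hx]; exact_mod_cast hA.card_pos
  have hy0 : 0 < y := by rw [hy]; exact_mod_cast hB.card_pos
  have hw0 : 0 < w := by rw [hw]; positivity
  set a : α → ℝ := fun p => (if p ∈ A then x⁻¹ else 0) - (if p ∈ B then y⁻¹ else 0) with ha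
  have hdis : ∀ p, p ∈ A → p ∉ B := fun p hp => disjoint_left.1 hAB hp
  have hsum : ∑ p, a p = 0 := by
    simp only [ha, sum_sub_distrib, sum_ite_mem, univ_inter, sum_const, nsmul_eq_mul]
    rw [← hx, ← hy]; field_simp; ring
  have hsq : ∑ p, a p ^ 2 = x⁻¹ + y⁻¹ := by
    have : ∀ p, a p ^ 2 = (if p ∈ A then x⁻¹ ^ 2 else 0) + (if p ∈ B then y⁻¹ ^ 2 else 0) := by
      intro p
      have := hdis p
      by_cases h1 : p ∈ A <;> by_cases h2 : p ∈ B <;> simp_all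
    simp only [this, sum_add_distrib, sum_ite_mem, univ_inter, sum_const, nsmul_eq_mul]
    rw [← hx, ← hy]; field_simp
  have hV : ∀ b : Equiv.Perm α, ∑ p, a p • z (b p) =
      x⁻¹ • ∑ p ∈ A, z (b p) - y⁻¹ • ∑ p ∈ B, z (b p) := by
    intro b
    simp only [ha, sub_smul, sum_sub_distrib, ite_smul, zero_smul, sum_ite_mem, univ_inter,
      smul_sum]
  obtain ⟨p₀, hp₀⟩ := hA
  obtain ⟨q₀, hq₀⟩ := hB
  have h₀ : p₀ ≠ q₀ := by rintro rfl; exact hdis _ hp₀ hq₀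
  have had : ∀ p q, |a p - a q| ≤ x⁻¹ + y⁻¹ := by
    have hxi : 0 < x⁻¹ := by positivity
    have hyi : 0 < y⁻¹ := by positivity
    have hb : ∀ p, -y⁻¹ ≤ a p ∧ a p ≤ x⁻¹ := by
      intro p
      simp only [ha]
      split_ifs <;> constructor <;> linarith
    intro p q
    have := hb p
    have := hb q
    rw [abs_le]
    constructor <;> linarith
  have h := contrast_tail z a hsum M hM0 hM h₀ (A ∪ B) ⟨p₀, mem_union_left _ hp₀⟩
    (by
      intro p hp
      simp only [mem_union, not_or] at hp
      simp [ha, hp.1, hp.2])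
    (x⁻¹ + y⁻¹) (by positivity) had (√(2 * M * L / ((x + y) * w ^ 2))) (Real.sqrt_nonneg _)
  simp only [hV] at h
  have hc : (#(A ∪ B) : ℝ) = x + y := by
    rw [card_union_of_disjoint hAB, hx, hy]; push_cast; ring
  have e1 : M / 2 * (x⁻¹ + y⁻¹) = M / (2 * (x + y) * w) := by
    rw [hw]; field_simp; ring
  have e2 : (2 * M * L / ((x + y) * w ^ 2)) / (2 * ((x + y) * ((x⁻¹ + y⁻¹) ^ 2 * M))) = L := by
    rw [hw]; field_simp; ring
  rw [hsq, e1, hc, Real.sq_sqrt (by positivity), e2] at h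
  simpa only [add_comm] using h

theorem card_pairs (K : ℕ) :
    (#(univ.filter fun p : Fin K × Fin K => p.1 < p.2) : ℝ) = (K : ℝ) * ((K : ℝ) - 1) / 2 := by
  have h : #(univ.filter fun p : Fin K × Fin K => p.1 < p.2) = ∑ i ∈ range K, i := by
    rw [card_filter, Fintype.sum_prod_type_right, ← Fin.sum_univ_eq_sum_range (fun i => i) K]
    refine sum_congr rfl fun l _ => ?_
    rw [← card_filter, ← Fin.card_Iio]
    congr 1
    ext k
    simp
  have h2 := sum_range_id_mul_two K
  rw [← h] at h2
  have h3 : (#(univ.filter fun p : Fin K × Fin K => p.1 < p.2) : ℝ) * 2 = K * ((K : ℝ) - 1) := by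
    rcases Nat.eq_zero_or_pos K with rfl | hK
    · simp
    · rw [← Nat.cast_pred hK]; exact_mod_cast h2
  linarith

theorem finite_pairs {ι : Type*} [Finite ι] (P : ι → ι → Prop) (f : ι → ι → ℝ) :
    {x | ∃ k l, P k l ∧ x = f k l}.Finite := by
  refine (Set.finite_range fun p : ι × ι => f p.1 p.2).subset ?_
  rintro x ⟨k, l, -, rfl⟩
  exact ⟨(k, l), rfl⟩



/-- Bound on the permutation critical value `c_α` of the K-sample max-MMD statistic. -/
theorem stmt5 {H : Type*} [NormedAddCommGroup H] [InnerProductSpace ℝ H]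
    (K : ℕ) (hK : 2 ≤ K) (n : Fin K → ℕ) (hn : ∀ k, 1 ≤ n k)
    (N : ℕ) (hN : N = ∑ k, n k)
    (z : Fin N → H)
    (hz : ¬ ∀ i j, z i = z j)
    (e : (k : Fin K) → Fin (n k) → Fin N)
    (he : ∀ k i, (e k i : ℕ) = (∑ k' ∈ univ.filter (fun k' => k' < k), n k') + i)
    (γ : Fin K → Fin K → ℝ)
    (hγ : ∀ k l, γ k l = ((n k : ℝ) * n l) / ((n k : ℝ) + n l) ^ 2)
    (V : Fin K → Fin K → Equiv.Perm (Fin N) → ℝ)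
    (hV : ∀ k l b, V k l b =
      ‖(n k : ℝ)⁻¹ • ∑ i, z (b (e k i)) - (n l : ℝ)⁻¹ • ∑ j, z (b (e l j))‖)
    (Vmax : Equiv.Perm (Fin N) → ℝ)
    (hVmax : ∀ b, Vmax b = sSup {x | ∃ k l, k < l ∧ x = V k l b})
    (M : ℝ) (hM : M = sSup {x | ∃ i j : Fin N, i ≠ j ∧ x = ‖z i - z j‖ ^ 2})
    (α : ℝ) (hα0 : 0 < α) (hα1 : α < 1)
    (cα : ℝ)
    (hcα : cα = sInf {t : ℝ |
      (((univ : Finset (Equiv.Perm (Fin N))).filter (fun b => t ≤ Vmax b)).card : ℝ)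
        / (N.factorial : ℝ) ≤ α}) :
    cα ≤ sSup {x | ∃ k l, k < l ∧
        x = Real.sqrt (2 * M * Real.log ((K : ℝ) * ((K : ℝ) - 1) / 2 / α)
              / (((n k : ℝ) + n l) * (γ k l) ^ 2))}
      + sSup {x | ∃ k l, k < l ∧
        x = Real.sqrt (M / (2 * ((n k : ℝ) + n l) * γ k l))} := by
  have hMle : ∀ i j, i ≠ j → ‖z i - z j‖ ^ 2 ≤ M := by
    intro i j hij
    rw [hM]
    exact le_csSup (finite_pairs (· ≠ ·) fun i j => ‖z i - z j‖ ^ 2).bddAbove ⟨i, j, hij, rfl⟩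
  have hM0 : 0 < M := by
    push Not at hz
    obtain ⟨i, j, hij⟩ := hz
    have : 0 < ‖z i - z j‖ := norm_pos_iff.2 (sub_ne_zero.2 hij)
    exact lt_of_lt_of_le (by positivity) (hMle i j fun h => hij (by rw [h]))
  have hM' : ∀ i j, ‖z i - z j‖ ^ 2 ≤ M := by
    intro i j
    rcases eq_or_ne i j with rfl | h
    · simpa using hM0.le
    · exact hMle i j h
  -- the blocks as finsets of positions
  have hinj : ∀ k, Function.Injective (e k) := by
    intro k i j hij
    have := congrArg Fin.val hij
    rw [he, he] at this
    exact Fin.ext (by omega)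
  set A : Fin K → Finset (Fin N) := fun k => univ.image (e k) with hA
  have hAcard : ∀ k, #(A k) = n k := by
    intro k
    simp [hA, card_image_of_injective _ (hinj k)]
  have hAne : ∀ k, (A k).Nonempty := fun k => by
    rw [← card_pos, hAcard]; exact hn k
  have hAdis : ∀ k l, k < l → Disjoint (A k) (A l) := by
    intro k l hkl
    rw [disjoint_left]
    intro x hx hx'
    obtain ⟨i, -, rfl⟩ := mem_image.1 hx
    obtain ⟨j, -, hj⟩ := mem_image.1 hx'
    have h1 := congrArg Fin.val hj
    rw [he, he] at h1
    have h2 : (∑ k' ∈ univ.filter (fun k' => k' < k), n k') + n k ≤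
        ∑ k' ∈ univ.filter (fun k' => k' < l), n k' := by
      have hk : k ∉ univ.filter (fun k' => k' < k) := by simp
      rw [add_comm, ← sum_insert hk]
      refine sum_le_sum_of_subset fun y hy => ?_
      simp only [mem_insert, mem_filter, mem_univ, true_and] at hy ⊢
      rcases hy with rfl | hy
      · exact hkl
      · exact hy.trans hkl
    have := i.2
    omega
  have hAsum : ∀ k (b : Equiv.Perm (Fin N)), ∑ i, z (b (e k i)) = ∑ p ∈ A k, z (b p) := by
    intro k b
    rw [hA, sum_image fun i _ j _ h => hinj k h]
  have hK' : (1 : ℝ) ≤ (K : ℝ) * ((K : ℝ) - 1) / 2 := by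
    have : (2 : ℝ) ≤ K := by exact_mod_cast hK
    nlinarith
  set C : ℝ := (K : ℝ) * ((K : ℝ) - 1) / 2 with hC
  have hL : 0 ≤ Real.log (C / α) :=
    Real.log_nonneg (by rw [le_div_iff₀ hα0]; linarith)
  set T := sSup {x | ∃ k l, k < l ∧
        x = Real.sqrt (2 * M * Real.log (C / α) / (((n k : ℝ) + n l) * (γ k l) ^ 2))}
      + sSup {x | ∃ k l, k < l ∧
        x = Real.sqrt (M / (2 * ((n k : ℝ) + n l) * γ k l))} with hT
  have hpair : ∀ k l, k < l →
      (#(univ.filter fun b : Equiv.Perm (Fin N) => T ≤ V k l b) : ℝ) ≤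
        N.factorial * (α / C) := by
    intro k l hkl
    have h := two_sample_tail z M hM0 hM' (A k) (A l) (hAdis k l hkl) (hAne k) (hAne l)
      (n k) (n l) (γ k l) (by rw [hAcard]) (by rw [hAcard]) (hγ k l) _ hL
    rw [Fintype.card_perm, Fintype.card_fin, Real.exp_neg, Real.exp_log (by positivity),
      inv_div] at h
    refine le_trans ?_ h
    refine Nat.cast_le.2 (card_le_card fun b hb => ?_)
    simp only [mem_filter, mem_univ, true_and] at hb ⊢
    rw [hV, hAsum, hAsum] at hb
    refine le_trans (add_le_add ?_ ?_) hb
    · exact le_csSup (finite_pairs (· < ·) fun k l => Real.sqrt (2 * M * Real.log (C / α) /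
        (((n k : ℝ) + n l) * (γ k l) ^ 2))).bddAbove ⟨k, l, hkl, rfl⟩
    · exact le_csSup (finite_pairs (· < ·) fun k l =>
        Real.sqrt (M / (2 * ((n k : ℝ) + n l) * γ k l))).bddAbove ⟨k, l, hkl, rfl⟩
  have hVmax0 : ∀ b, 0 ≤ Vmax b := by
    intro b
    rw [hVmax]
    refine Real.sSup_nonneg ?_
    rintro x ⟨k, l, -, rfl⟩
    rw [hV]; exact norm_nonneg _
  have hfac : (0 : ℝ) < N.factorial := by exact_mod_cast N.factorial_pos
  rw [hcα]
  refine csInf_le ⟨0, fun t ht => ?_⟩ ?_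
  · -- for `t < 0` every permutation is counted, so the proportion is `1 > α`
    by_contra! hlt
    have : (univ : Finset (Equiv.Perm (Fin N))).filter (fun b => t ≤ Vmax b) = univ :=
      filter_true_of_mem fun b _ => hlt.le.trans (hVmax0 b)
    rw [Set.mem_ofPred_eq, this, card_univ, Fintype.card_perm, Fintype.card_fin,
      div_self hfac.ne'] at ht
    linarith
  · rw [Set.mem_ofPred_eq, div_le_iff₀ hfac]
    have hsub : (univ : Finset (Equiv.Perm (Fin N))).filter (fun b => T ≤ Vmax b) ⊆
        (univ.filter fun p : Fin K × Fin K => p.1 < p.2).biUnion fun p =>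
          univ.filter fun b => T ≤ V p.1 p.2 b := by
      intro b hb
      have hb' := (mem_filter.1 hb).2
      rw [hVmax] at hb'
      -- the finite supremum is attained at some pair
      obtain ⟨k, l, hkl, h⟩ := Set.Nonempty.csSup_mem
        (s := {x | ∃ k l, k < l ∧ x = V k l b})
        ⟨_, ⟨0, by omega⟩, ⟨1, by omega⟩, by simp, rfl⟩
        (finite_pairs (· < ·) fun k l => V k l b)
      rw [h] at hb'
      simp only [mem_biUnion, mem_filter, mem_univ, true_and]
      exact ⟨(k, l), hkl, hb'⟩
    calc _ ≤ (∑ p ∈ univ.filter (fun p : Fin K × Fin K => p.1 < p.2),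
          #(univ.filter fun b => T ≤ V p.1 p.2 b) : ℝ) := by
          exact_mod_cast (card_le_card hsub).trans card_biUnion_le
      _ ≤ ∑ p ∈ univ.filter (fun p : Fin K × Fin K => p.1 < p.2),
          (N.factorial : ℝ) * (α / C) :=
          sum_le_sum fun p hp => hpair _ _ (mem_filter.1 hp).2
      _ = α * N.factorial := by
          rw [sum_const, nsmul_eq_mul]
          have := card_pairs K
          rw [← hC] at this
          rw [this]
          field_simp
end

section
/- Suppose K = 2 with equal sample sizes n_1 = n_2 = N/2, and let z_1,…,z_N ∈ H be fixed with not all z_i equal. Let V̂ = ‖(2/N)∑_{i=1}^{N/2} z_i − (2/N)∑_{i=N/2+1}^{N} z_i‖, let σ̂² = (1/(N(N−1)))∑_{i≠j}‖z_i−z_j‖², and let p_perm = (1/N!) ∑_b 1( V̂^{(b)} ≥ V̂ ), where V̂^{(b)} is the same two-sample statistic computed after permuting the indices by b and the sum ranges over all N! permutations. If V̂ ≥ √(2σ̂²/N), then p_perm ≤ exp( − (N/(32 σ̂²)) ( V̂ − √(2σ̂²/N) )² ). -/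
/-!
The bound is a concentration inequality for a function `f` of a uniformly random permutation `b` which
depends on `b` only through the induced two-colouring `k ↦ col (b⁻¹ k)` of the labels.

Let `gen` be (minus) the generator of the random transposition walk. On such functions the discrete
derivative `h b - h (swap i j * b)` contracts exactly: the walks started from `b` and from
`swap i j * b` can be coupled so that they coalesce at rate `2N` and otherwise keep differing by
`swap i j`. By the maximum principle, the Poisson equation `f - 𝔼 f = gen h` therefore has a
solution whose derivatives are at most `1 / (2N)` times those of `f` (`poisson_grad`, `exists_poisson`).
If the derivatives of `f` are at most `c i j`, summation by parts in `𝔼[gen h * exp (x f)]`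
bounds the logarithmic derivative of the moment generating function of `f` by
`𝔼 f + v x` with `v = ∑ c i j ^ 2 / (2N)` (`sum_mul_exp_le`), and Chernoff's bound gives the Gaussian tail
`exp (-t ^ 2 / (2v))` (`tail_bound`).

For the two-sample statistic, `c i j = (4 / N) ‖z i - z j‖`, so `v ≤ 8 σ² / N`, and
`𝔼 V ≤ √(𝔼 V²) = √(2 σ² / N)`. The resulting exponent `N t ² / (16 σ²)` is better than required.
-/

open Finset

attribute [local instance] Classical.propDecidable

open Equiv

/-! ### Contraction of discrete derivatives -/

/-- Functions of a permutation `b` that depend only on the colouring `k ↦ col (b⁻¹ k)`. -/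
def colInv {α : Type*} (col : α → Bool) : Submodule ℝ (Perm α → ℝ) where
  carrier := {h | ∀ b b' : Perm α, (∀ k, col (b⁻¹ k) = col (b'⁻¹ k)) → h b = h b'}
  add_mem' := by
    intro f g hf hg b b' hb
    simp [hf b b' hb, hg b b' hb]
  zero_mem' := by
    intro b b' _
    rfl
  smul_mem' := by
    intro r f hf b b' hb
    simp [hf b b' hb]

/-- Minus the generator of the random transposition walk acting on the left. The sum runs over
ordered pairs, so every transposition is counted twice. -/
noncomputable def gen {α : Type*} [Fintype α] [DecidableEq α] (h : Perm α → ℝ) (b : Perm α) : ℝ :=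
  ∑ k, ∑ l, (h b - h (swap k l * b))

theorem colInv_swap {α : Type*} [DecidableEq α] {col : α → Bool} {h : Perm α → ℝ}
    (hh : h ∈ colInv col) {i k : α} {b : Perm α} (hik : col (b⁻¹ i) = col (b⁻¹ k)) (g : Perm α) :
    h (g * (swap i k * b)) = h (g * b) := by
  apply hh
  intro m
  simp only [mul_inv_rev, swap_inv, Perm.mul_apply]
  rcases eq_or_ne (g⁻¹ m) i with h1 | h1
  · rw [h1, swap_apply_left, hik]
  rcases eq_or_ne (g⁻¹ m) k with h2 | h2
  · rw [h2, swap_apply_right, hik]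
  rw [swap_apply_of_ne_of_ne h1 h2]

theorem gen_mem_colInv {α : Type*} [Fintype α] [DecidableEq α] {col : α → Bool} {h : Perm α → ℝ}
    (hh : h ∈ colInv col) : gen h ∈ colInv col := by
  intro b b' hb
  unfold gen
  refine sum_congr rfl fun k _ => sum_congr rfl fun l _ => ?_
  rw [hh b b' hb, hh (swap k l * b) (swap k l * b')]
  intro m
  simp only [mul_inv_rev, swap_inv, Perm.mul_apply]
  exact hb _

/-- If `k` has the colour of `i`, then `swap j k * b` and `swap i k * (swap i j * b)` induce the same
colouring: this is the coalescence in the coupling of the two walks. -/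
theorem pair_term {α : Type*} [DecidableEq α] {col : α → Bool} {h : Perm α → ℝ} (hh : h ∈ colInv col)
    {i j k : α} (hij : i ≠ j) (hki : k ≠ i) (hkj : k ≠ j) {b : Perm α}
    (hik : col (b⁻¹ i) = col (b⁻¹ k)) :
    ((h b - h (swap i k * b)) - (h (swap i j * b) - h (swap i k * (swap i j * b))))
      + ((h b - h (swap j k * b)) - (h (swap i j * b) - h (swap j k * (swap i j * b))))
      = h b - h (swap i j * b) := by
  have e1 : h (swap i k * b) = h b := by simpa using colInv_swap hh hik 1
  have e2 : h (swap j k * (swap i j * b)) = h (swap i j * b) := by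
    have : col ((swap i j * b)⁻¹ j) = col ((swap i j * b)⁻¹ k) := by
      simp only [mul_inv_rev, swap_inv, Perm.mul_apply, swap_apply_right,
        swap_apply_of_ne_of_ne hki hkj, hik]
    simpa using colInv_swap hh this 1
  have e3 : h (swap i k * (swap i j * b)) = h (swap j k * b) := by
    rw [← colInv_swap hh hik (swap j k)]
    congr 1
    rw [← mul_assoc, ← mul_assoc]
    congr 1
    ext m
    simp only [Perm.mul_apply, swap_apply_def]
    split_ifs <;> simp_all
  rw [e1, e2, e3]
  ring

/-- The contraction of derivatives, at a point where the derivative in direction `(i, j)` is maximal. -/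
theorem gen_grad_max {α : Type*} [Fintype α] [DecidableEq α] {col : α → Bool} {h : Perm α → ℝ}
    (hh : h ∈ colInv col) {i j : α} (hij : i ≠ j) {b : Perm α}
    (hb : col (b⁻¹ i) ≠ col (b⁻¹ j))
    (hmax : ∀ b', h b' - h (swap i j * b') ≤ h b - h (swap i j * b)) :
    2 * (Fintype.card α : ℝ) * (h b - h (swap i j * b)) ≤ gen h b - gen h (swap i j * b) := by
  set M := h b - h (swap i j * b) with hM
  set A : α → α → ℝ := fun k l =>
    (h b - h (swap k l * b)) - (h (swap i j * b) - h (swap k l * (swap i j * b))) with hA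
  have hgen : gen h b - gen h (swap i j * b) = ∑ k, ∑ l, A k l := by
    simp only [gen, hA, sum_sub_distrib]
  have hsymm : ∀ k l, A k l = A l k := by
    intro k l
    simp only [hA, swap_comm k l]
  have hii : ∀ k, A k k = 0 := by
    intro k
    have : ∀ g : Perm α, swap k k * g = g := fun g => by
      rw [swap_self]
      rfl
    simp only [hA, this, sub_self]
  have hAij : A i j = 2 * M := by
    simp only [hA, hM, swap_mul_self_mul]
    ring
  have hpair : ∀ k, k ≠ i → k ≠ j → A i k + A j k = M := by
    intro k hki hkj
    by_cases hc : col (b⁻¹ i) = col (b⁻¹ k)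
    · exact pair_term hh hij hki hkj hc
    · -- with only two colours, `k` now has the colour of `j`
      have hc' : col (b⁻¹ j) = col (b⁻¹ k) := by
        revert hb hc
        cases col (b⁻¹ i) <;> cases col (b⁻¹ j) <;> cases col (b⁻¹ k) <;> simp
      have := pair_term hh hij.symm hkj hki hc'
      rw [swap_comm j i] at this
      rw [add_comm]
      exact this
  have hrest : ∀ k l, k ≠ i → k ≠ j → l ≠ i → l ≠ j → 0 ≤ A k l := by
    intro k l hki hkj hli hlj
    have hcomm : swap k l * (swap i j * b) = swap i j * (swap k l * b) := by
      rw [← mul_assoc, ← mul_assoc, mul_swap_eq_swap_mul, swap_apply_of_ne_of_ne hki.symm hli.symm,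
        swap_apply_of_ne_of_ne hkj.symm hlj.symm]
    have := hmax (swap k l * b)
    simp only [hA, hcomm]
    linarith
  set R : Finset α := (univ.erase i).erase j with hR
  have hsplit : ∀ r : α → ℝ, ∑ k, r k = r i + r j + ∑ k ∈ R, r k := by
    intro r
    rw [← add_sum_erase univ r (mem_univ i), ← add_sum_erase (univ.erase i) r
      (mem_erase.2 ⟨hij.symm, mem_univ j⟩), add_assoc]
  have hcard : (Fintype.card α : ℝ) = 2 + (R.card : ℝ) := by
    have := hsplit (fun _ => 1)
    simp only [sum_const, card_univ, nsmul_eq_mul, mul_one] at this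
    linarith
  have hmemR : ∀ k ∈ R, k ≠ i ∧ k ≠ j := by
    intro k hk
    rw [hR, mem_erase, mem_erase] at hk
    exact ⟨hk.2.1, hk.1⟩
  have hrow : ∑ l, A i l + ∑ l, A j l = (R.card + 4) * M := by
    rw [← sum_add_distrib, hsplit, sum_congr rfl (fun k hk => hpair k (hmemR k hk).1 (hmemR k hk).2)]
    rw [hii, hii, hsymm j i, hAij, sum_const, nsmul_eq_mul]
    ring
  have hrows : R.card * M ≤ ∑ k ∈ R, ∑ l, A k l := by
    rw [← nsmul_eq_mul, ← sum_const]
    refine sum_le_sum fun k hk => ?_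
    have hk' := hmemR k hk
    rw [hsplit, hsymm k i, hsymm k j, hpair k hk'.1 hk'.2]
    have : 0 ≤ ∑ l ∈ R, A k l :=
      sum_nonneg fun l hl => hrest k l hk'.1 hk'.2 (hmemR l hl).1 (hmemR l hl).2
    linarith
  rw [hgen, hsplit, hrow, hcard]
  linarith

/-- Derivatives of a solution of the Poisson equation are controlled by those of the
right-hand side. -/
theorem poisson_grad {α : Type*} [Fintype α] [DecidableEq α] {col : α → Bool} {h : Perm α → ℝ}
    (hh : h ∈ colInv col) (i j : α) {c : ℝ} (hc : 0 ≤ c)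
    (hf : ∀ b, gen h b - gen h (swap i j * b) ≤ c) (b : Perm α) :
    2 * (Fintype.card α : ℝ) * |h b - h (swap i j * b)| ≤ c := by
  rcases eq_or_ne i j with rfl | hij
  · have : swap i i * b = b := by
      rw [swap_self]
      rfl
    rw [this, sub_self, abs_zero, mul_zero]
    exact hc
  obtain ⟨b₀, -, hb₀⟩ := exists_max_image (univ : Finset (Perm α))
    (fun b => h b - h (swap i j * b)) ⟨1, mem_univ _⟩
  have hmax : ∀ b', h b' - h (swap i j * b') ≤ h b₀ - h (swap i j * b₀) :=
    fun b' => hb₀ b' (mem_univ _)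
  have key : 2 * (Fintype.card α : ℝ) * (h b₀ - h (swap i j * b₀)) ≤ c := by
    by_cases hcol : col (b₀⁻¹ i) = col (b₀⁻¹ j)
    · have : h (swap i j * b₀) = h b₀ := by simpa using colInv_swap hh hcol 1
      simpa [this] using hc
    · exact (gen_grad_max hh hij hcol hmax).trans (hf b₀)
  refine le_trans (mul_le_mul_of_nonneg_left ?_ (by positivity)) key
  -- the derivative changes sign under `b ↦ swap i j * b`
  have h2 := hmax (swap i j * b)
  rw [swap_mul_self_mul] at h2
  exact abs_le.2 ⟨by linarith, hmax b⟩

/-! ### The Poisson equation -/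

theorem sum_swap_mul {α : Type*} [Fintype α] [DecidableEq α] (g : Perm α → ℝ) (s : Perm α) :
    ∑ b, g (s * b) = ∑ b, g b :=
  Equiv.sum_comp (Equiv.mulLeft s) g

theorem sum_gen {α : Type*} [Fintype α] [DecidableEq α] (h : Perm α → ℝ) : ∑ b, gen h b = 0 := by
  unfold gen
  rw [sum_comm]
  refine sum_eq_zero fun k _ => ?_
  rw [sum_comm]
  refine sum_eq_zero fun l _ => ?_
  rw [sum_sub_distrib, sum_swap_mul, sub_self]

/-- The Poisson equation is solvable: `h ↦ gen h + ∑ b, h b` is injective on the finite-dimensional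
space `colInv col`, hence surjective. -/
theorem exists_poisson {α : Type*} [Fintype α] [DecidableEq α] [Nonempty α] {col : α → Bool} {f : Perm α → ℝ}
    (hf : f ∈ colInv col) (hf0 : ∑ b, f b = 0) :
    ∃ h ∈ colInv col, ∀ b, gen h b = f b := by
  let T : colInv col →ₗ[ℝ] colInv col :=
    { toFun := fun h => ⟨gen h.1 + fun _ => ∑ b, h.1 b,
        (colInv col).add_mem (gen_mem_colInv h.2) (fun _ _ _ => rfl)⟩
      map_add' := by
        intro h g
        ext b
        simp only [gen, Submodule.coe_add, Pi.add_apply]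
        rw [add_add_add_comm, ← sum_add_distrib, ← sum_add_distrib]
        simp only [← sum_add_distrib]
        congr 1
        exact sum_congr rfl fun k _ => sum_congr rfl fun l _ => by ring
      map_smul' := by
        intro r h
        ext b
        simp only [gen, Submodule.coe_smul, Pi.add_apply, Pi.smul_apply, smul_eq_mul,
          RingHom.id_apply, mul_add, mul_sum, mul_sub] }
  have hT : ∀ (h : colInv col) b, (T h).1 b = gen h.1 b + ∑ b, h.1 b := fun _ _ => rfl
  have hsum : ∀ h : colInv col, (∑ b, (T h).1 b) = 0 → ∑ b, h.1 b = 0 := by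
    intro h h0
    simp only [hT, sum_add_distrib, sum_gen, zero_add, sum_const, card_univ, nsmul_eq_mul] at h0
    rcases mul_eq_zero.1 h0 with h1 | h1
    · exact absurd h1 (by exact_mod_cast Fintype.card_ne_zero)
    · exact h1
  have hinj : Function.Injective T := by
    rw [injective_iff_map_eq_zero]
    intro h h0
    have h1 : ∀ b, (T h).1 b = 0 := by
      intro b
      rw [h0]
      rfl
    have h2 : ∑ b, h.1 b = 0 := hsum h (by simp [h1])
    have h3 : ∀ b, gen h.1 b = 0 := by
      intro b
      have := h1 b
      rwa [hT, h2, add_zero] at this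
    have h4 : ∀ i j b, h.1 (swap i j * b) = h.1 b := by
      intro i j b
      have h5 := poisson_grad h.2 i j le_rfl (by simp [h3]) b
      have hpos : (0 : ℝ) < 2 * Fintype.card α := by
        have : (0 : ℝ) < Fintype.card α := by exact_mod_cast Fintype.card_pos
        linarith
      have h6 : |h.1 b - h.1 (swap i j * b)| ≤ 0 := by
        by_contra hne
        push Not at hne
        exact absurd h5 (not_le.2 (mul_pos hpos hne))
      have h7 := abs_nonpos_iff.1 h6
      linarith
    have h5 : ∀ b, h.1 b = h.1 1 := by
      intro b
      induction b using Perm.swap_induction_on with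
      | one => rfl
      | swap_mul g x y hxy ih => rw [h4, ih]
    have h6 : h.1 1 = 0 := by
      rw [sum_congr rfl (fun b _ => h5 b), sum_const, card_univ, nsmul_eq_mul] at h2
      rcases mul_eq_zero.1 h2 with h7 | h7
      · exact absurd h7 (by exact_mod_cast Fintype.card_ne_zero)
      · exact h7
    ext b
    rw [h5, h6]
    rfl
  obtain ⟨h, hh⟩ := (LinearMap.injective_iff_surjective.1 hinj) ⟨f, hf⟩
  have h1 : ∀ b, (T h).1 b = f b := by
    intro b
    rw [hh]
  have h2 := hsum h (by simp [h1, hf0])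
  refine ⟨h.1, h.2, fun b => ?_⟩
  have := h1 b
  rwa [hT, h2, add_zero] at this

/-! ### Concentration -/

theorem abs_exp_sub_exp_le (a b : ℝ) :
    |Real.exp a - Real.exp b| ≤ |a - b| * (Real.exp a + Real.exp b) := by
  wlog hab : b ≤ a generalizing a b
  · rw [abs_sub_comm, abs_sub_comm a, add_comm]
    exact this b a (not_le.1 hab).le
  have h1 : Real.exp b ≤ Real.exp a := Real.exp_le_exp.2 hab
  rw [abs_of_nonneg (by linarith), abs_of_nonneg (by linarith)]
  have h2 := Real.add_one_le_exp (b - a)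
  have h3 : Real.exp b = Real.exp a * Real.exp (b - a) := by
    rw [← Real.exp_add]
    congr 1
    ring
  nlinarith [Real.exp_pos a, Real.exp_pos b, mul_nonneg (sub_nonneg.2 hab) (Real.exp_pos b).le]

/-- The differential inequality for the moment generating function of a centred function,
obtained by symmetrising `∑ b, gen h b * exp (x * f b)`. -/
theorem sum_mul_exp_le {α : Type*} [Fintype α] [DecidableEq α] [Nonempty α] {col : α → Bool} {f : Perm α → ℝ}
    (hf : f ∈ colInv col) (hf0 : ∑ b, f b = 0) {c : α → α → ℝ}
    (hc : ∀ i j b, |f b - f (swap i j * b)| ≤ c i j) {x : ℝ} (hx : 0 ≤ x) :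
    ∑ b, f b * Real.exp (x * f b)
      ≤ (∑ i, ∑ j, c i j ^ 2) / (2 * Fintype.card α) * x * ∑ b, Real.exp (x * f b) := by
  obtain ⟨h, hh, hgen⟩ := exists_poisson hf hf0
  have hc0 : ∀ i j, 0 ≤ c i j := fun i j => (abs_nonneg _).trans (hc i j 1)
  have hpos : (0 : ℝ) < 2 * Fintype.card α := by
    have : (0 : ℝ) < Fintype.card α := by exact_mod_cast Fintype.card_pos
    linarith
  have hgrad : ∀ i j b, |h b - h (swap i j * b)| ≤ c i j / (2 * Fintype.card α) := by
    intro i j b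
    rw [le_div_iff₀ hpos, mul_comm]
    refine poisson_grad hh i j (hc0 i j) (fun b => ?_) b
    rw [hgen, hgen]
    exact (le_abs_self _).trans (hc i j b)
  have hterm : ∀ i j, ∑ b, (h b - h (swap i j * b)) * Real.exp (x * f b)
      ≤ c i j ^ 2 / (2 * Fintype.card α) * x * ∑ b, Real.exp (x * f b) := by
    intro i j
    have e1 : ∑ b, (h b - h (swap i j * b)) * Real.exp (x * f (swap i j * b))
        = - ∑ b, (h b - h (swap i j * b)) * Real.exp (x * f b) := by
      rw [← sum_swap_mul _ (swap i j), ← sum_neg_distrib]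
      refine sum_congr rfl fun b _ => ?_
      rw [swap_mul_self_mul]
      ring
    have e2 : ∑ b, Real.exp (x * f (swap i j * b)) = ∑ b, Real.exp (x * f b) :=
      sum_swap_mul (fun b => Real.exp (x * f b)) (swap i j)
    have e3 : ∑ b, (h b - h (swap i j * b)) *
          (Real.exp (x * f b) - Real.exp (x * f (swap i j * b)))
        ≤ ∑ b, c i j ^ 2 / (2 * Fintype.card α) * x *
          (Real.exp (x * f b) + Real.exp (x * f (swap i j * b))) := by
      refine sum_le_sum fun b _ => ?_
      have a1 := abs_exp_sub_exp_le (x * f b) (x * f (swap i j * b))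
      have a2 : |x * f b - x * f (swap i j * b)| ≤ x * c i j := by
        rw [← mul_sub, abs_mul, abs_of_nonneg hx]
        exact mul_le_mul_of_nonneg_left (hc i j b) hx
      have a3 : 0 ≤ Real.exp (x * f b) + Real.exp (x * f (swap i j * b)) := by positivity
      calc _ ≤ |h b - h (swap i j * b)| *
            |Real.exp (x * f b) - Real.exp (x * f (swap i j * b))| := by
            rw [← abs_mul]
            exact le_abs_self _
        _ ≤ (c i j / (2 * Fintype.card α)) *
            (x * c i j * (Real.exp (x * f b) + Real.exp (x * f (swap i j * b)))) := by
            refine mul_le_mul (hgrad i j b) (a1.trans ?_) (abs_nonneg _)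
              (div_nonneg (hc0 i j) hpos.le)
            exact mul_le_mul_of_nonneg_right a2 a3
        _ = _ := by ring
    simp only [mul_sub, sum_sub_distrib, ← mul_sum, sum_add_distrib] at e3
    rw [e1, e2] at e3
    linarith
  calc ∑ b, f b * Real.exp (x * f b)
      = ∑ i, ∑ j, ∑ b, (h b - h (swap i j * b)) * Real.exp (x * f b) := by
        simp only [← hgen, gen, sum_mul]
        rw [sum_comm]
        exact sum_congr rfl fun i _ => sum_comm
    _ ≤ ∑ i, ∑ j, c i j ^ 2 / (2 * Fintype.card α) * x * ∑ b, Real.exp (x * f b) :=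
        sum_le_sum fun i _ => sum_le_sum fun j _ => hterm i j
    _ = _ := by simp only [← sum_mul, sum_div]

/-- Gaussian upper tail from a sub-Gaussian differential inequality for the moment generating
function (Herbst's argument followed by Chernoff's bound), for a uniform finite measure. -/
theorem herbst_s7 {ι : Type*} [Fintype ι] (f : ι → ℝ) {v : ℝ} (hv : 0 < v)
    (hd : ∀ x : ℝ, 0 ≤ x →
      ∑ b, f b * Real.exp (x * f b) ≤ v * x * ∑ b, Real.exp (x * f b))
    {t : ℝ} (ht : 0 ≤ t) :
    ((univ.filter (fun b => t ≤ f b)).card : ℝ)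
      ≤ Fintype.card ι * Real.exp (-(t ^ 2 / (2 * v))) := by
  set G : ℝ → ℝ := fun x => (∑ b, Real.exp (x * f b)) * Real.exp (-(v * x ^ 2 / 2)) with hG
  have hder : ∀ x, HasDerivAt G ((∑ b, f b * Real.exp (x * f b)) * Real.exp (-(v * x ^ 2 / 2))
      + (∑ b, Real.exp (x * f b)) * (-(v * x) * Real.exp (-(v * x ^ 2 / 2)))) x := by
    intro x
    refine HasDerivAt.mul ?_ ?_
    · refine HasDerivAt.fun_sum fun b _ => ?_
      have := ((hasDerivAt_id x).mul_const (f b)).exp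
      simpa [mul_comm] using this
    · have h1 : HasDerivAt (fun x : ℝ => -(v * x ^ 2 / 2)) (-(v * x)) x := by
        refine ((((hasDerivAt_pow 2 x).const_mul v).div_const 2).fun_neg).congr_deriv ?_
        push_cast
        ring
      exact h1.exp.congr_deriv (mul_comm _ _)
  have hanti : AntitoneOn G (Set.Ici 0) := by
    refine antitoneOn_of_deriv_nonpos (convex_Ici 0)
      (fun x _ => (hder x).continuousAt.continuousWithinAt)
      (fun x _ => (hder x).differentiableAt.differentiableWithinAt) ?_
    intro x hx
    rw [interior_Ici] at hx
    rw [(hder x).deriv]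
    have := mul_le_mul_of_nonneg_right (hd x (le_of_lt hx)) (Real.exp_pos (-(v * x ^ 2 / 2))).le
    linarith
  have hx0 : 0 ≤ t / v := div_nonneg ht hv.le
  have hle := hanti (Set.mem_Ici.2 le_rfl) (Set.mem_Ici.2 hx0) hx0
  have hG0 : G 0 = Fintype.card ι := by simp [hG]
  rw [hG0] at hle
  have hcount : ((univ.filter (fun b => t ≤ f b)).card : ℝ) * Real.exp (t / v * t)
      ≤ ∑ b, Real.exp (t / v * f b) := by
    rw [← nsmul_eq_mul, ← sum_const]
    refine le_trans (sum_le_sum fun b hb => ?_)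
      (sum_le_sum_of_subset_of_nonneg (filter_subset _ _) fun b _ _ => (Real.exp_pos _).le)
    exact Real.exp_le_exp.2 (mul_le_mul_of_nonneg_left (mem_filter.1 hb).2 hx0)
  have h1 : ((univ.filter (fun b => t ≤ f b)).card : ℝ) * Real.exp (t ^ 2 / (2 * v))
      ≤ Fintype.card ι := by
    refine le_trans ?_ hle
    refine le_trans (le_of_eq ?_)
      (mul_le_mul_of_nonneg_right hcount (Real.exp_pos (-(v * (t / v) ^ 2 / 2))).le)
    rw [mul_assoc, ← Real.exp_add]
    congr 2
    field_simp
    ring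
  rw [Real.exp_neg, ← div_eq_mul_inv, le_div_iff₀ (Real.exp_pos _)]
  exact h1

/-- Concentration of a function of a two-colouring of the labels under a uniformly random permutation. -/
theorem tail_bound {α : Type*} [Fintype α] [DecidableEq α] [Nonempty α] {col : α → Bool} {f : Perm α → ℝ}
    (hf : f ∈ colInv col) {c : α → α → ℝ}
    (hc : ∀ i j b, |f b - f (swap i j * b)| ≤ c i j) {v : ℝ} (hv : 0 < v)
    (hcv : (∑ i, ∑ j, c i j ^ 2) / (2 * Fintype.card α) ≤ v) {m : ℝ}
    (hm : ∑ b, f b ≤ Fintype.card (Perm α) * m) {t : ℝ} (ht : 0 ≤ t) :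
    ((univ.filter (fun b => m + t ≤ f b)).card : ℝ)
      ≤ Fintype.card (Perm α) * Real.exp (-(t ^ 2 / (2 * v))) := by
  have hn : (0 : ℝ) < Fintype.card (Perm α) := by exact_mod_cast Fintype.card_pos
  set μ : ℝ := (∑ b, f b) / Fintype.card (Perm α) with hμ
  have hμm : μ ≤ m := by rwa [hμ, div_le_iff₀' hn]
  have hg : (fun b => f b - μ) ∈ colInv col := fun b b' hb => by
    simp only [hf b b' hb]
  have hg0 : ∑ b, (f b - μ) = 0 := by
    rw [sum_sub_distrib, sum_const, card_univ, nsmul_eq_mul, hμ]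
    field_simp
    ring
  have key := herbst_s7 (fun b => f b - μ) hv (fun x hx => ?_) ht
  · refine le_trans ?_ key
    refine Nat.cast_le.2 (card_le_card ?_)
    intro b hb
    rw [mem_filter] at hb ⊢
    exact ⟨hb.1, by linarith [hb.2]⟩
  · refine (sum_mul_exp_le hg hg0 (c := c) (fun i j b => by simpa using hc i j b) hx).trans ?_
    exact mul_le_mul_of_nonneg_right (mul_le_mul_of_nonneg_right hcv hx)
      (sum_nonneg fun b _ => (Real.exp_pos _).le)

/-! ### Signed sums over a random permutation -/

/-- The sign `±1` of a colour. -/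
noncomputable def sg (c : Bool) : ℝ := if c then 1 else -1

theorem abs_sg (c : Bool) : |sg c| = 1 := by
  cases c <;> simp [sg]

theorem sum_sg_perm {α H : Type*} [Fintype α] [NormedAddCommGroup H] [InnerProductSpace ℝ H]
    (col : α → Bool) (z : α → H) (b : Perm α) :
    ∑ k, sg (col (b⁻¹ k)) • z k = ∑ i, sg (col i) • z (b i) := by
  rw [← Equiv.sum_comp b]
  simp

/-- Exchanging the labels `i` and `j` moves the signed sum by at most `2 ‖z i - z j‖`. -/
theorem stat_lipschitz {α H : Type*} [Fintype α] [DecidableEq α] [NormedAddCommGroup H] [InnerProductSpace ℝ H]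
    (col : α → Bool) (z : α → H) (i j : α) (b : Perm α) :
    |‖∑ k, sg (col k) • z (b k)‖ - ‖∑ k, sg (col k) • z ((swap i j * b) k)‖|
      ≤ 2 * ‖z i - z j‖ := by
  refine (abs_norm_sub_norm_le _ _).trans ?_
  rcases eq_or_ne i j with rfl | hij
  · simp [swap_self]
  have h1 : ∑ k, sg (col k) • z (b k) - ∑ k, sg (col k) • z ((swap i j * b) k)
      = sg (col (b⁻¹ i)) • (z i - z j) + sg (col (b⁻¹ j)) • (z j - z i) := by
    rw [← sum_sub_distrib]
    rw [← Equiv.sum_comp b⁻¹]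
    have hb : ∀ k, b (b⁻¹ k) = k := fun k => by simp
    simp only [Perm.mul_apply, hb]
    rw [Fintype.sum_eq_add i j hij]
    · rw [swap_apply_left, swap_apply_right, smul_sub, smul_sub]
    · rintro k ⟨hki, hkj⟩
      rw [swap_apply_of_ne_of_ne hki hkj, sub_self]
  rw [h1]
  refine (norm_add_le _ _).trans ?_
  rw [norm_smul, norm_smul, Real.norm_eq_abs, Real.norm_eq_abs, abs_sg, abs_sg,
    norm_sub_rev (z j)]
  linarith

theorem norm_sq_of_sum_eq_zero {α H : Type*} [Fintype α] [NormedAddCommGroup H]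
    [InnerProductSpace ℝ H] (e : α → ℝ) (he : ∑ i, e i = 0) (w : α → H) :
    ‖∑ i, e i • w i‖ ^ 2 = -(1 / 2) * ∑ i, ∑ j, e i * e j * ‖w i - w j‖ ^ 2 := by
  have h1 : ∀ i j, e i * e j * ‖w i - w j‖ ^ 2
      = e j * (e i * ‖w i‖ ^ 2) - 2 * (e i * (e j * inner ℝ (w i) (w j)))
        + e i * (e j * ‖w j‖ ^ 2) := by
    intro i j
    rw [norm_sub_sq_real]
    ring
  simp only [h1, sum_add_distrib, sum_sub_distrib, ← mul_sum, ← sum_mul, he]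
  rw [← real_inner_self_eq_norm_sq, sum_inner]
  simp only [inner_sum, inner_smul_left, inner_smul_right, mul_sum, zero_mul,
    sum_const_zero, add_zero, zero_sub, mul_neg, neg_mul, conj_trivial]
  rw [← sum_neg_distrib]
  refine sum_congr rfl fun i _ => ?_
  rw [← sum_neg_distrib]
  refine sum_congr rfl fun j _ => ?_
  ring

/-- Exchangeability: the group of permutations is doubly transitive. -/
theorem sum_perm_pair_s7 {α H : Type*} [Fintype α] [DecidableEq α] [NormedAddCommGroup H] (z : α → H)
    {i j i' j' : α} (h : i ≠ j) (h' : i' ≠ j') :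
    ∑ b : Perm α, ‖z (b i) - z (b j)‖ ^ 2 = ∑ b : Perm α, ‖z (b i') - z (b j')‖ ^ 2 := by
  obtain ⟨g, hi, hj⟩ := MulAction.is_two_pretransitive_iff.1
    (Equiv.Perm.isMultiplyPretransitive α 2) h' h
  symm
  rw [← Equiv.sum_comp (Equiv.mulRight g)]
  simp only [Perm.smul_def] at hi hj
  simp [hi, hj]

/-- The second moment of a balanced signed sum over a uniformly random permutation. -/
theorem sum_perm_norm_sq {α H : Type*} [Fintype α] [DecidableEq α] [NormedAddCommGroup H]
    [InnerProductSpace ℝ H] (col : α → Bool) (hcol : ∑ i, sg (col i) = 0) (z : α → H) {s : ℝ}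
    (hs : ∑ i, ∑ j, ‖z i - z j‖ ^ 2 = Fintype.card α * (Fintype.card α - 1) * s)
    (hcard : 2 ≤ Fintype.card α) :
    ∑ b : Perm α, ‖∑ i, sg (col i) • z (b i)‖ ^ 2
      = Fintype.card (Perm α) * (Fintype.card α * s / 2) := by
  set n : ℝ := (Fintype.card α : ℝ) with hn
  have hn2 : 2 ≤ n := by
    rw [hn]
    exact_mod_cast hcard
  obtain ⟨p, q, hpq⟩ : ∃ p q : α, p ≠ q := by
    have := Fintype.one_lt_card_iff_nontrivial.1 (by omega : 1 < Fintype.card α)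
    exact exists_pair_ne α
  set r : ℝ := ∑ b : Perm α, ‖z (b p) - z (b q)‖ ^ 2 with hr
  have hpair : ∀ i j, ∑ b : Perm α, ‖z (b i) - z (b j)‖ ^ 2 = r - if i = j then r else 0 := by
    intro i j
    split_ifs with hij
    · simp [hij]
    · rw [sub_zero]
      exact sum_perm_pair_s7 z hij hpq
  have hr' : r = Fintype.card (Perm α) * s := by
    have e1 : ∑ b : Perm α, ∑ i, ∑ j, ‖z (b i) - z (b j)‖ ^ 2
        = Fintype.card (Perm α) * (n * (n - 1) * s) := by
      rw [← hs, ← nsmul_eq_mul, ← card_univ, ← sum_const]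
      refine sum_congr rfl fun b _ => ?_
      rw [← Equiv.sum_comp b (fun i => ∑ j, ‖z i - z j‖ ^ 2)]
      refine sum_congr rfl fun i _ => ?_
      exact Equiv.sum_comp b (fun j => ‖z (b i) - z j‖ ^ 2)
    have e2 : ∑ b : Perm α, ∑ i, ∑ j, ‖z (b i) - z (b j)‖ ^ 2 = n * (n - 1) * r := by
      rw [sum_comm]
      simp_rw [sum_comm (s := (univ : Finset (Perm α))), hpair]
      simp only [sum_sub_distrib, sum_const, card_univ, nsmul_eq_mul, sum_ite_eq, mem_univ, if_true,
        ← hn]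
      ring
    have e3 : n * (n - 1) ≠ 0 := mul_ne_zero (by linarith) (by linarith)
    apply mul_left_cancel₀ e3
    rw [← e2, e1]
    ring
  have hsq : ∀ i, sg (col i) * sg (col i) = 1 := by
    intro i
    rw [← abs_mul_abs_self, abs_sg, one_mul]
  simp_rw [norm_sq_of_sum_eq_zero (fun i => sg (col i)) hcol]
  rw [← mul_sum, sum_comm]
  simp_rw [sum_comm (s := (univ : Finset (Perm α))), ← mul_sum, hpair, mul_sub, mul_ite, mul_zero]
  have hdiag : ∀ i, sg (col i) * sg (col i) * r = r := fun i => by rw [hsq, one_mul]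
  simp only [sum_sub_distrib, sum_ite_eq, mem_univ, if_true, hdiag]
  simp only [← sum_mul, ← mul_sum, hcol, sum_const, card_univ, nsmul_eq_mul, ← hn]
  rw [hr']
  ring

/-! ### The two-sample statistic -/

/-- Exponential bound on the full permutation p-value for the balanced two-sample
MMD statistic, via Bobkov's inequality. -/
theorem stmt7 {H : Type*} [NormedAddCommGroup H] [InnerProductSpace ℝ H]
    (N : ℕ) (hNeven : Even N) (hNpos : 0 < N)
    (z : Fin N → H)
    (hz : ¬ ∀ i j, z i = z j)
    (Vb : Equiv.Perm (Fin N) → ℝ)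
    (hVb : ∀ b, Vb b =
      ‖(2 / (N : ℝ)) • ∑ i ∈ univ.filter (fun i : Fin N => (i : ℕ) < N / 2), z (b i)
        - (2 / (N : ℝ)) • ∑ i ∈ univ.filter (fun i : Fin N => N / 2 ≤ (i : ℕ)), z (b i)‖)
    (σ2 : ℝ)
    (hσ2 : σ2 = (1 / (N * (N - 1) : ℝ)) * ∑ i, ∑ j ∈ univ \ {i}, ‖z i - z j‖ ^ 2)
    (pperm : ℝ)
    (hpperm : pperm =
      (((univ : Finset (Equiv.Perm (Fin N))).filter (fun b => Vb 1 ≤ Vb b)).card : ℝ)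
        / (N.factorial : ℝ))
    (hthr : Real.sqrt (2 * σ2 / N) ≤ Vb 1) :
    pperm ≤ Real.exp (-((N : ℝ) / (32 * σ2)) * (Vb 1 - Real.sqrt (2 * σ2 / N)) ^ 2) := by
  have hN0 : (0 : ℝ) < N := by exact_mod_cast hNpos
  have hNge : 2 ≤ N := by
    obtain ⟨m, hm⟩ := hNeven
    omega
  have hN2 : (2 : ℝ) ≤ N := by exact_mod_cast hNge
  have : Nonempty (Fin N) := ⟨⟨0, hNpos⟩⟩
  set Q : ℝ := ∑ i, ∑ j, ‖z i - z j‖ ^ 2 with hQ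
  have hQσ : Q = N * (N - 1) * σ2 := by
    have h1 : ∀ i, ∑ j ∈ univ \ {i}, ‖z i - z j‖ ^ 2 = ∑ j, ‖z i - z j‖ ^ 2 := by
      intro i
      refine sum_subset (subset_univ _) fun j _ hj => ?_
      have : j = i := by simpa using hj
      simp [this]
    have h2 : (N * (N - 1) : ℝ) ≠ 0 := mul_ne_zero hN0.ne' (by linarith)
    rw [hσ2, sum_congr rfl fun i _ => h1 i, ← hQ, ← mul_assoc, mul_one_div, div_self h2, one_mul]
  have hσpos : 0 < σ2 := by
    have hQpos : 0 < Q := by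
      push Not at hz
      obtain ⟨i, j, hij⟩ := hz
      have h0 : ∀ i, 0 ≤ ∑ j, ‖z i - z j‖ ^ 2 := fun i => sum_nonneg fun j _ => by positivity
      refine sum_pos' (fun i _ => h0 i) ⟨i, mem_univ i, ?_⟩
      refine sum_pos' (fun j _ => by positivity) ⟨j, mem_univ j, ?_⟩
      have := norm_pos_iff.2 (sub_ne_zero.2 hij)
      positivity
    have h2 : (0 : ℝ) < N * (N - 1) := mul_pos hN0 (by linarith)
    rw [hQσ] at hQpos
    exact (mul_pos_iff_of_pos_left h2).1 hQpos
  set col : Fin N → Bool := fun i => decide ((i : ℕ) < N / 2) with hcol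
  have hsplit : ∀ {E : Type _} [AddCommGroup E] [Module ℝ E] (w : Fin N → E),
      ∑ i, sg (col i) • w i = ∑ i ∈ univ.filter (fun i : Fin N => (i : ℕ) < N / 2), w i
        - ∑ i ∈ univ.filter (fun i : Fin N => N / 2 ≤ (i : ℕ)), w i := by
    intro E _ _ w
    rw [sum_filter, sum_filter, ← sum_sub_distrib]
    refine sum_congr rfl fun i _ => ?_
    by_cases hi : (i : ℕ) < N / 2
    · simp [hcol, sg, hi, not_le.2 hi]
    · simp [hcol, sg, hi, not_lt.1 hi]
  have hV : ∀ b, Vb b = 2 / N * ‖∑ i, sg (col i) • z (b i)‖ := by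
    intro b
    rw [hVb, hsplit, ← smul_sub, norm_smul, Real.norm_eq_abs, abs_of_pos (by positivity)]
  have hbal : ∑ i, sg (col i) = 0 := by
    obtain ⟨m, rfl⟩ := hNeven
    have hm : (m + m) / 2 = m := by omega
    rw [Fin.sum_univ_add]
    simp [hcol, sg, hm]
  -- rewriting as a sum over labels shows that only the colouring `k ↦ col (b⁻¹ k)` enters
  have hinv : Vb ∈ colInv col := by
    intro b b' hb
    rw [hV, hV, ← sum_sg_perm, ← sum_sg_perm]
    simp only [hb]
  have hLip : ∀ i j b, |Vb b - Vb (swap i j * b)| ≤ 4 / N * ‖z i - z j‖ := by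
    intro i j b
    rw [hV, hV, ← mul_sub, abs_mul, abs_of_pos (by positivity : (0 : ℝ) < 2 / N)]
    refine (mul_le_mul_of_nonneg_left (stat_lipschitz col z i j b) (by positivity)).trans
      (le_of_eq ?_)
    ring
  have hv : (∑ i, ∑ j, (4 / N * ‖z i - z j‖) ^ 2) / (2 * Fintype.card (Fin N))
      ≤ 8 * σ2 / N := by
    simp only [mul_pow, ← mul_sum, Fintype.card_fin]
    rw [← hQ, hQσ, div_le_div_iff₀ (by linarith) hN0]
    field_simp
    nlinarith
  have hmean : ∑ b, Vb b ≤ Fintype.card (Perm (Fin N)) * Real.sqrt (2 * σ2 / N) := by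
    have h1 : ∑ b, Vb b ^ 2 = Fintype.card (Perm (Fin N)) * (2 * σ2 / N) := by
      simp only [hV, mul_pow, ← mul_sum]
      rw [sum_perm_norm_sq col hbal z (s := σ2) (by rw [← hQ, hQσ, Fintype.card_fin])
        (by rwa [Fintype.card_fin]), Fintype.card_fin]
      field_simp
    have h2 := sq_sum_le_card_mul_sum_sq (s := univ) (f := Vb)
    rw [h1, card_univ] at h2
    refine le_of_sq_le_sq ?_ (by positivity)
    rw [mul_pow, Real.sq_sqrt (by positivity)]
    linarith
  have ht : 0 ≤ Vb 1 - Real.sqrt (2 * σ2 / N) := sub_nonneg.2 hthr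
  have key := tail_bound hinv hLip (by positivity) hv hmean ht
  simp only [add_sub_cancel, Fintype.card_perm, Fintype.card_fin] at key
  have hfac : (0 : ℝ) < N.factorial := by exact_mod_cast Nat.factorial_pos N
  rw [hpperm, div_le_iff₀' hfac]
  refine key.trans (mul_le_mul_of_nonneg_left (Real.exp_le_exp.2 ?_) hfac.le)
  rw [neg_mul, neg_le_neg_iff, div_mul_eq_mul_div, div_le_div_iff₀ (by positivity) (by positivity)]
  have : 0 ≤ (Vb 1 - Real.sqrt (2 * σ2 / N)) ^ 2 * σ2 := by positivity
  field_simp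
  nlinarith
end
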